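/- arXiv:0907.0887 — 4 statements merged into one kernel-verified Lean document; each statement's English description precedes it below -/
import Mathlib

section
/- There exist constants c > 0, C₀ ≥ 1 and ρ₀ ≥ 1, depending only on d, Γ, κ and the exponents α_j, such that for all ρ ≥ ρ₀, every n ∈ {0, 1, …, d}, every V ∈ 𝒱(r,n), and every R ≥ C₀ρ, the Lebesgue measure of Ξ(V) ∩ B(0,R) satisfies vol(Ξ(V) ∩ B(0,R)) ≥ c ρ^{nα_n} R^{d−n}, where B(0,R) is the open ball of radius R centered at the origin. -/
noncomputable section

open Set Submodule Module MeasureTheory Relation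
open scoped RealInnerProductSpace

variable {d : ℕ}

/-- The lattice Γ generated over ℤ by the basis `B` of ℝ^d. -/
def latticeOf (B : Basis (Fin d) ℝ (EuclideanSpace ℝ (Fin d))) :
    Submodule ℤ (EuclideanSpace ℝ (Fin d)) :=
  Submodule.span ℤ (Set.range B)

/-- The determinant d(Γ) of the lattice generated by `B`. -/
def latDet (B : Basis (Fin d) ℝ (EuclideanSpace ℝ (Fin d))) : ℝ :=
  |(EuclideanSpace.basisFun (Fin d) ℝ).toBasis.det (fun i => B i)|

/-- The dual lattice Γ† = {θ : θ·g ∈ 2πℤ for all g ∈ Γ}. -/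
def dualLattice (B : Basis (Fin d) ℝ (EuclideanSpace ℝ (Fin d))) :
    Set (EuclideanSpace ℝ (Fin d)) :=
  {θ | ∀ g ∈ latticeOf B, ∃ k : ℤ, ⟪θ, g⟫ = 2 * Real.pi * k}

/-- Θ_r : nonzero dual lattice vectors of norm at most r. -/
def Theta (B : Basis (Fin d) ℝ (EuclideanSpace ℝ (Fin d))) (r : ℝ) :
    Set (EuclideanSpace ℝ (Fin d)) :=
  {θ | θ ∈ dualLattice B ∧ θ ≠ 0 ∧ ‖θ‖ ≤ r}

/-- Θ_r⁰ : dual lattice vectors of norm at most r (including 0). -/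
def Theta0 (B : Basis (Fin d) ℝ (EuclideanSpace ℝ (Fin d))) (r : ℝ) :
    Set (EuclideanSpace ℝ (Fin d)) :=
  {θ | θ ∈ dualLattice B ∧ ‖θ‖ ≤ r}

/-- A lattice r-subspace: a subspace spanned by dual lattice vectors from Θ_r⁰. -/
def IsLatticeSubspace (B : Basis (Fin d) ℝ (EuclideanSpace ℝ (Fin d))) (r : ℝ)
    (V : Submodule ℝ (EuclideanSpace ℝ (Fin d))) : Prop :=
  ∃ S : Set (EuclideanSpace ℝ (Fin d)), S ⊆ Theta0 B r ∧ V = Submodule.span ℝ S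

/-- Orthogonal projection ξ_V onto a subspace, viewed in the ambient space. -/
def projV (V : Submodule ℝ (EuclideanSpace ℝ (Fin d))) (ξ : EuclideanSpace ℝ (Fin d)) :
    EuclideanSpace ℝ (Fin d) :=
  (orthogonalProjection V ξ : EuclideanSpace ℝ (Fin d))

/-- ω_n: the volume of the unit ball in ℝ^n. -/
def unitBallVol (n : ℕ) : ℝ :=
  (MeasureTheory.volume (Metric.ball (0 : EuclideanSpace ℝ (Fin n)) 1)).toReal

/-- The resonant layer Λ(θ) (= ℝ^d when θ = 0). -/
def layer (ρ a : ℝ) (θ : EuclideanSpace ℝ (Fin d)) : Set (EuclideanSpace ℝ (Fin d)) :=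
  {ξ | θ = 0 ∨ |⟪ξ, θ⟫| < ρ ^ a * ‖θ‖}

/-- Υ_θ(ξ): the points θ-resonant congruent to ξ. -/
def upsTheta (ρ a : ℝ) (θ ξ : EuclideanSpace ℝ (Fin d)) : Set (EuclideanSpace ℝ (Fin d)) :=
  {η | ξ ∈ layer ρ a θ ∧ η ∈ layer ρ a θ ∧ ∃ l : ℤ, ξ - η = (l : ℝ) • θ}

/-- One step of resonant congruence (with some θ ∈ Θ_r⁰). -/
def resStep (B : Basis (Fin d) ℝ (EuclideanSpace ℝ (Fin d))) (ρ a r : ℝ)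
    (ξ η : EuclideanSpace ℝ (Fin d)) : Prop :=
  ∃ θ ∈ Theta0 B r, η ∈ upsTheta ρ a θ ξ

/-- Υ(ξ): all points resonant congruent to ξ. -/
def Ups (B : Basis (Fin d) ℝ (EuclideanSpace ℝ (Fin d))) (ρ a r : ℝ)
    (ξ : EuclideanSpace ℝ (Fin d)) : Set (EuclideanSpace ℝ (Fin d)) :=
  {η | Relation.ReflTransGen (resStep B ρ a r) ξ η}

/-- N(ξ) = Υ(ξ) − ξ. -/
def resN (B : Basis (Fin d) ℝ (EuclideanSpace ℝ (Fin d))) (ρ a r : ℝ)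
    (ξ : EuclideanSpace ℝ (Fin d)) : Set (EuclideanSpace ℝ (Fin d)) :=
  {m | ξ + m ∈ Ups B ρ a r ξ}

/-- Ξ₁(V) = {ξ : |ξ_V| < ρ^{α_n}}, n = dim V. -/
def Xi1 (ρ : ℝ) (α : ℕ → ℝ) (V : Submodule ℝ (EuclideanSpace ℝ (Fin d))) :
    Set (EuclideanSpace ℝ (Fin d)) :=
  {ξ | ‖projV V ξ‖ < ρ ^ α (Module.finrank ℝ V)}

/-- Ξ₂(V) = ∪_{ξ ∈ Ξ₁(V)} Υ(ξ). -/
def Xi2 (B : Basis (Fin d) ℝ (EuclideanSpace ℝ (Fin d))) (ρ r : ℝ) (α : ℕ → ℝ)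
    (V : Submodule ℝ (EuclideanSpace ℝ (Fin d))) : Set (EuclideanSpace ℝ (Fin d)) :=
  {η | ∃ ξ ∈ Xi1 ρ α V, η ∈ Ups B ρ (α 1) r ξ}

/-- Ξ(V): Ξ₂(V) minus the Ξ₂(W) for all lattice r-subspaces W of larger dimension. -/
def Xi (B : Basis (Fin d) ℝ (EuclideanSpace ℝ (Fin d))) (ρ r : ℝ) (α : ℕ → ℝ)
    (V : Submodule ℝ (EuclideanSpace ℝ (Fin d))) : Set (EuclideanSpace ℝ (Fin d)) :=
  Xi2 B ρ r α V \
    ⋃ W ∈ {W : Submodule ℝ (EuclideanSpace ℝ (Fin d)) |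
        IsLatticeSubspace B r W ∧ Module.finrank ℝ V < Module.finrank ℝ W},
      Xi2 B ρ r α W

/-- The standing conditions on the parameters ρ ≥ 1, r, κ > 0 and the exponents α_j:
0 = α₀, α_{n+1} > α_n + 2κd², α_d < 1, r ≤ ρ^κ, and r ≥ r₀ (i.e. Θ_r⁰ spans ℝ^d). -/
def GoodParams (B : Basis (Fin d) ℝ (EuclideanSpace ℝ (Fin d))) (ρ r κ : ℝ)
    (α : ℕ → ℝ) : Prop :=
  1 ≤ ρ ∧ 0 < κ ∧ α 0 = 0 ∧ (∀ n < d, α n + 2 * κ * (d : ℝ) ^ 2 < α (n + 1)) ∧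
    α d < 1 ∧ r ≤ ρ ^ κ ∧ Submodule.span ℝ (Theta0 B r) = ⊤

local notation "𝔼" => EuclideanSpace ℝ (Fin d)

/-- The determinant of the matrix of inner products `⟪v i, B j⟫`, alternating in `v`. -/
def pairingDet (B : Basis (Fin d) ℝ 𝔼) : 𝔼 [⋀^Fin d]→ₗ[ℝ] ℝ :=
  Matrix.detRowAlternating.compLinearMap
    (LinearMap.pi fun j => (innerₗ (EuclideanSpace ℝ (Fin d))).flip (B j))

lemma pairingDet_apply (B : Basis (Fin d) ℝ 𝔼) (v : Fin d → 𝔼) :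
    pairingDet B v = Matrix.det (Matrix.of fun i j => ⟪v i, B j⟫) := rfl

lemma pairingDet_ne_zero (B : Basis (Fin d) ℝ 𝔼) {v : Fin d → 𝔼} (hv : LinearIndependent ℝ v) :
    pairingDet B v ≠ 0 := by
  intro h
  rw [pairingDet_apply, ← Matrix.exists_vecMul_eq_zero_iff] at h
  obtain ⟨c, hc, h⟩ := h
  refine hc (funext (Fintype.linearIndependent_iff.1 hv c ?_))
  refine InnerProductSpace.ext_inner_right_basis B fun j => ?_
  have := congrFun h j
  simpa [Matrix.vecMul, dotProduct, sum_inner, inner_smul_left] using this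

/-- The pairing determinant of dual lattice vectors is an integer multiple of `(2π)^d`. -/
lemma one_le_abs_pairingDet (B : Basis (Fin d) ℝ 𝔼) {v : Fin d → 𝔼}
    (hv : LinearIndependent ℝ v) (hmem : ∀ i, v i ∈ dualLattice B) :
    1 ≤ |pairingDet B v| := by
  have hne := pairingDet_ne_zero B hv
  have hk : ∀ i j, ∃ k : ℤ, ⟪v i, B j⟫ = 2 * Real.pi * k := fun i j =>
    hmem i (B j) (Submodule.subset_span (Set.mem_range_self j))
  choose k hk using hk
  have hM : (Matrix.of fun i j => ⟪v i, B j⟫) =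
      (2 * Real.pi) • ((Matrix.of k).map (Int.castRingHom ℝ)) := by
    ext i j; simp [hk]
  rw [pairingDet_apply, hM, Matrix.det_smul, ← RingHom.mapMatrix_apply, ← RingHom.map_det] at hne ⊢
  have hk0 : (Matrix.of k).det ≠ 0 := by
    rintro h; simp [h] at hne
  have h1 : (1 : ℝ) ≤ |((Matrix.of k).det : ℝ)| := by
    exact_mod_cast Int.one_le_abs hk0
  have h2 : (1 : ℝ) ≤ |(2 * Real.pi) ^ Fintype.card (Fin d)| := by
    rw [abs_of_nonneg (by positivity)]
    exact one_le_pow₀ (by linarith [Real.pi_gt_three])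
  rw [abs_mul]
  exact one_le_mul_of_one_le_of_one_le h2 h1

/-- A vector of `Θ_r⁰` outside a lattice subspace keeps a quantitative distance from it. -/
lemma exists_norm_le_mul_norm_sub (hd : 2 ≤ d) (B : Basis (Fin d) ℝ 𝔼) :
    ∃ K : ℝ, 1 ≤ K ∧ ∀ r T : ℝ, 1 ≤ T → r ≤ T → Submodule.span ℝ (Theta0 B r) = ⊤ →
      ∀ S ⊆ Theta0 B r, ∀ θ ∈ Theta0 B r, θ ∉ Submodule.span ℝ S →
      ∀ u ∈ Submodule.span ℝ S, ‖θ‖ ≤ K * T ^ d * ‖θ - u‖ := by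
  have hcont : Continuous (pairingDet B) :=
    Continuous.matrix_det (continuous_matrix fun i j =>
      (by fun_prop : Continuous fun v : Fin d → 𝔼 => ⟪v i, B j⟫))
  obtain ⟨C, hC0, hC⟩ := (pairingDet B).exists_bound_of_continuous hcont
  refine ⟨max C 1, le_max_right _ _, fun r T hT hrT hspan S hS θ hθ hθS u hu => ?_⟩
  obtain ⟨S', hS'S, hS'span, hS'ind⟩ := exists_linearIndependent ℝ S
  have hθS' : θ ∉ Submodule.span ℝ S' := by rwa [hS'span]
  have hins : LinearIndepOn ℝ id (insert θ S') := by
    refine LinearIndepOn.id_insert hS'ind hθS'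
  have hsub : insert θ S' ⊆ Theta0 B r :=
    Set.insert_subset hθ (hS'S.trans hS)
  set b := hins.extend hsub with hb
  have hbT : b ⊆ Theta0 B r := hins.extend_subset hsub
  have hbi : insert θ S' ⊆ b := hins.subset_extend hsub
  have hbind : LinearIndepOn ℝ id b := hins.linearIndepOn_extend hsub
  have hbtop : ⊤ ≤ Submodule.span ℝ (Set.range ((↑) : b → 𝔼)) := by
    rw [Subtype.range_coe, ← hspan, hins.span_extend_eq_span hsub]
  let bb : Basis b ℝ 𝔼 := Basis.mk hbind hbtop
  let e : Fin d ≃ b :=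
    (Basis.indexEquiv (EuclideanSpace.basisFun (Fin d) ℝ).toBasis bb)
  let v : Fin d → 𝔼 := fun i => (e i : 𝔼)
  have hvind : LinearIndependent ℝ v := LinearIndependent.comp hbind e e.injective
  let i₀ := e.symm ⟨θ, hbi (Set.mem_insert _ _)⟩
  have hvi₀ : v i₀ = θ := by simp [v, i₀]
  have hzero : pairingDet B (Function.update v i₀ u) = 0 := by
    let L := (pairingDet B).toMultilinearMap.toLinearMap v i₀
    have : Submodule.span ℝ S' ≤ LinearMap.ker L := by
      rw [Submodule.span_le]
      intro s hs
      let j := e.symm ⟨s, hbi (Set.mem_insert_of_mem _ hs)⟩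
      have hvj : v j = s := by simp [v, j]
      have hij : i₀ ≠ j := by
        intro h
        apply hθS'
        rw [← hvi₀, h, hvj]
        exact Submodule.subset_span hs
      change pairingDet B (Function.update v i₀ s) = 0
      exact (pairingDet B).map_eq_zero_of_eq _ (i := i₀) (j := j)
        (by simp [Function.update_of_ne hij.symm, hvj]) hij
    exact this (hS'span ▸ hu)
  have hD : pairingDet B (Function.update v i₀ (θ - u)) = pairingDet B v := by
    rw [(pairingDet B).map_update_sub, hzero, sub_zero, ← hvi₀, Function.update_eq_self]
  have h1 := one_le_abs_pairingDet B hvind fun i => (hbT (e i).2).1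
  rw [← hD] at h1
  have h2 : ∏ i, ‖Function.update v i₀ (θ - u) i‖ ≤ T ^ (d - 1) * ‖θ - u‖ := by
    rw [← Finset.mul_prod_erase _ _ (Finset.mem_univ i₀), Function.update_self, mul_comm]
    refine mul_le_mul_of_nonneg_right ?_ (norm_nonneg _)
    refine (Finset.prod_le_prod (fun _ _ => norm_nonneg _) (g := fun _ => T)
      fun i hi => ?_).trans_eq (by simp)
    rw [Function.update_of_ne (Finset.ne_of_mem_erase hi)]
    exact (hbT (e i).2).2.trans hrT
  have h3 : (1 : ℝ) ≤ max C 1 * (T ^ (d - 1) * ‖θ - u‖) := by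
    refine h1.trans ((hC _).trans ?_)
    gcongr
    exact le_max_left _ _
  have h4 : T ^ d = T * T ^ (d - 1) := by
    rw [← pow_succ']; congr 1; omega
  calc ‖θ‖ ≤ T * 1 := by rw [mul_one]; exact hθ.2.trans hrT
    _ ≤ T * (max C 1 * (T ^ (d - 1) * ‖θ - u‖)) := by gcongr
    _ = _ := by rw [h4]; ring

/-- Dual lattice vectors in a ball of radius `T ≥ 1` number at most `O(T^d)`. -/
lemma exists_card_Theta0_le (B : Basis (Fin d) ℝ 𝔼) :
    ∃ K : ℝ, 1 ≤ K ∧ ∀ r T : ℝ, 1 ≤ T → r ≤ T →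
      ∃ s : Finset 𝔼, (∀ θ, θ ∈ s ↔ θ ∈ Theta0 B r) ∧ (s.card : ℝ) ≤ K * T ^ d := by
  classical
  set M : ℝ := ∑ j, ‖B j‖ with hM
  have hM0 : 0 ≤ M := Finset.sum_nonneg fun _ _ => norm_nonneg _
  refine ⟨(2 * M + 1) ^ d, one_le_pow₀ (by linarith), fun r T hT hrT => ?_⟩
  set N : ℕ := ⌊M * T⌋₊ with hN
  have hk : ∀ θ : 𝔼, ∃ k : Fin d → ℤ, θ ∈ Theta0 B r →
      (∀ j, ⟪θ, B j⟫ = 2 * Real.pi * k j) ∧ ∀ j, k j ∈ Finset.Icc (-(N : ℤ)) N := by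
    intro θ
    by_cases hθ : θ ∈ Theta0 B r
    swap
    · exact ⟨0, fun h => absurd h hθ⟩
    choose k hk using fun j => hθ.1 (B j) (Submodule.subset_span (Set.mem_range_self j))
    refine ⟨k, fun _ => ⟨hk, fun j => ?_⟩⟩
    have h1 : |⟪θ, B j⟫| ≤ M * T := by
      refine (abs_real_inner_le_norm _ _).trans ?_
      rw [mul_comm]
      gcongr
      · exact Finset.single_le_sum (f := fun j => ‖B j‖) (fun _ _ => norm_nonneg _)
          (Finset.mem_univ j)
      · exact hθ.2.trans hrT
    have h2 : ((k j).natAbs : ℝ) ≤ M * T := by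
      refine le_trans ?_ h1
      rw [hk, abs_mul, abs_of_pos (by positivity), Nat.cast_natAbs, Int.cast_abs]
      exact le_mul_of_one_le_left (abs_nonneg _) (by linarith [Real.pi_gt_three])
    have h3 : (k j).natAbs ≤ N := Nat.le_floor h2
    rw [Finset.mem_Icc]
    omega
  choose k hk using hk
  have hmaps : Set.MapsTo k (Theta0 B r)
      (Fintype.piFinset fun _ : Fin d => Finset.Icc (-(N : ℤ)) N : Finset (Fin d → ℤ)) :=
    fun θ hθ => Finset.mem_coe.2 (Fintype.mem_piFinset.2 (hk θ hθ).2)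
  have hinj : Set.InjOn k (Theta0 B r) := by
    intro θ hθ η hη h
    refine InnerProductSpace.ext_inner_right_basis B fun j => ?_
    rw [(hk θ hθ).1, (hk η hη).1, h]
  have hfin : (Theta0 B r).Finite := Set.Finite.of_injOn hmaps hinj (Finset.finite_toSet _)
  refine ⟨hfin.toFinset, fun θ => hfin.mem_toFinset, ?_⟩
  have hcard := Finset.card_le_card_of_injOn (s := hfin.toFinset) k
    (t := Fintype.piFinset fun _ : Fin d => Finset.Icc (-(N : ℤ)) N)
    (by rwa [hfin.coe_toFinset]) (by simpa using hinj)
  have hcard' : (hfin.toFinset.card : ℝ) ≤ (2 * N + 1 : ℝ) ^ d := by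
    refine (Nat.cast_le.2 hcard).trans_eq ?_
    rw [Fintype.card_piFinset]
    simp only [Int.card_Icc, Finset.prod_const, Finset.card_univ, Fintype.card_fin, Nat.cast_pow]
    congr 1
    have : ((N : ℤ) + 1 - -(N : ℤ)).toNat = 2 * N + 1 := by omega
    rw [this]; push_cast; ring
  refine hcard'.trans ?_
  rw [← mul_pow]
  have : (N : ℝ) ≤ M * T := Nat.floor_le (by positivity)
  gcongr
  nlinarith

/-- Slab estimate: in a box of half-sides `a`, the slab `|∑ x j t j| ≤ h` occupies at most the
fraction `h / (|t i| a i)`. -/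
lemma volume_box_inter_slab_le {ι : Type*} [Fintype ι] [DecidableEq ι] (a t : ι → ℝ) (i : ι)
    (ha : ∀ j, 0 < a j) (ht : t i ≠ 0) {h : ℝ} (hh : 0 ≤ h) :
    volume ((Set.pi Set.univ fun j => Set.Ioo (-a j) (a j)) ∩ {x : ι → ℝ | |t ⬝ᵥ x| ≤ h}) ≤
      ENNReal.ofReal (h / (|t i| * a i)) *
        volume (Set.pi Set.univ fun j => Set.Ioo (-a j) (a j)) := by
  set s := (Set.pi Set.univ fun j => Set.Ioo (-a j) (a j)) ∩ {x : ι → ℝ | |t ⬝ᵥ x| ≤ h}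
  let A : Matrix ι ι ℝ := (1 : Matrix ι ι ℝ).updateRow i t
  have hdet : A.det = t i := by
    rw [← Matrix.cramer_transpose_apply]; simp
  have hAi : ∀ x, (A.mulVec x) i = t ⬝ᵥ x := fun x => by
    simp [A, Matrix.mulVec]
  have hAj : ∀ x, ∀ j ≠ i, (A.mulVec x) j = x j := fun x j hj => by
    simp [A, Matrix.mulVec, Matrix.updateRow_ne hj, Matrix.one_apply, dotProduct]
  have himage : Matrix.toLin' A '' s ⊆
      Set.pi Set.univ fun j => Set.Icc (-Function.update a i h j) (Function.update a i h j) := by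
    rintro _ ⟨x, ⟨hx, hxs⟩, rfl⟩ j -
    rw [Matrix.toLin'_apply]
    by_cases hj : j = i
    · subst hj
      simpa [hAi] using abs_le.1 hxs
    · simpa [hAj x j hj, Function.update_of_ne hj] using
        Set.Ioo_subset_Icc_self (hx j (Set.mem_univ j))
  have hvol := (Measure.addHaar_image_linearMap volume (Matrix.toLin' A) s).symm.trans_le
    (measure_mono himage)
  have hbox : volume (Set.pi Set.univ fun j =>
      Set.Icc (-Function.update a i h j) (Function.update a i h j)) =
      ENNReal.ofReal (h / a i) * volume (Set.pi Set.univ fun j => Set.Ioo (-a j) (a j)) := by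
    rw [volume_pi_pi, volume_pi_pi, ← Finset.mul_prod_erase _ _ (Finset.mem_univ i),
      ← Finset.mul_prod_erase Finset.univ (fun j => volume (Set.Ioo (-a j) (a j)))
        (Finset.mem_univ i), ← mul_assoc]
    congr 1
    · rw [Function.update_self, Real.volume_Icc, Real.volume_Ioo,
        ← ENNReal.ofReal_mul (div_nonneg hh (ha i).le)]
      congr 1
      field_simp [(ha i).ne']
    · refine Finset.prod_congr rfl fun j hj => ?_
      rw [Function.update_of_ne (Finset.ne_of_mem_erase hj), Real.volume_Icc, Real.volume_Ioo]
  have hti : 0 < |t i| := abs_pos.2 ht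
  rw [LinearMap.det_toLin', hdet, hbox] at hvol
  calc volume s = ENNReal.ofReal |t i|⁻¹ * (ENNReal.ofReal |t i| * volume s) := by
        rw [← mul_assoc, ← ENNReal.ofReal_mul (by positivity), inv_mul_cancel₀ hti.ne',
          ENNReal.ofReal_one, one_mul]
    _ ≤ ENNReal.ofReal |t i|⁻¹ * (ENNReal.ofReal (h / a i) *
          volume (Set.pi Set.univ fun j => Set.Ioo (-a j) (a j))) := by gcongr
    _ = _ := by
        rw [← mul_assoc, ← ENNReal.ofReal_mul (by positivity)]
        congr 2
        field_simp

/-- The functional `⟪x, ·⟫` has norm at most `f` on the subspace `U`. -/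
def InnerBoundedOn (U : Submodule ℝ 𝔼) (x : 𝔼) (f : ℝ) : Prop :=
  ∀ u ∈ U, |⟪x, u⟫| ≤ f * ‖u‖

lemma InnerBoundedOn.mono {U : Submodule ℝ 𝔼} {x : 𝔼} {f g : ℝ} (h : InnerBoundedOn U x f)
    (hfg : f ≤ g) : InnerBoundedOn U x g := fun u hu =>
  (h u hu).trans (by gcongr)

lemma InnerBoundedOn.norm_sub_le {U : Submodule ℝ 𝔼} {x y : 𝔼} {f : ℝ}
    (hf : 0 ≤ f) (hx : InnerBoundedOn U x f) (hy : InnerBoundedOn U y f) (hxy : x - y ∈ U) :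
    ‖x - y‖ ≤ 2 * f := by
  have h1 := abs_le.1 (hx _ hxy)
  have h2 := abs_le.1 (hy _ hxy)
  have h3 : ‖x - y‖ * ‖x - y‖ = ⟪x, x - y⟫ - ⟪y, x - y⟫ := by
    rw [← inner_sub_left, real_inner_self_eq_norm_mul_norm]
  rcases (norm_nonneg (x - y)).eq_or_lt with h | h
  · rw [← h]; positivity
  · refine le_of_mul_le_mul_right ?_ h
    linarith

/-- Enlarging the subspace by one vector `θ` worsens the bound by the factor `Q` controlling the
angle between `θ` and the subspace. -/
lemma InnerBoundedOn.sup_span_singleton {U : Submodule ℝ 𝔼} {x θ : 𝔼} {g h Q : ℝ}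
    (hQ : 0 ≤ Q) (hg : 0 ≤ g) (hh : 0 ≤ h)
    (hθ : ∀ u ∈ U, ‖θ‖ ≤ Q * ‖θ - u‖)
    (hx : InnerBoundedOn U x g) (hxθ : |⟪x, θ⟫| ≤ h * ‖θ‖) :
    InnerBoundedOn (U ⊔ Submodule.span ℝ {θ}) x (g + (h + g) * Q) := by
  intro u hu
  obtain ⟨u', hu', _, hw, rfl⟩ := Submodule.mem_sup.1 hu
  obtain ⟨t, rfl⟩ := Submodule.mem_span_singleton.1 hw
  set p := U.starProjection θ with hp
  have hpU : p ∈ U := Submodule.starProjection_apply_mem _ _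
  set q := θ - p with hq
  have hqU : q ∈ Uᗮ := Submodule.sub_starProjection_mem_orthogonal _
  set v := u' + t • p with hv
  have hvU : v ∈ U := U.add_mem hu' (U.smul_mem _ hpU)
  have hsum : u' + t • θ = v + t • q := by rw [hv, hq, smul_sub]; abel
  have horth : ⟪v, t • q⟫ = 0 := by
    rw [inner_smul_right, hqU v hvU, mul_zero]
  have hpyth : ‖v + t • q‖ * ‖v + t • q‖ = ‖v‖ * ‖v‖ + ‖t • q‖ * ‖t • q‖ :=
    norm_add_sq_eq_norm_sq_add_norm_sq_of_inner_eq_zero _ _ horth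
  have hv_le : ‖v‖ ≤ ‖v + t • q‖ := abs_le_of_sq_le_sq' (by nlinarith [norm_nonneg (t • q)])
    (norm_nonneg _) |>.2
  have hq_le : ‖t • q‖ ≤ ‖v + t • q‖ := abs_le_of_sq_le_sq' (by nlinarith [norm_nonneg v])
    (norm_nonneg _) |>.2
  have hp_le : ‖p‖ ≤ ‖θ‖ := U.norm_starProjection_apply_le θ
  have hxq : |⟪x, q⟫| ≤ (h + g) * Q * ‖q‖ := by
    calc |⟪x, q⟫| ≤ |⟪x, θ⟫| + |⟪x, p⟫| := by rw [hq, inner_sub_right]; exact abs_sub _ _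
      _ ≤ h * ‖θ‖ + g * ‖θ‖ := add_le_add hxθ ((hx p hpU).trans (by gcongr))
      _ = (h + g) * ‖θ‖ := by ring
      _ ≤ (h + g) * (Q * ‖q‖) := by gcongr; exact hθ p hpU
      _ = _ := by ring
  rw [hsum, inner_add_right]
  calc |⟪x, v⟫ + ⟪x, t • q⟫| ≤ |⟪x, v⟫| + |⟪x, t • q⟫| := abs_add_le _ _
    _ ≤ g * ‖v‖ + (h + g) * Q * ‖t • q‖ := by
        refine add_le_add (hx v hvU) ?_
        rw [inner_smul_right, abs_mul, norm_smul, Real.norm_eq_abs]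
        calc |t| * |⟪x, q⟫| ≤ |t| * ((h + g) * Q * ‖q‖) := by gcongr
          _ = _ := by ring
    _ ≤ g * ‖v + t • q‖ + (h + g) * Q * ‖v + t • q‖ := by gcongr
    _ = _ := by ring

/-- A resonant chain stays bounded along the span of its resonance vectors. -/
lemma innerBoundedOn_span_of_chain {Θ : Set 𝔼} {Q a : ℝ} (hQ : 1 ≤ Q) (ha : 0 ≤ a)
    (hangle : ∀ S ⊆ Θ, ∀ θ ∈ Θ, θ ∉ Submodule.span ℝ S →
      ∀ u ∈ Submodule.span ℝ S, ‖θ‖ ≤ Q * ‖θ - u‖)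
    {N : ℕ} {x θ : ℕ → 𝔼} (hΘ : ∀ j < N, θ j ∈ Θ)
    (hstart : ∀ j < N, |⟪x j, θ j⟫| ≤ a * ‖θ j‖)
    (hend : ∀ j < N, |⟪x (j + 1), θ j⟫| ≤ a * ‖θ j‖)
    (hdiff : ∀ j < N, ∃ t : ℝ, x j - x (j + 1) = t • θ j) (m : ℕ) :
    ∀ k l, l ≤ N → Module.finrank ℝ (Submodule.span ℝ (θ '' Set.Ico k l)) ≤ m →
      ∀ j, k ≤ j → j ≤ l →
        InnerBoundedOn (Submodule.span ℝ (θ '' Set.Ico k l)) (x j) ((5 * Q) ^ m * a) := by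
  have hsub : ∀ k l, l ≤ N → θ '' Set.Ico k l ⊆ Θ := by
    rintro k l hl _ ⟨j, hj, rfl⟩
    exact hΘ j (hj.2.trans_le hl)
  have hmove : ∀ k l, l ≤ N → ∀ j, k ≤ j → j ≤ l →
      x k - x j ∈ Submodule.span ℝ (θ '' Set.Ico k l) := by
    intro k l hl j hkj
    induction j, hkj using Nat.le_induction with
    | base => simp
    | succ j hkj ih =>
      intro hjl
      obtain ⟨t, ht⟩ := hdiff j (by omega)
      have : x k - x (j + 1) = (x k - x j) + t • θ j := by rw [← ht]; abel
      rw [this]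
      refine Submodule.add_mem _ (ih (by omega)) (Submodule.smul_mem _ _ ?_)
      exact Submodule.subset_span ⟨j, ⟨hkj, by omega⟩, rfl⟩
  induction m with
  | zero =>
    intro k l hl hm j hkj hjl u hu
    rw [Submodule.finrank_eq_zero.1 (Nat.le_zero.1 hm), Submodule.mem_bot] at hu
    simp [hu]
  | succ m ih =>
    intro k l hl hm j hkj hjl
    set g := (5 * Q) ^ m * a with hg
    have hg0 : 0 ≤ g := by positivity
    have hag : a ≤ g := le_mul_of_one_le_left ha (one_le_pow₀ (by linarith))
    have hnext : g + (a + 2 * g + g) * Q ≤ (5 * Q) ^ (m + 1) * a := by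
      have : (5 * Q) ^ (m + 1) * a = 5 * Q * g := by rw [hg]; ring
      rw [this]; nlinarith
    set I : ℕ → ℕ → Submodule ℝ 𝔼 := fun p q => Submodule.span ℝ (θ '' Set.Ico p q) with hI
    have hImono : ∀ {p q p' q'}, p' ≤ p → q ≤ q' → I p q ≤ I p' q' := fun h1 h2 =>
      Submodule.span_mono (Set.image_mono (Set.Ico_subset_Ico h1 h2))
    have hIright : ∀ p q, p ≤ q → I p (q + 1) = I p q ⊔ Submodule.span ℝ {θ q} := by
      intro p q hpq
      simp only [hI]
      rw [← Submodule.span_union, ← Set.image_singleton, ← Set.image_union]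
      congr 2
      ext i; simp only [Set.mem_union, Set.mem_Ico, Set.mem_singleton_iff]; omega
    have hIleft : ∀ p q, p < q → I p q = I (p + 1) q ⊔ Submodule.span ℝ {θ p} := by
      intro p q hpq
      simp only [hI]
      rw [← Submodule.span_union, ← Set.image_singleton, ← Set.image_union]
      congr 2
      ext i; simp only [Set.mem_union, Set.mem_Ico, Set.mem_singleton_iff]; omega
    replace hm : Module.finrank ℝ (I k l) ≤ m + 1 := hm
    by_cases hm' : Module.finrank ℝ (I k l) ≤ m
    · exact (ih k l hl hm' j hkj hjl).mono (by nlinarith)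
    -- Extending a subchain of rank at most `m` by one vector that raises its rank.
    have extend : ∀ p q i, k ≤ p → q ≤ l → p ≤ j → j ≤ q → p ≤ i → i ≤ q →
        Module.finrank ℝ (I p q) ≤ m → ∀ ϑ ∈ I k l, ϑ ∈ Θ → |⟪x i, ϑ⟫| ≤ a * ‖ϑ‖ →
        m < Module.finrank ℝ ↥(I p q ⊔ Submodule.span ℝ {ϑ}) →
        InnerBoundedOn (I k l) (x j) ((5 * Q) ^ (m + 1) * a) := by
      intro p q i hkp hql hpj hjq hpi hiq hr ϑ hϑI hϑ hxi hr'
      have hle : I p q ⊔ Submodule.span ℝ {ϑ} ≤ I k l :=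
        sup_le (hImono hkp hql) ((Submodule.span_singleton_le_iff_mem _ _).2 hϑI)
      have heq : I p q ⊔ Submodule.span ℝ {ϑ} = I k l :=
        Submodule.eq_of_le_of_finrank_le hle (by omega)
      have hnot : ϑ ∉ I p q := by
        intro h
        rw [sup_eq_left.2 ((Submodule.span_singleton_le_iff_mem _ _).2 h)] at hr'
        omega
      have hj := ih p q (hql.trans hl) hr j hpj hjq
      have hi := ih p q (hql.trans hl) hr i hpi hiq
      have hji : x j - x i ∈ I p q := by
        have h1 := hmove p q (hql.trans hl) j hpj hjq
        have h2 := hmove p q (hql.trans hl) i hpi hiq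
        simpa using Submodule.sub_mem _ h2 h1
      have hdist := hj.norm_sub_le hg0 hi hji
      have hxj : |⟪x j, ϑ⟫| ≤ (a + 2 * g) * ‖ϑ‖ := by
        have : ⟪x j, ϑ⟫ = ⟪x i, ϑ⟫ + ⟪x j - x i, ϑ⟫ := by rw [inner_sub_left]; ring
        rw [this, add_mul]
        refine (abs_add_le _ _).trans (add_le_add hxi ((abs_real_inner_le_norm _ _).trans ?_))
        gcongr
      have := hj.sup_span_singleton (by linarith) hg0 (by linarith)
        (hangle _ (hsub p q (hql.trans hl)) ϑ hϑ hnot) hxj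
      rw [heq] at this
      exact this.mono hnext
    -- Grow the interval around `j` to the right, then to the left.
    by_cases hright : Module.finrank ℝ (I j l) ≤ m
    · have hex : ∃ s, ¬ (Module.finrank ℝ (I (j - s) l) ≤ m) := ⟨j - k, by
        rwa [Nat.sub_sub_self hkj]⟩
      classical
      obtain ⟨s, hs, hmin⟩ : ∃ s, ¬ (Module.finrank ℝ (I (j - s) l) ≤ m) ∧
          ∀ s' < s, Module.finrank ℝ (I (j - s') l) ≤ m :=
        ⟨Nat.find hex, Nat.find_spec hex, fun s' h => not_not.1 (Nat.find_min hex h)⟩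
      have hs0 : s ≠ 0 := by rintro rfl; exact hs hright
      have hsk : s ≤ j - k := by
        by_contra h
        have := hmin (j - k) (by omega)
        rw [Nat.sub_sub_self hkj] at this
        exact hm' this
      set p := j - s with hp
      have hp1 : j - (s - 1) = p + 1 := by omega
      have hr := hmin (s - 1) (by omega)
      rw [hp1] at hr
      refine extend (p + 1) l (p + 1) (by omega) le_rfl (by omega) hjl le_rfl (by omega) hr (θ p)
        (Submodule.subset_span ⟨p, ⟨by omega, by omega⟩, rfl⟩) (hΘ p (by omega))
        (hend p (by omega)) ?_
      rw [← hIleft p l (by omega)]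
      exact not_le.1 hs
    · have hex : ∃ s, ¬ (Module.finrank ℝ (I j s) ≤ m) := ⟨l, hright⟩
      classical
      obtain ⟨s, hs, hmin⟩ : ∃ s, ¬ (Module.finrank ℝ (I j s) ≤ m) ∧
          ∀ s' < s, Module.finrank ℝ (I j s') ≤ m :=
        ⟨Nat.find hex, Nat.find_spec hex, fun s' h => not_not.1 (Nat.find_min hex h)⟩
      have hsl : s ≤ l := by
        by_contra h
        exact hright (hmin l (by omega))
      have hjs : j < s := by
        by_contra h
        refine hs ?_
        have : I j s = ⊥ := by simp [hI, Set.Ico_eq_empty_of_le (not_lt.1 h)]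
        rw [this]; simp
      obtain ⟨q, rfl⟩ : ∃ q, s = q + 1 := ⟨s - 1, by omega⟩
      refine extend j q q hkj (by omega) le_rfl (by omega) (by omega) le_rfl
        (hmin q (by omega)) (θ q) (Submodule.subset_span ⟨q, ⟨by omega, by omega⟩, rfl⟩)
        (hΘ q (by omega)) (hstart q (by omega)) ?_
      rw [← hIright j q (by omega)]
      exact not_le.1 hs

lemma Relation.ReflTransGen.exists_seq {X : Type*} {R : X → X → Prop} {x y : X}
    (h : Relation.ReflTransGen R x y) :
    ∃ (N : ℕ) (u : ℕ → X), u 0 = x ∧ u N = y ∧ ∀ j < N, R (u j) (u (j + 1)) := by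
  induction h using Relation.ReflTransGen.head_induction_on with
  | refl => exact ⟨0, fun _ => y, rfl, rfl, by simp⟩
  | @head a c hac _ ih =>
    obtain ⟨N, u, h0, hN, hu⟩ := ih
    refine ⟨N + 1, fun j => Nat.casesOn j a u, rfl, hN, fun j hj => ?_⟩
    cases j with
    | zero => simpa [h0] using hac
    | succ j => exact hu j (by omega)

lemma abs_inner_le_of_mem_layer {ρ a : ℝ} {θ ξ : 𝔼} (h : ξ ∈ layer ρ a θ) :
    |⟪ξ, θ⟫| ≤ ρ ^ a * ‖θ‖ := by
  rcases h with rfl | h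
  · simp
  · exact h.le

/-- Resonant congruent points are close to each other. -/
lemma norm_sub_le_of_mem_Ups {B : Basis (Fin d) ℝ 𝔼} {ρ a r Q : ℝ} (hρ : 0 ≤ ρ) (hQ : 1 ≤ Q)
    (hangle : ∀ S ⊆ Theta0 B r, ∀ θ ∈ Theta0 B r, θ ∉ Submodule.span ℝ S →
      ∀ u ∈ Submodule.span ℝ S, ‖θ‖ ≤ Q * ‖θ - u‖)
    {ξ η : 𝔼} (h : η ∈ Ups B ρ a r ξ) : ‖ξ - η‖ ≤ 2 * ((5 * Q) ^ d * ρ ^ a) := by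
  obtain ⟨N, x, rfl, rfl, hx⟩ := Relation.ReflTransGen.exists_seq h
  have hθ : ∀ j, ∃ θ : 𝔼, j < N → θ ∈ Theta0 B r ∧ x (j + 1) ∈ upsTheta ρ a θ (x j) := by
    intro j
    by_cases hj : j < N
    · obtain ⟨θ, h⟩ := hx j hj
      exact ⟨θ, fun _ => h⟩
    · exact ⟨0, fun h => absurd h hj⟩
  choose θ hθ using hθ
  have hdiff : ∀ j < N, ∃ t : ℝ, x j - x (j + 1) = t • θ j := fun j hj => by
    obtain ⟨l, hl⟩ := (hθ j hj).2.2.2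
    exact ⟨l, hl⟩
  have hρa : 0 ≤ ρ ^ a := Real.rpow_nonneg hρ a
  have key := innerBoundedOn_span_of_chain hQ hρa hangle (fun j hj => (hθ j hj).1)
    (fun j hj => abs_inner_le_of_mem_layer (hθ j hj).2.1)
    (fun j hj => abs_inner_le_of_mem_layer (hθ j hj).2.2.1) hdiff d 0 N le_rfl
    ((Submodule.finrank_le _).trans_eq (by simp))
  refine (key 0 le_rfl (Nat.zero_le _)).norm_sub_le (by positivity)
    (key N (Nat.zero_le _) le_rfl) ?_
  rw [← neg_sub, ← Finset.sum_range_sub]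
  refine Submodule.neg_mem _ (Submodule.sum_mem _ fun j hj => ?_)
  have hj' := Finset.mem_range.1 hj
  obtain ⟨t, ht⟩ := hdiff j hj'
  rw [← neg_sub, ht]
  exact Submodule.neg_mem _ (Submodule.smul_mem _ _
    (Submodule.subset_span ⟨j, ⟨Nat.zero_le _, hj'⟩, rfl⟩))

/-- Every point of `Ξ₂(W)` has a small component along `W`. -/
lemma innerBoundedOn_of_mem_Xi2 {B : Basis (Fin d) ℝ 𝔼} {ρ r Q : ℝ} {α : ℕ → ℝ} (hρ : 0 ≤ ρ)
    (hQ : 1 ≤ Q)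
    (hangle : ∀ S ⊆ Theta0 B r, ∀ θ ∈ Theta0 B r, θ ∉ Submodule.span ℝ S →
      ∀ u ∈ Submodule.span ℝ S, ‖θ‖ ≤ Q * ‖θ - u‖)
    {W : Submodule ℝ 𝔼} {η : 𝔼} (h : η ∈ Xi2 B ρ r α W) :
    InnerBoundedOn W η (ρ ^ α (Module.finrank ℝ W) + 2 * ((5 * Q) ^ d * ρ ^ α 1)) := by
  obtain ⟨ξ, hξ, hη⟩ := h
  intro w hw
  have hdist := norm_sub_le_of_mem_Ups hρ hQ hangle hη
  have h1 : ⟪ξ, w⟫ = ⟪projV W ξ, w⟫ :=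
    (W.inner_orthogonalProjectionOnto_eq_of_mem_right ⟨w, hw⟩ ξ).symm
  have h2 : ⟪η, w⟫ = ⟪projV W ξ, w⟫ - ⟪ξ - η, w⟫ := by
    rw [inner_sub_left, ← h1]; ring
  rw [h2, add_mul]
  refine (abs_sub _ _).trans (add_le_add ((abs_real_inner_le_norm _ _).trans ?_)
    ((abs_real_inner_le_norm _ _).trans ?_))
  · exact mul_le_mul_of_nonneg_right (le_of_lt hξ) (norm_nonneg _)
  · gcongr

/-- An orthonormal basis of the whole space whose first vectors form a basis of `V`. -/
lemma exists_orthonormalBasis_adapted (V : Submodule ℝ 𝔼) :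
    ∃ o : OrthonormalBasis (Fin d) ℝ 𝔼, (∀ i : Fin d, (i : ℕ) < Module.finrank ℝ V → o i ∈ V) ∧
      ∀ (ξ : 𝔼) (s : ℝ), (∀ i : Fin d, (i : ℕ) < Module.finrank ℝ V → |⟪o i, ξ⟫| ≤ s) →
        ‖projV V ξ‖ ≤ Module.finrank ℝ V * s := by
  let e := stdOrthonormalBasis ℝ V
  have hnd : Module.finrank ℝ V ≤ d := (Submodule.finrank_le V).trans_eq (by simp)
  let v : Fin d → 𝔼 := fun i => if h : (i : ℕ) < Module.finrank ℝ V then (e ⟨i, h⟩ : 𝔼) else 0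
  have hv : Orthonormal ℝ
      ({i : Fin d | (i : ℕ) < Module.finrank ℝ V}.domRestrict v) := by
    have h := (e.orthonormal.comp_linearIsometry V.subtypeₗᵢ).comp
      (fun i : {i : Fin d | (i : ℕ) < Module.finrank ℝ V} =>
        (⟨i.1, i.2⟩ : Fin (Module.finrank ℝ V)))
      (fun i j h => Subtype.ext (Fin.ext (by simpa using h)))
    convert h using 1
    ext1 i
    have hi : ((i : Fin d) : ℕ) < Module.finrank ℝ V := i.2
    simp [v, hi, Set.domRestrict]
  obtain ⟨o, ho⟩ := hv.exists_orthonormalBasis_extension_of_card_eq (by simp)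
  have hoe : ∀ (i : Fin d) (h : (i : ℕ) < Module.finrank ℝ V), o i = e ⟨i, h⟩ := fun i h => by
    rw [ho i h]; simp [v, h]
  refine ⟨o, fun i h => hoe i h ▸ Submodule.coe_mem _, fun ξ s hs => ?_⟩
  set p := V.orthogonalProjectionOnto ξ with hp
  have hsum : ‖p‖ ≤ ∑ j, ‖⟪e j, p⟫ • e j‖ := by
    conv_lhs => rw [← e.sum_repr' p]
    exact norm_sum_le _ _
  refine hsum.trans ((Finset.sum_le_card_nsmul _ _ s fun j _ => ?_).trans_eq (by simp))
  have hj : (j : ℕ) < d := j.2.trans_le hnd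
  have := hs ⟨j, hj⟩ j.2
  rw [hoe ⟨j, hj⟩ j.2] at this
  rw [norm_smul, e.norm_eq_one, mul_one, Real.norm_eq_abs, hp,
    Submodule.inner_orthogonalProjectionOnto_eq_of_mem_left]
  exact this

/-- The open box with half-sides `a` in the coordinates of the orthonormal basis `o`. -/
def orthoBox (o : OrthonormalBasis (Fin d) ℝ 𝔼) (a : Fin d → ℝ) : Set 𝔼 :=
  {ξ | ∀ i, |⟪o i, ξ⟫| < a i}

lemma orthoBox_eq_preimage (o : OrthonormalBasis (Fin d) ℝ 𝔼) (a : Fin d → ℝ) :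
    orthoBox o a = (fun ξ => WithLp.ofLp (o.repr ξ)) ⁻¹'
      (Set.pi Set.univ fun j => Set.Ioo (-a j) (a j)) := by
  ext ξ
  simp [orthoBox, abs_lt, o.repr_apply_apply]

lemma measurePreserving_ofLp_repr (o : OrthonormalBasis (Fin d) ℝ 𝔼) :
    MeasurePreserving (fun ξ => WithLp.ofLp (o.repr ξ)) volume volume :=
  (PiLp.volume_preserving_ofLp (Fin d)).comp o.measurePreserving_repr

lemma measurableSet_pi_Ioo {ι : Type*} [Fintype ι] (a : ι → ℝ) :
    MeasurableSet (Set.pi Set.univ fun j => Set.Ioo (-a j) (a j)) :=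
  MeasurableSet.univ_pi fun _ => measurableSet_Ioo

lemma volume_orthoBox (o : OrthonormalBasis (Fin d) ℝ 𝔼) (a : Fin d → ℝ) :
    volume (orthoBox o a) = ∏ i, ENNReal.ofReal (2 * a i) := by
  rw [orthoBox_eq_preimage, (measurePreserving_ofLp_repr o).measure_preimage
    (measurableSet_pi_Ioo a).nullMeasurableSet, Real.volume_pi_Ioo]
  refine Finset.prod_congr rfl fun i _ => ?_
  congr 1; ring

lemma volume_orthoBox_inter_slab_le (o : OrthonormalBasis (Fin d) ℝ 𝔼) {a : Fin d → ℝ}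
    (ha : ∀ j, 0 < a j) (t : 𝔼) (i : Fin d) (ht : ⟪o i, t⟫ ≠ 0) {h : ℝ} (hh : 0 ≤ h) :
    volume (orthoBox o a ∩ {ξ | |⟪t, ξ⟫| ≤ h}) ≤
      ENNReal.ofReal (h / (|⟪o i, t⟫| * a i)) * volume (orthoBox o a) := by
  have hslab : {ξ | |⟪t, ξ⟫| ≤ h} = (fun ξ => WithLp.ofLp (o.repr ξ)) ⁻¹'
      {x | |(fun j => ⟪o j, t⟫) ⬝ᵥ x| ≤ h} := by
    ext ξ
    simp only [Set.mem_ofPred_eq, Set.mem_preimage, dotProduct, o.repr_apply_apply]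
    rw [← o.sum_inner_mul_inner t ξ]
    simp only [real_inner_comm]
  have hmeas : MeasurableSet {x : Fin d → ℝ | |(fun j => ⟪o j, t⟫) ⬝ᵥ x| ≤ h} := by
    refine (isClosed_le ?_ continuous_const).measurableSet
    unfold dotProduct
    fun_prop
  rw [hslab, orthoBox_eq_preimage, ← Set.preimage_inter,
    (measurePreserving_ofLp_repr o).measure_preimage
      ((measurableSet_pi_Ioo a).inter hmeas).nullMeasurableSet,
    (measurePreserving_ofLp_repr o).measure_preimage (measurableSet_pi_Ioo a).nullMeasurableSet]
  exact volume_box_inter_slab_le a (fun j => ⟪o j, t⟫) i ha ht hh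

/-- A vector making a controlled angle with `V` has a large coordinate transversal to `V`. -/
lemma exists_large_coordinate (o : OrthonormalBasis (Fin d) ℝ 𝔼) {V : Submodule ℝ 𝔼} {n : ℕ}
    (ho : ∀ i : Fin d, (i : ℕ) < n → o i ∈ V) {θ : 𝔼} (hθV : θ ∉ V) {Q : ℝ} (hQ : 0 ≤ Q)
    (hθ : ∀ u ∈ V, ‖θ‖ ≤ Q * ‖θ - u‖) :
    ∃ i : Fin d, n ≤ i ∧ ‖θ‖ ≤ Q * d * |⟪o i, θ⟫| := by
  set s : Finset (Fin d) := Finset.univ.filter fun i => n ≤ (i : ℕ) with hs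
  set u : 𝔼 := ∑ i ∈ Finset.univ.filter (fun i : Fin d => ¬ n ≤ (i : ℕ)), ⟪o i, θ⟫ • o i with hu
  have huV : u ∈ V := Submodule.sum_mem _ fun i hi =>
    V.smul_mem _ (ho i (not_le.1 (Finset.mem_filter.1 hi).2))
  have hsub : θ - u = ∑ i ∈ s, ⟪o i, θ⟫ • o i := by
    rw [sub_eq_iff_eq_add, hs, hu, Finset.sum_filter_add_sum_filter_not, o.sum_repr']
  have hne : s.Nonempty := by
    by_contra h
    rw [Finset.not_nonempty_iff_eq_empty.1 h, Finset.sum_empty, sub_eq_zero] at hsub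
    exact hθV (hsub ▸ huV)
  by_contra! hcon
  have h1 : ‖θ - u‖ ≤ ∑ i ∈ s, |⟪o i, θ⟫| := by
    rw [hsub]
    refine (norm_sum_le _ _).trans_eq (Finset.sum_congr rfl fun i _ => ?_)
    rw [norm_smul, o.norm_eq_one, mul_one, Real.norm_eq_abs]
  have h2 : ∑ i ∈ s, Q * d * |⟪o i, θ⟫| < ∑ i ∈ s, ‖θ‖ :=
    Finset.sum_lt_sum_of_nonempty hne fun i hi => hcon i (Finset.mem_filter.1 hi).2
  have hcard : (s.card : ℝ) ≤ d := by
    exact_mod_cast (Finset.card_le_univ s).trans_eq (by simp)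
  rw [← Finset.mul_sum, Finset.sum_const, nsmul_eq_mul] at h2
  have h3 : ‖θ‖ ≤ Q * ∑ i ∈ s, |⟪o i, θ⟫| := (hθ u huV).trans (by gcongr)
  have h4 : (d : ℝ) * ‖θ‖ ≤ d * (Q * ∑ i ∈ s, |⟪o i, θ⟫|) := by gcongr
  have h5 : (s.card : ℝ) * ‖θ‖ ≤ d * ‖θ‖ := by gcongr
  linarith

/-- The union of the sets `Ξ₂(W)` over the lattice subspaces `W` of dimension above `dim V` takes up
at most half of a suitable box. -/
lemma volume_orthoBox_inter_Xi2_le {B : Basis (Fin d) ℝ 𝔼} {ρ r Q b L : ℝ} {α : ℕ → ℝ}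
    (hρ : 0 ≤ ρ) (hQ : 1 ≤ Q) (hb : 0 ≤ b) (hL : 0 ≤ L)
    (hangle : ∀ S ⊆ Theta0 B r, ∀ θ ∈ Theta0 B r, θ ∉ Submodule.span ℝ S →
      ∀ u ∈ Submodule.span ℝ S, ‖θ‖ ≤ Q * ‖θ - u‖)
    (hlow : ∀ m < d, ρ ^ α m + 2 * ((5 * Q) ^ d * ρ ^ α 1) ≤ b)
    (htop : ρ ^ α d + 2 * ((5 * Q) ^ d * ρ ^ α 1) ≤ L)
    {s : Finset 𝔼} (hs : ∀ θ, θ ∈ s ↔ θ ∈ Theta0 B r)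
    {V : Submodule ℝ 𝔼} (hV : IsLatticeSubspace B r V) (o : OrthonormalBasis (Fin d) ℝ 𝔼)
    (ho : ∀ i : Fin d, (i : ℕ) < Module.finrank ℝ V → o i ∈ V)
    {a : Fin d → ℝ} (ha : ∀ i, 0 < a i) {R' : ℝ} (hR' : 0 < R')
    (haR : ∀ i : Fin d, Module.finrank ℝ V ≤ i → a i = R')
    (hslabs : s.card * (b * (Q * d) / R') ≤ 1 / 4) (hball : L / R' ≤ 1 / 4) :
    volume (orthoBox o a ∩ ⋃ W ∈ {W : Submodule ℝ 𝔼 |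
        IsLatticeSubspace B r W ∧ Module.finrank ℝ V < Module.finrank ℝ W}, Xi2 B ρ r α W) ≤
      ENNReal.ofReal (1 / 2) * volume (orthoBox o a) := by
  classical
  set n := Module.finrank ℝ V with hn
  have hrank : ∀ W : Submodule ℝ 𝔼, Module.finrank ℝ W ≤ d := fun W =>
    (Submodule.finrank_le W).trans_eq (by simp)
  rcases (hrank V).eq_or_lt with hnd | hnd
  · have : (⋃ W ∈ {W : Submodule ℝ 𝔼 | IsLatticeSubspace B r W ∧ n < Module.finrank ℝ W},
        Xi2 B ρ r α W) = ∅ := by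
      simp only [Set.iUnion_eq_empty]
      rintro W ⟨-, hW⟩
      exact absurd (hrank W) (by omega)
    rw [this]; simp
  let i₀ : Fin d := ⟨n, hnd⟩
  have hcover : (orthoBox o a ∩ ⋃ W ∈ {W : Submodule ℝ 𝔼 |
        IsLatticeSubspace B r W ∧ n < Module.finrank ℝ W}, Xi2 B ρ r α W) ⊆
      (⋃ θ ∈ s.filter (· ∉ V), orthoBox o a ∩ {ξ | |⟪θ, ξ⟫| ≤ b * ‖θ‖}) ∪
        (orthoBox o a ∩ {ξ | |⟪o i₀, ξ⟫| ≤ L}) := by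
    rintro η ⟨hηP, hη⟩
    simp only [Set.mem_iUnion] at hη
    obtain ⟨W, ⟨⟨S, hS, hWS⟩, hVW⟩, hηW⟩ := hη
    have hbd := innerBoundedOn_of_mem_Xi2 hρ hQ hangle hηW
    rcases (hrank W).eq_or_lt with hWd | hWd
    · right
      refine ⟨hηP, ?_⟩
      have hWtop : W = ⊤ := Submodule.eq_top_of_finrank_eq (by simpa using hWd)
      have := hbd (o i₀) (hWtop ▸ Submodule.mem_top)
      rw [o.norm_eq_one, mul_one, hWd, real_inner_comm] at this
      exact this.trans htop
    · left
      obtain ⟨θ, hθS, hθV⟩ : ∃ θ ∈ S, θ ∉ V := by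
        by_contra! h
        have : W ≤ V := hWS ▸ Submodule.span_le.2 h
        exact absurd (Submodule.finrank_mono this) (by omega)
      simp only [Set.mem_iUnion]
      refine ⟨θ, Finset.mem_filter.2 ⟨(hs θ).2 (hS hθS), hθV⟩, hηP, ?_⟩
      have := hbd θ (hWS ▸ Submodule.subset_span hθS)
      rw [real_inner_comm] at this
      exact this.trans (by gcongr; exact hlow _ hWd)
  have hslab : ∀ θ ∈ s.filter (· ∉ V), volume (orthoBox o a ∩ {ξ | |⟪θ, ξ⟫| ≤ b * ‖θ‖}) ≤
      ENNReal.ofReal (b * (Q * d) / R') * volume (orthoBox o a) := by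
    intro θ hθ
    obtain ⟨hθs, hθV⟩ := Finset.mem_filter.1 hθ
    obtain ⟨S, hS, hVS⟩ := hV
    have hang : ∀ u ∈ V, ‖θ‖ ≤ Q * ‖θ - u‖ := by
      rw [hVS] at hθV ⊢
      exact hangle S hS θ ((hs θ).1 hθs) hθV
    obtain ⟨i, hi, hθi⟩ := exists_large_coordinate o ho hθV (by linarith) hang
    have hθ0 : 0 < ‖θ‖ := norm_pos_iff.2 fun h => hθV (h ▸ V.zero_mem)
    have hne : ⟪o i, θ⟫ ≠ 0 := by
      intro h
      rw [h, abs_zero, mul_zero] at hθi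
      linarith
    refine (volume_orthoBox_inter_slab_le o ha θ i hne (by positivity)).trans ?_
    gcongr ENNReal.ofReal ?_ * _
    rw [haR i hi, div_le_div_iff₀ (mul_pos (abs_pos.2 hne) hR') hR']
    calc b * ‖θ‖ * R' ≤ b * (Q * d * |⟪o i, θ⟫|) * R' := by gcongr
      _ = _ := by ring
  have htopslab : volume (orthoBox o a ∩ {ξ | |⟪o i₀, ξ⟫| ≤ L}) ≤
      ENNReal.ofReal (1 / 4) * volume (orthoBox o a) := by
    have hone : ⟪o i₀, o i₀⟫ = 1 := by
      rw [real_inner_self_eq_norm_sq, o.norm_eq_one, one_pow]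
    refine (volume_orthoBox_inter_slab_le o ha (o i₀) i₀ (by simp) hL).trans ?_
    rw [hone, haR i₀ le_rfl, abs_one, one_mul]
    gcongr
  calc _ ≤ _ := measure_mono hcover
    _ ≤ (∑ θ ∈ s.filter (· ∉ V), volume (orthoBox o a ∩ {ξ | |⟪θ, ξ⟫| ≤ b * ‖θ‖})) +
          volume (orthoBox o a ∩ {ξ | |⟪o i₀, ξ⟫| ≤ L}) :=
        (measure_union_le _ _).trans (by gcongr; exact measure_biUnion_finset_le _ _)
    _ ≤ (s.filter (· ∉ V)).card • (ENNReal.ofReal (b * (Q * d) / R') * volume (orthoBox o a)) +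
          ENNReal.ofReal (1 / 4) * volume (orthoBox o a) := by
        gcongr
        exact Finset.sum_le_card_nsmul _ _ _ hslab
    _ ≤ ENNReal.ofReal (1 / 4) * volume (orthoBox o a) +
          ENNReal.ofReal (1 / 4) * volume (orthoBox o a) := by
        gcongr
        rw [nsmul_eq_mul, ← mul_assoc, ← ENNReal.ofReal_natCast,
          ← ENNReal.ofReal_mul (Nat.cast_nonneg _)]
        gcongr
        refine le_trans ?_ hslabs
        gcongr
        exact Finset.filter_subset _ _
    _ = _ := by
        rw [← add_mul, ← ENNReal.ofReal_add (by norm_num) (by norm_num)]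
        norm_num

lemma GoodParams.alpha_le {B : Basis (Fin d) ℝ 𝔼} {ρ r κ : ℝ} {α : ℕ → ℝ}
    (h : GoodParams B ρ r κ α) {m m' : ℕ} (hmm : m ≤ m') (hm' : m' ≤ d) : α m ≤ α m' := by
  obtain ⟨-, hκ, -, hα, -⟩ := h
  induction m', hmm using Nat.le_induction with
  | base => exact le_rfl
  | succ k hk ih =>
    have := hα k (by omega)
    have h2 : 0 ≤ 2 * κ * (d : ℝ) ^ 2 := by positivity
    linarith [ih (by omega)]

/-- Lemma 5.15: there are c > 0, C₀ ≥ 1, ρ₀ ≥ 1 such that for all ρ ≥ ρ₀,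
every lattice r-subspace V ∈ 𝒱(r,n) with n ≤ d and every R ≥ C₀ρ,
vol(Ξ(V) ∩ B(0,R)) ≥ c ρ^{nα_n} R^{d−n}. -/
theorem Xi_volume_lower_bound
    (d : ℕ) (hd : 2 ≤ d) (B : Basis (Fin d) ℝ (EuclideanSpace ℝ (Fin d)))
    (κ : ℝ) (α : ℕ → ℝ) :
    ∃ c C₀ ρ₀ : ℝ, 0 < c ∧ 1 ≤ C₀ ∧ 1 ≤ ρ₀ ∧
      ∀ ρ r : ℝ, ρ₀ ≤ ρ → GoodParams B ρ r κ α →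
      ∀ n : ℕ, n ≤ d →
      ∀ V : Submodule ℝ (EuclideanSpace ℝ (Fin d)), IsLatticeSubspace B r V →
        Module.finrank ℝ V = n →
      ∀ R : ℝ, C₀ * ρ ≤ R →
        ENNReal.ofReal (c * ρ ^ ((n : ℝ) * α n) * R ^ (d - n)) ≤
          MeasureTheory.volume
            (Xi B ρ r α V ∩ Metric.ball (0 : EuclideanSpace ℝ (Fin d)) R) := by
  obtain ⟨K, hK1, hK⟩ := exists_norm_le_mul_norm_sub hd B
  obtain ⟨K', hK'1, hK'⟩ := exists_card_Theta0_le B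
  set A : ℝ := 1 + 2 * (5 * K) ^ d with hA
  have hA1 : 1 ≤ A := by
    have : 0 ≤ 2 * (5 * K) ^ d := by positivity
    linarith
  have hd1 : (1 : ℝ) ≤ d := by exact_mod_cast (by omega : 1 ≤ d)
  have hd0 : (0 : ℝ) < d := by linarith
  set C : ℝ := 8 * d ^ 2 * (K' * A * K) with hC
  have hKKA : A ≤ K' * A * K :=
    (le_mul_of_one_le_left (by linarith) hK'1).trans (le_mul_of_one_le_right (by positivity) hK1)
  have hC1 : 1 ≤ C := by
    have : (1 : ℝ) ≤ d ^ 2 := one_le_pow₀ hd1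
    rw [hC]; nlinarith
  refine ⟨1 / 2 * (1 / d) ^ d, C, 1, by positivity, hC1, le_rfl, ?_⟩
  rintro ρ r - hgood n hn V hV rfl R hR
  have hmono := @GoodParams.alpha_le d B ρ r κ α hgood
  obtain ⟨hρ1, hκ, hα0, hα, hαd, hr, hspan⟩ := hgood
  have hρ0 : 0 < ρ := by linarith
  have hR0 : 0 < R := by nlinarith
  have hρR : ρ ≤ R := by nlinarith
  set T := ρ ^ κ with hT
  have hT1 : 1 ≤ T := Real.one_le_rpow hρ1 hκ.le
  have hpow : ∀ {m m'}, m ≤ m' → m' ≤ d → ρ ^ α m ≤ ρ ^ α m' := fun h h' =>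
    Real.rpow_le_rpow_of_exponent_le hρ1 (hmono h h')
  have hρd : ρ ^ α d ≤ ρ := by
    simpa using Real.rpow_le_rpow_of_exponent_le hρ1 hαd.le
  set b₀ := ρ ^ α (d - 1) with hb₀
  have hb₀0 : 0 < b₀ := Real.rpow_pos_of_pos hρ0 _
  -- The exponent gap absorbs all powers of `T`.
  have hgap : b₀ * T ^ (2 * d ^ 2) ≤ ρ := by
    rw [hb₀, hT, ← Real.rpow_mul_natCast hρ0.le, ← Real.rpow_add hρ0]
    refine (Real.rpow_le_rpow_of_exponent_le hρ1 ?_).trans hρd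
    have := hα (d - 1) (by omega)
    rw [Nat.sub_add_cancel (by omega)] at this
    push_cast
    linarith
  set Q := K * T ^ d with hQ
  have hQ1 : 1 ≤ Q := one_le_mul_of_one_le_of_one_le hK1 (one_le_pow₀ hT1)
  have hdisp : 2 * ((5 * Q) ^ d * ρ ^ α 1) ≤ 2 * (5 * K) ^ d * (T ^ d ^ 2 * b₀) := by
    have h1 : (5 * Q) ^ d = (5 * K) ^ d * T ^ d ^ 2 := by
      rw [hQ, ← mul_assoc, mul_pow, ← pow_mul, sq]
    have h2 : ρ ^ α 1 ≤ b₀ := hpow (by omega) (by omega)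
    calc 2 * ((5 * Q) ^ d * ρ ^ α 1) ≤ 2 * ((5 * Q) ^ d * b₀) := by gcongr
      _ = _ := by rw [h1]; ring
  have hTb : b₀ ≤ T ^ d ^ 2 * b₀ := le_mul_of_one_le_left hb₀0.le (one_le_pow₀ hT1)
  have hTρ : T ^ d ^ 2 * b₀ ≤ ρ := by
    refine le_trans ?_ hgap
    rw [mul_comm]
    gcongr
    omega
  obtain ⟨s, hs, hcard⟩ := hK' r T hT1 hr
  obtain ⟨o, hoV, hoproj⟩ := exists_orthonormalBasis_adapted V
  set n := Module.finrank ℝ V with hn_def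
  set s' : ℝ := ρ ^ α n / (2 * d) with hs'
  set R' : ℝ := R / (2 * d) with hR'
  have hραn : 0 < ρ ^ α n := Real.rpow_pos_of_pos hρ0 _
  have hs'0 : 0 < s' := by positivity
  have hR'0 : 0 < R' := by positivity
  have h_inner_le : s' ≤ R' := by
    rw [hs', hR']
    gcongr
    exact (hpow hn le_rfl).trans (hρd.trans hρR)
  set a : Fin d → ℝ := fun i => if (i : ℕ) < n then s' else R' with ha
  have ha0 : ∀ i, 0 < a i := fun i => by
    simp only [ha]; split_ifs <;> assumption
  have ha_le : ∀ i, a i ≤ R' := fun i => by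
    simp only [ha]; split_ifs
    exacts [h_inner_le, le_rfl]
  have hbad := volume_orthoBox_inter_Xi2_le (b := A * (T ^ d ^ 2 * b₀)) (L := A * ρ) (α := α)
    hρ0.le hQ1 (by positivity) (by positivity) (hK r T hT1 hr hspan)
    (fun m hm => by
      have : ρ ^ α m ≤ b₀ := hpow (by omega) (by omega)
      rw [hA, add_mul]
      linarith)
    (by
      rw [hA, add_mul]
      have : 2 * (5 * K) ^ d * (T ^ d ^ 2 * b₀) ≤ 2 * (5 * K) ^ d * ρ := by gcongr
      linarith)
    hs hV o hoV ha0 hR'0 (fun i hi => by simp only [ha]; rw [if_neg (not_lt.2 hi)])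
    (by
      rw [← mul_div_assoc, div_le_iff₀ hR'0, hR']
      have hTT : T ^ d * (T ^ d ^ 2 * b₀) * T ^ d ≤ ρ := by
        refine le_trans ?_ hgap
        have : T ^ d * (T ^ d ^ 2 * b₀) * T ^ d = b₀ * T ^ (d + d ^ 2 + d) := by ring
        rw [this]
        gcongr
        nlinarith
      calc s.card * (A * (T ^ d ^ 2 * b₀) * (Q * d))
          ≤ (K' * T ^ d) * (A * (T ^ d ^ 2 * b₀) * (Q * d)) := by gcongr
        _ = (K' * A * K) * d * (T ^ d * (T ^ d ^ 2 * b₀) * T ^ d) := by rw [hQ]; ring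
        _ ≤ (K' * A * K) * d * ρ := by gcongr
        _ = C * ρ / (8 * d) := by rw [hC]; field_simp
        _ ≤ R / (8 * d) := by gcongr
        _ = 1 / 4 * (R / (2 * d)) := by field_simp; norm_num)
    (by
      rw [div_le_iff₀ hR'0, hR']
      calc A * ρ ≤ (K' * A * K) * d * ρ := by
            gcongr
            exact hKKA.trans (le_mul_of_one_le_right (by positivity) hd1)
        _ = C * ρ / (8 * d) := by rw [hC]; field_simp
        _ ≤ R / (8 * d) := by gcongr
        _ = 1 / 4 * (R / (2 * d)) := by field_simp; norm_num)
  set bad := ⋃ W ∈ {W : Submodule ℝ (EuclideanSpace ℝ (Fin d)) |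
    IsLatticeSubspace B r W ∧ n < Module.finrank ℝ W}, Xi2 B ρ r α W with hbad_def
  have hsubset : orthoBox o a \ bad ⊆ Xi B ρ r α V ∩ Metric.ball 0 R := by
    rintro ξ ⟨hξ, hξbad⟩
    refine ⟨⟨⟨ξ, ?_, Relation.ReflTransGen.refl⟩, hξbad⟩, ?_⟩
    · have h1 := hoproj ξ s' fun i hi => by
        have := (hξ i).le
        simp only [ha] at this
        rwa [if_pos hi] at this
      refine lt_of_le_of_lt h1 ?_
      calc (n : ℝ) * s' ≤ d * s' := by gcongr
        _ = ρ ^ α n / 2 := by rw [hs']; field_simp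
        _ < ρ ^ α n := by linarith
    · rw [mem_ball_zero_iff, ← o.sum_repr' ξ]
      calc ‖∑ i, ⟪o i, ξ⟫ • o i‖ ≤ ∑ i, ‖⟪o i, ξ⟫ • o i‖ := norm_sum_le _ _
        _ ≤ ∑ _i : Fin d, R' := Finset.sum_le_sum fun i _ => by
            rw [norm_smul, o.norm_eq_one, mul_one, Real.norm_eq_abs]
            exact (hξ i).le.trans (ha_le i)
        _ = R / 2 := by
            rw [Finset.sum_const, Finset.card_univ, Fintype.card_fin, nsmul_eq_mul, hR']
            field_simp
        _ < R := by linarith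
  have hvol : volume (orthoBox o a) =
      ENNReal.ofReal ((1 / d) ^ d * ρ ^ ((n : ℝ) * α n) * R ^ (d - n)) := by
    rw [volume_orthoBox, ← ENNReal.ofReal_prod_of_nonneg fun i _ => by linarith [ha0 i]]
    congr 1
    have hprod : ∏ i : Fin d, 2 * a i = (2 * s') ^ n * (2 * R') ^ (d - n) := by
      have : ∀ i : Fin d, 2 * a i = if (i : ℕ) < n then 2 * s' else 2 * R' := fun i => by
        simp only [ha, mul_ite]
      simp only [this]
      rw [Fin.prod_univ_eq_prod_range (fun i => if i < n then 2 * s' else 2 * R') d,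
        ← Finset.prod_range_mul_prod_Ico _ hn,
        Finset.prod_congr rfl fun i hi => if_pos (Finset.mem_range.1 hi),
        Finset.prod_congr rfl fun i hi => if_neg (not_lt.2 (Finset.mem_Ico.1 hi).1)]
      simp
    have h2s : 2 * s' = 1 / d * ρ ^ α n := by rw [hs']; field_simp
    have h2R : 2 * R' = 1 / d * R := by rw [hR']; field_simp
    rw [hprod, h2s, h2R, mul_pow, mul_pow, mul_comm (n : ℝ), Real.rpow_mul_natCast hρ0.le]
    have hdn : ((1 : ℝ) / d) ^ d = (1 / d) ^ n * (1 / d) ^ (d - n) := by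
      rw [← pow_add, Nat.add_sub_cancel' hn]
    rw [hdn]
    ring
  have hfin : volume (orthoBox o a) ≠ ⊤ := by rw [hvol]; exact ENNReal.ofReal_ne_top
  have hsplit : ENNReal.ofReal (1 / 2) * volume (orthoBox o a) ≤
      volume (orthoBox o a \ bad) := by
    have h1 := measure_le_inter_add_sdiff volume (orthoBox o a) bad
    have h2 : volume (orthoBox o a) = ENNReal.ofReal (1 / 2) * volume (orthoBox o a) +
        ENNReal.ofReal (1 / 2) * volume (orthoBox o a) := by
      rw [← add_mul, ← ENNReal.ofReal_add (by norm_num) (by norm_num)]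
      norm_num
    have h3 := h2.symm.trans_le (h1.trans (add_le_add_left hbad _))
    exact (ENNReal.add_le_add_iff_left
      (ENNReal.mul_ne_top ENNReal.ofReal_ne_top hfin)).1 h3
  refine le_trans ?_ (hsplit.trans (measure_mono hsubset))
  rw [hvol, ← ENNReal.ofReal_mul (by norm_num)]
  refine le_of_eq (congrArg _ ?_)
  ring
end
end

section
/- There exist constants 0 < c ≤ C, depending only on d and Γ, and ρ₀, depending only on d, Γ, κ and the exponents α_j, such that for all ρ ≥ ρ₀ the surface measure on the unit sphere S^{d−1} satisfies σ(S(ρ)) ≤ C ρ^{α_d − 1} and c ≤ σ(T(ρ)) ≤ C, where for θ ∈ Θ_r one sets S(θ; ρ) = {Ω ∈ S^{d−1} : |Ω · θ|/|θ| < 16 ρ^{α_{d−1}−1}}, S(ρ) = ∪_{θ∈Θ_r} S(θ; ρ), and T(ρ) = S^{d−1} \ S(ρ). -/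
noncomputable section

open Set Submodule Module MeasureTheory Relation
open scoped RealInnerProductSpace

variable {d : ℕ}

section

open scoped NNReal ENNReal

/-- A map that expands distances on `s` by at least `1 / L` controls the Hausdorff measure. -/
theorem hausdorffMeasure_le_image_of_dist_le {X Y : Type*} [MetricSpace X] [MetricSpace Y]
    [MeasurableSpace X] [BorelSpace X] [MeasurableSpace Y] [BorelSpace Y]
    {f : X → Y} {s : Set X} {L : ℝ≥0} {m : ℝ} (hm : 0 ≤ m)
    (h : ∀ x ∈ s, ∀ y ∈ s, dist x y ≤ L * dist (f x) (f y)) :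
    Measure.hausdorffMeasure m s ≤ (L : ℝ≥0∞) ^ m * Measure.hausdorffMeasure m (f '' s) := by
  have hf : AntilipschitzWith L fun x : s => f x :=
    AntilipschitzWith.of_le_mul_dist fun x y => h x x.2 y y.2
  have hval : Isometry ((↑) : s → X) := isometry_subtype_coe
  calc Measure.hausdorffMeasure m s = Measure.hausdorffMeasure m (univ : Set s) := by
        rw [← hval.hausdorffMeasure_image (Or.inl hm), image_univ, Subtype.range_coe]
    _ ≤ _ := hf.le_hausdorffMeasure_image hm univ
    _ = _ := by rw [image_univ, image_eq_range]

/-- Coordinates in an orthonormal basis, with the `i`-th one dropped. -/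
def dropCoord {n : ℕ} (b : OrthonormalBasis (Fin (n + 1)) ℝ (EuclideanSpace ℝ (Fin (n + 1))))
    (i : Fin (n + 1)) (x : EuclideanSpace ℝ (Fin (n + 1))) : Fin n → ℝ :=
  fun j => ⟪b (i.succAbove j), x⟫

section coordinates

variable {n : ℕ} (b : OrthonormalBasis (Fin (n + 1)) ℝ (EuclideanSpace ℝ (Fin (n + 1))))

theorem abs_inner_basis_le_norm (i : Fin (n + 1)) (x : EuclideanSpace ℝ (Fin (n + 1))) :
    |⟪b i, x⟫| ≤ ‖x‖ := by
  simpa using abs_real_inner_le_norm (b i) x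

theorem dist_dropCoord_le (i : Fin (n + 1)) (x y : EuclideanSpace ℝ (Fin (n + 1))) :
    dist (dropCoord b i x) (dropCoord b i y) ≤ dist x y := by
  refine (dist_pi_le_iff dist_nonneg).2 fun j => ?_
  rw [Real.dist_eq, dropCoord, dropCoord, ← inner_sub_right, dist_eq_norm]
  exact abs_inner_basis_le_norm b _ _

theorem dist_le_of_sphere_cap (i : Fin (n + 1)) {s c : ℝ} (hs : s ^ 2 = 1) (hc : 0 < c)
    {x y : EuclideanSpace ℝ (Fin (n + 1))} (hx : ‖x‖ = 1) (hy : ‖y‖ = 1)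
    (hxc : c ≤ s * ⟪b i, x⟫) (hyc : c ≤ s * ⟪b i, y⟫) :
    dist x y ≤ (n / c + n) * dist (dropCoord b i x) (dropCoord b i y) := by
  set δ := dist (dropCoord b i x) (dropCoord b i y)
  have hj (j : Fin n) : |⟪b (i.succAbove j), x⟫ - ⟪b (i.succAbove j), y⟫| ≤ δ := by
    rw [← Real.dist_eq]
    exact dist_le_pi_dist (dropCoord b i x) (dropCoord b i y) j
  have sx := b.sum_sq_inner_right x
  have sy := b.sum_sq_inner_right y
  rw [hx, Fin.sum_univ_succAbove _ i] at sx
  rw [hy, Fin.sum_univ_succAbove _ i] at sy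
  have hsq : |⟪b i, x⟫ ^ 2 - ⟪b i, y⟫ ^ 2| ≤ n * (2 * δ) := by
    have : ⟪b i, x⟫ ^ 2 - ⟪b i, y⟫ ^ 2 =
        ∑ j, (⟪b (i.succAbove j), y⟫ ^ 2 - ⟪b (i.succAbove j), x⟫ ^ 2) := by
      rw [Finset.sum_sub_distrib]; linarith
    rw [this]
    refine (Finset.abs_sum_le_sum_abs _ _).trans ?_
    refine (Finset.sum_le_card_nsmul _ _ (2 * δ) fun j _ => ?_).trans (by simp)
    rw [sq_sub_sq, abs_mul, abs_sub_comm]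
    have h1 := abs_inner_basis_le_norm b (i.succAbove j) x
    have h2 := abs_inner_basis_le_norm b (i.succAbove j) y
    have h3 := abs_add_le ⟪b (i.succAbove j), y⟫ ⟪b (i.succAbove j), x⟫
    exact mul_le_mul (by linarith) (hj j) (abs_nonneg _) (by norm_num)
  have hi : |⟪b i, x⟫ - ⟪b i, y⟫| ≤ n / c * δ := by
    have hs1 : |s| = 1 := by
      rw [← sq_eq_sq₀ (abs_nonneg _) zero_le_one, sq_abs, hs, one_pow]
    have h2c : 2 * c ≤ |⟪b i, x⟫ + ⟪b i, y⟫| := by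
      calc 2 * c ≤ s * (⟪b i, x⟫ + ⟪b i, y⟫) := by linarith
        _ ≤ |s * (⟪b i, x⟫ + ⟪b i, y⟫)| := le_abs_self _
        _ = _ := by rw [abs_mul, hs1, one_mul]
    rw [sq_sub_sq, abs_mul] at hsq
    have := mul_le_mul_of_nonneg_right h2c (abs_nonneg (⟪b i, x⟫ - ⟪b i, y⟫))
    rw [div_mul_eq_mul_div, le_div_iff₀ hc]
    linarith
  calc dist x y = ‖∑ j, ⟪b j, x - y⟫ • b j‖ := by rw [b.sum_repr' (x - y), dist_eq_norm]
    _ ≤ ∑ j, |⟪b j, x⟫ - ⟪b j, y⟫| := by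
        refine (norm_sum_le _ _).trans (Finset.sum_le_sum fun j _ => ?_)
        simp [norm_smul, inner_sub_right]
    _ ≤ n / c * δ + n * δ := by
        rw [Fin.sum_univ_succAbove _ i]
        refine add_le_add hi ((Finset.sum_le_card_nsmul _ _ δ fun j _ => hj j).trans (by simp))
    _ = _ := by ring

theorem exists_inner_basis_ge {x : EuclideanSpace ℝ (Fin (n + 1))} (hx : ‖x‖ = 1) :
    ∃ i, 1 / ((n : ℝ) + 1) ≤ |⟪b i, x⟫| := by
  by_contra! h
  have hn : (0 : ℝ) < n + 1 := by positivity
  have sx := b.sum_sq_inner_right x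
  have : ∑ i, ⟪b i, x⟫ ^ 2 < ∑ _i : Fin (n + 1), 1 / ((n : ℝ) + 1) := by
    refine Finset.sum_lt_sum_of_nonempty Finset.univ_nonempty fun i _ => ?_
    have h1 := abs_inner_basis_le_norm b i x
    rw [hx] at h1
    rw [← sq_abs]
    nlinarith [h i, abs_nonneg ⟪b i, x⟫]
  rw [sx, hx] at this
  simp at this
  field_simp at this
  linarith

end coordinates

theorem volume_box_le {n : ℕ} (i i₀ : Fin (n + 1)) {ε : ℝ} (hε : 0 < ε)
    (hi : i = i₀ → 1 ≤ ((n : ℝ) + 1) * ε) :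
    volume (univ.pi fun j : Fin n =>
      let w := if i.succAbove j = i₀ then ε else 1; Icc (-w) w) ≤
      ENNReal.ofReal (2 ^ n * ((n + 1) * ε)) := by
  rw [volume_pi_pi]
  simp only [Real.volume_Icc]
  rw [← ENNReal.ofReal_prod_of_nonneg (fun j _ => by split_ifs <;> linarith)]
  refine ENNReal.ofReal_le_ofReal ?_
  simp only [sub_neg_eq_add, ← two_mul]
  rw [Finset.prod_mul_distrib, Finset.prod_const, Finset.card_univ, Fintype.card_fin]
  refine mul_le_mul_of_nonneg_left ?_ (by positivity)
  by_cases h : i = i₀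
  · subst h
    simpa using hi rfl
  · obtain ⟨j₀, rfl⟩ := Fin.exists_succAbove_eq (Ne.symm h)
    simp only [Fin.succAbove_right_inj]
    rw [Finset.prod_ite_eq' Finset.univ j₀ (fun _ => ε)]
    simp
    nlinarith [(Nat.cast_nonneg n : (0 : ℝ) ≤ n)]

/-- The surface measure of an equatorial strip of half-width `ε` is `O(ε)`. -/
theorem exists_hausdorffMeasure_strip_le (n : ℕ) :
    ∃ K : ℝ, 0 < K ∧ ∀ e : EuclideanSpace ℝ (Fin (n + 1)), ‖e‖ = 1 → ∀ ε : ℝ, 0 < ε →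
      Measure.hausdorffMeasure (n : ℝ)
        {x : EuclideanSpace ℝ (Fin (n + 1)) | ‖x‖ = 1 ∧ |⟪x, e⟫| < ε} ≤
        ENNReal.ofReal (K * ε) := by
  set c : ℝ := 1 / ((n : ℝ) + 1) with hc
  have hc0 : 0 < c := by positivity
  set L : ℝ≥0 := ⟨n / c + n, by positivity⟩
  have hn1 : (0 : ℝ) < n + 1 := by positivity
  refine ⟨(n + 1) * (2 * ((L : ℝ) ^ n * (2 ^ n * (n + 1)))) + 1, by positivity,
    fun e he ε hε => ?_⟩
  obtain ⟨b, hb⟩ := Orthonormal.exists_orthonormalBasis_extension_of_card_eq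
    (𝕜 := ℝ) (E := EuclideanSpace ℝ (Fin (n + 1))) (ι := Fin (n + 1)) (by simp)
    (v := fun _ => e) (s := {0})
    ⟨fun _ => by simpa using he, fun i j hij => (hij (Subsingleton.elim i j)).elim⟩
  have hb0 : b 0 = e := hb 0 rfl
  set P : Fin (n + 1) → ℝ → Set (EuclideanSpace ℝ (Fin (n + 1))) := fun i s =>
    {x | (‖x‖ = 1 ∧ |⟪x, e⟫| < ε) ∧ c ≤ s * ⟪b i, x⟫}
  have hpiece (i : Fin (n + 1)) (s : ℝ) (hs : s ^ 2 = 1) :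
      Measure.hausdorffMeasure (n : ℝ) (P i s) ≤
        ENNReal.ofReal ((L : ℝ) ^ n * (2 ^ n * ((n + 1) * ε))) := by
    rcases (P i s).eq_empty_or_nonempty with h0 | ⟨x₀, hx₀⟩
    · simp [h0]
    have hi : i = 0 → 1 ≤ ((n : ℝ) + 1) * ε := by
      rintro rfl
      have h1 := hx₀.2
      have h2 := hx₀.1.2
      rw [real_inner_comm, ← hb0] at h2
      have hs1 : |s| = 1 := by
        rw [← sq_eq_sq₀ (abs_nonneg _) zero_le_one, sq_abs, hs, one_pow]
      have h3 := le_abs_self (s * ⟪b 0, x₀⟫)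
      rw [abs_mul, hs1, one_mul] at h3
      have h4 : c ≤ ε := by linarith
      rw [hc, div_le_iff₀ hn1] at h4
      linarith
    refine (hausdorffMeasure_le_image_of_dist_le (f := dropCoord b i) (L := L)
      (Nat.cast_nonneg n) fun x hx y hy =>
        dist_le_of_sphere_cap b i hs hc0 hx.1.1 hy.1.1 hx.2 hy.2).trans ?_
    rw [ENNReal.ofReal_mul (by positivity), ENNReal.ofReal_pow (by positivity),
      ENNReal.ofReal_coe_nnreal, ENNReal.rpow_natCast]
    gcongr
    have hvol : (Measure.hausdorffMeasure (n : ℝ) : Measure (Fin n → ℝ)) = volume := by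
      simpa using hausdorffMeasure_pi_real (ι := Fin n)
    rw [hvol]
    refine (measure_mono ?_).trans (volume_box_le i 0 hε hi)
    rintro _ ⟨x, hx, rfl⟩ j -
    simp only [← abs_le, mem_Icc]
    split_ifs with hj
    · rw [dropCoord, hj, hb0, real_inner_comm]
      exact hx.1.2.le
    · exact (abs_inner_basis_le_norm b _ _).trans hx.1.1.le
  have hcover : {x : EuclideanSpace ℝ (Fin (n + 1)) | ‖x‖ = 1 ∧ |⟪x, e⟫| < ε} ⊆
      ⋃ i ∈ (Finset.univ : Finset (Fin (n + 1))), (P i 1 ∪ P i (-1)) := by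
    intro x hx
    obtain ⟨i, hi⟩ := exists_inner_basis_ge b hx.1
    simp only [Finset.mem_univ, iUnion_true, mem_iUnion]
    refine ⟨i, ?_⟩
    rcases le_abs.1 hi with h | h
    · exact Or.inl ⟨hx, by linarith⟩
    · exact Or.inr ⟨hx, by linarith⟩
  set M : ℝ := (L : ℝ) ^ n * (2 ^ n * ((n + 1) * ε)) with hM
  have hM0 : 0 ≤ M := by positivity
  calc _ ≤ _ := measure_mono hcover
    _ ≤ _ := measure_biUnion_finset_le _ _
    _ ≤ ∑ _i : Fin (n + 1), ENNReal.ofReal (2 * M) := by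
        refine Finset.sum_le_sum fun i _ => (measure_union_le _ _).trans ?_
        rw [two_mul, ENNReal.ofReal_add hM0 hM0]
        exact add_le_add (hpiece i 1 (by norm_num)) (hpiece i (-1) (by norm_num))
    _ = ENNReal.ofReal ((n + 1) * (2 * M)) := by
        rw [Finset.sum_const, Finset.card_univ, Fintype.card_fin, nsmul_eq_mul,
          ENNReal.ofReal_mul hn1.le]
        congr 1
        rw [← Nat.cast_succ, ENNReal.ofReal_natCast]
    _ ≤ _ := by
        refine ENNReal.ofReal_le_ofReal ?_
        rw [hM]
        nlinarith

theorem hausdorffMeasure_sphere_pos (n : ℕ) :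
    0 < Measure.hausdorffMeasure (n : ℝ) {x : EuclideanSpace ℝ (Fin (n + 1)) | ‖x‖ = 1} := by
  set b := EuclideanSpace.basisFun (Fin (n + 1)) ℝ with hb
  have hlip : LipschitzWith 1 (dropCoord b 0) :=
    LipschitzWith.of_dist_le_mul fun x y => by simpa using dist_dropCoord_le b 0 x y
  have h1 := hlip.hausdorffMeasure_image_le (d := (n : ℝ)) (Nat.cast_nonneg n)
    {x : EuclideanSpace ℝ (Fin (n + 1)) | ‖x‖ = 1}
  have hvol : (Measure.hausdorffMeasure (n : ℝ) : Measure (Fin n → ℝ)) = volume := by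
    simpa using hausdorffMeasure_pi_real (ι := Fin n)
  rw [hvol] at h1
  simp only [ENNReal.coe_one, ENNReal.one_rpow, one_mul] at h1
  refine lt_of_lt_of_le ?_ h1
  have hn1 : (0 : ℝ) < n + 1 := by positivity
  have hball : Metric.ball (0 : Fin n → ℝ) (1 / (n + 1)) ⊆
      dropCoord b 0 '' {x | ‖x‖ = 1} := by
    intro y hy
    rw [mem_ball_zero_iff] at hy
    have hsum : ∑ j, y j ^ 2 ≤ 1 := by
      refine (Finset.sum_le_card_nsmul _ _ (1 / ((n : ℝ) + 1)) fun j _ => ?_).trans ?_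
      · have h2 := (norm_le_pi_norm y j).trans hy.le
        rw [Real.norm_eq_abs] at h2
        have h3 : 1 / ((n : ℝ) + 1) ≤ 1 := by
          rw [div_le_one hn1]; linarith [(Nat.cast_nonneg n : (0 : ℝ) ≤ n)]
        rw [← sq_abs]
        nlinarith [abs_nonneg (y j)]
      · simp
        rw [← div_eq_mul_inv, div_le_one hn1]
        linarith
    refine ⟨WithLp.toLp 2 (Fin.cons (√(1 - ∑ j, y j ^ 2)) y : Fin (n + 1) → ℝ), ?_, ?_⟩
    · rw [mem_ofPred_eq, EuclideanSpace.norm_eq, Real.sqrt_eq_one, Fin.sum_univ_succ]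
      simp [Real.sq_sqrt (sub_nonneg.2 hsum)]
    · funext j
      simp [dropCoord, hb, EuclideanSpace.inner_single_left]
  exact (Metric.measure_ball_pos volume _ (by positivity)).trans_le (measure_mono hball)

/-- The number of nonzero dual lattice vectors of norm at most `R` is `O(R ^ d)`. -/
theorem exists_ncard_Theta_le (B : Basis (Fin d) ℝ (EuclideanSpace ℝ (Fin d))) :
    ∃ M : ℝ, 0 < M ∧ ∀ R : ℝ, 1 ≤ R →
      (Theta B R).Finite ∧ ((Theta B R).ncard : ℝ) ≤ (M * R) ^ d := by
  set A : ℝ := ∑ i, ‖B i‖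
  have hA0 : 0 ≤ A := by positivity
  refine ⟨2 * A + 1, by positivity, fun R hR => ?_⟩
  have hBA (i : Fin d) : ‖B i‖ ≤ A :=
    Finset.single_le_sum (f := fun i => ‖B i‖) (fun _ _ => norm_nonneg _) (Finset.mem_univ i)
  have hk (θ : EuclideanSpace ℝ (Fin d)) (i : Fin d) :
      ∃ k : ℤ, θ ∈ dualLattice B → ⟪θ, B i⟫ = 2 * Real.pi * k := by
    by_cases h : θ ∈ dualLattice B
    · obtain ⟨k, hk⟩ := h (B i) (subset_span (mem_range_self i))
      exact ⟨k, fun _ => hk⟩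
    · exact ⟨0, fun h' => (h h').elim⟩
  choose k hk using hk
  set N : ℕ := ⌊A * R⌋₊
  set box : Finset (Fin d → ℤ) := Fintype.piFinset fun _ => Finset.Icc (-(N : ℤ)) N with hbox
  have hmaps : ∀ θ ∈ Theta B R, k θ ∈ (box : Set (Fin d → ℤ)) := by
    intro θ hθ
    simp only [hbox, Finset.mem_coe, Fintype.mem_piFinset, Finset.mem_Icc, ← abs_le]
    intro i
    have h1 := abs_real_inner_le_norm θ (B i)
    rw [hk θ i hθ.1, abs_mul, abs_of_pos Real.two_pi_pos] at h1
    have h2 : ‖θ‖ * ‖B i‖ ≤ R * A :=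
      mul_le_mul hθ.2.2 (hBA i) (norm_nonneg _) (by linarith)
    have h3 : |(k θ i : ℝ)| ≤ A * R := by
      nlinarith [abs_nonneg (k θ i : ℝ), Real.pi_gt_three]
    have h4 : (k θ i).natAbs ≤ N := Nat.le_floor (by rwa [Nat.cast_natAbs, Int.cast_abs])
    rw [Int.abs_eq_natAbs]
    exact_mod_cast h4
  have hinj : InjOn k (Theta B R) := by
    intro θ hθ θ' hθ' h
    refine InnerProductSpace.ext_inner_right_basis B fun i => ?_
    rw [hk θ i hθ.1, hk θ' i hθ'.1, h]
  refine ⟨Set.Finite.of_injOn hmaps hinj box.finite_toSet, ?_⟩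
  have hcard : (Theta B R).ncard ≤ (2 * N + 1) ^ d := by
    refine (ncard_le_ncard_of_injOn k hmaps hinj box.finite_toSet).trans_eq ?_
    rw [ncard_coe_finset, hbox, Fintype.card_piFinset_const, Int.card_Icc]
    congr 1
    omega
  calc ((Theta B R).ncard : ℝ) ≤ (2 * N + 1) ^ d := by exact_mod_cast hcard
    _ ≤ _ := by
      have := Nat.floor_le (mul_nonneg hA0 (zero_le_one.trans hR))
      gcongr
      linarith

/-- The union of the resonant strips over `Θ_R` has surface measure `O(R ^ d * ε)`. -/
theorem exists_hausdorffMeasure_iUnion_strip_le (n : ℕ)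
    (B : Basis (Fin (n + 1)) ℝ (EuclideanSpace ℝ (Fin (n + 1)))) :
    ∃ K : ℝ, 0 < K ∧ ∀ R ε : ℝ, 1 ≤ R → 0 < ε →
      Measure.hausdorffMeasure (n : ℝ) (⋃ θ ∈ Theta B R,
        {Ω : EuclideanSpace ℝ (Fin (n + 1)) | ‖Ω‖ = 1 ∧ |⟪Ω, θ⟫| / ‖θ‖ < ε}) ≤
        ENNReal.ofReal (K * (R ^ (n + 1) * ε)) := by
  obtain ⟨K, hK, hstrip⟩ := exists_hausdorffMeasure_strip_le n
  obtain ⟨M, hM, hcount⟩ := exists_ncard_Theta_le B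
  refine ⟨M ^ (n + 1) * K, by positivity, fun R ε hR hε => ?_⟩
  obtain ⟨hfin, hcard⟩ := hcount R hR
  have hone (θ : EuclideanSpace ℝ (Fin (n + 1))) (hθ : θ ∈ Theta B R) :
      Measure.hausdorffMeasure (n : ℝ)
        {Ω : EuclideanSpace ℝ (Fin (n + 1)) | ‖Ω‖ = 1 ∧ |⟪Ω, θ⟫| / ‖θ‖ < ε} ≤
        ENNReal.ofReal (K * ε) := by
    have h := hstrip (‖θ‖⁻¹ • θ) (norm_smul_inv_norm (𝕜 := ℝ) hθ.2.1) ε hε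
    simpa only [inner_smul_right, abs_mul, abs_inv, abs_norm, div_eq_inv_mul] using h
  have hset : (⋃ θ ∈ Theta B R,
      {Ω : EuclideanSpace ℝ (Fin (n + 1)) | ‖Ω‖ = 1 ∧ |⟪Ω, θ⟫| / ‖θ‖ < ε}) =
      ⋃ θ ∈ hfin.toFinset,
        {Ω : EuclideanSpace ℝ (Fin (n + 1)) | ‖Ω‖ = 1 ∧ |⟪Ω, θ⟫| / ‖θ‖ < ε} := by
    simp only [Finite.mem_toFinset]
  rw [hset]
  refine (measure_biUnion_finset_le _ _).trans ?_
  refine (Finset.sum_le_card_nsmul _ _ _ fun θ hθ => hone θ (hfin.mem_toFinset.1 hθ)).trans ?_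
  rw [← ncard_eq_toFinset_card _ hfin, nsmul_eq_mul, ← ENNReal.ofReal_natCast,
    ← ENNReal.ofReal_mul (Nat.cast_nonneg _)]
  refine ENNReal.ofReal_le_ofReal ?_
  calc ((Theta B R).ncard : ℝ) * (K * ε) ≤ (M * R) ^ (n + 1) * (K * ε) := by gcongr
    _ = _ := by ring

theorem hausdorffMeasure_sphere_lt_top (n : ℕ) :
    Measure.hausdorffMeasure (n : ℝ) {x : EuclideanSpace ℝ (Fin (n + 1)) | ‖x‖ = 1} < ⊤ := by
  obtain ⟨K, -, hK⟩ := exists_hausdorffMeasure_strip_le n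
  have he : ‖EuclideanSpace.single (0 : Fin (n + 1)) (1 : ℝ)‖ = 1 := by simp
  refine (measure_mono ?_).trans_lt ((hK _ he 2 two_pos).trans_lt ENNReal.ofReal_lt_top)
  intro x hx
  have hx1 : ‖x‖ = 1 := hx
  refine ⟨hx1, (abs_real_inner_le_norm _ _).trans_lt ?_⟩
  rw [he, hx1]
  norm_num

end

/-- Lemma 5.11: with σ the (d−1)-dimensional surface (Hausdorff) measure on
the unit sphere, there are 0 < c ≤ C depending only on d and Γ such that for large ρ,
σ(S(ρ)) ≤ C ρ^{α_d − 1} and c ≤ σ(T(ρ)) ≤ C, where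
S(θ;ρ) = {Ω ∈ S^{d−1} : |Ω·θ|/|θ| < 16ρ^{α_{d−1}−1}}, S(ρ) = ∪_{θ∈Θ_r} S(θ;ρ) and
T(ρ) = S^{d−1} \ S(ρ). -/
theorem sphere_resonant_measure_bounds
    (d : ℕ) (hd : 2 ≤ d) (B : Basis (Fin d) ℝ (EuclideanSpace ℝ (Fin d))) :
    ∃ c C : ℝ, 0 < c ∧ c ≤ C ∧ ∀ (κ : ℝ) (α : ℕ → ℝ), ∃ ρ₀ : ℝ,
      ∀ ρ r : ℝ, ρ₀ ≤ ρ → GoodParams B ρ r κ α →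
      (MeasureTheory.Measure.hausdorffMeasure ((d : ℝ) - 1)
          (⋃ θ ∈ Theta B r,
            {Ω : EuclideanSpace ℝ (Fin d) | ‖Ω‖ = 1 ∧
              |⟪Ω, θ⟫| / ‖θ‖ < 16 * ρ ^ (α (d - 1) - 1)})
        ≤ ENNReal.ofReal (C * ρ ^ (α d - 1))) ∧
      (ENNReal.ofReal c ≤
        MeasureTheory.Measure.hausdorffMeasure ((d : ℝ) - 1)
          ({Ω : EuclideanSpace ℝ (Fin d) | ‖Ω‖ = 1} \
            ⋃ θ ∈ Theta B r,
              {Ω : EuclideanSpace ℝ (Fin d) | ‖Ω‖ = 1 ∧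
                |⟪Ω, θ⟫| / ‖θ‖ < 16 * ρ ^ (α (d - 1) - 1)})) ∧
      (MeasureTheory.Measure.hausdorffMeasure ((d : ℝ) - 1)
          ({Ω : EuclideanSpace ℝ (Fin d) | ‖Ω‖ = 1} \
            ⋃ θ ∈ Theta B r,
              {Ω : EuclideanSpace ℝ (Fin d) | ‖Ω‖ = 1 ∧
                |⟪Ω, θ⟫| / ‖θ‖ < 16 * ρ ^ (α (d - 1) - 1)})
        ≤ ENNReal.ofReal C) := by
  obtain ⟨n, rfl⟩ : ∃ n, d = n + 1 := ⟨d - 1, by omega⟩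
  have hdim : ((n + 1 : ℕ) : ℝ) - 1 = n := by push_cast; ring
  simp only [hdim, Nat.add_sub_cancel]
  obtain ⟨K, hK, hunion⟩ := exists_hausdorffMeasure_iUnion_strip_le n B
  set S : Set (EuclideanSpace ℝ (Fin (n + 1))) := {Ω | ‖Ω‖ = 1}
  have hSfin : Measure.hausdorffMeasure (n : ℝ) S ≠ ⊤ := (hausdorffMeasure_sphere_lt_top n).ne
  set m : ℝ := (Measure.hausdorffMeasure (n : ℝ) S).toReal
  have hm0 : 0 < m := ENNReal.toReal_pos (hausdorffMeasure_sphere_pos n).ne' hSfin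
  have hSm : Measure.hausdorffMeasure (n : ℝ) S = ENNReal.ofReal m :=
    (ENNReal.ofReal_toReal hSfin).symm
  set C : ℝ := max (16 * K) m
  have hC0 : 0 < C := hm0.trans_le (le_max_right _ _)
  refine ⟨m / 2, C, by positivity, by linarith [le_max_right (16 * K) m], fun κ α => ?_⟩
  obtain ⟨ρ₀, hρ₀⟩ : ∃ ρ₀ : ℝ, ∀ ρ ≥ ρ₀, α (n + 1) < 1 → C * ρ ^ (α (n + 1) - 1) < m / 2 := by
    by_cases h : α (n + 1) < 1
    · have ht := (tendsto_rpow_neg_atTop (sub_pos.2 h)).const_mul C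
      rw [mul_zero, neg_sub] at ht
      obtain ⟨ρ₀, h₀⟩ := Filter.eventually_atTop.1
        (ht.eventually_lt_const (half_pos hm0))
      exact ⟨ρ₀, fun ρ hρ _ => h₀ ρ hρ⟩
    · exact ⟨0, fun _ _ h' => (h h').elim⟩
  refine ⟨ρ₀, fun ρ r hρ hgood => ?_⟩
  obtain ⟨hρ1, hκ, -, hα, hαd, hr, -⟩ := hgood
  have hρpos : 0 < ρ := by linarith
  have hres : Measure.hausdorffMeasure (n : ℝ) (⋃ θ ∈ Theta B r,
      {Ω : EuclideanSpace ℝ (Fin (n + 1)) | ‖Ω‖ = 1 ∧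
        |⟪Ω, θ⟫| / ‖θ‖ < 16 * ρ ^ (α n - 1)}) ≤ ENNReal.ofReal (C * ρ ^ (α (n + 1) - 1)) := by
    have hsub : Theta B r ⊆ Theta B (ρ ^ κ) := fun θ hθ => ⟨hθ.1, hθ.2.1, hθ.2.2.trans hr⟩
    refine (measure_mono (biUnion_subset_biUnion_left hsub)).trans ?_
    refine (hunion (ρ ^ κ) _ (Real.one_le_rpow hρ1 hκ.le) (by positivity)).trans ?_
    refine ENNReal.ofReal_le_ofReal ?_
    have hpow : (ρ ^ κ) ^ (n + 1) * ρ ^ (α n - 1) ≤ ρ ^ (α (n + 1) - 1) := by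
      rw [← Real.rpow_mul_natCast hρpos.le, ← Real.rpow_add hρpos]
      refine Real.rpow_le_rpow_of_exponent_le hρ1 ?_
      have h1 := hα n (Nat.lt_succ_self n)
      have h2 : (1 : ℝ) ≤ (n + 1 : ℕ) := by exact_mod_cast Nat.succ_pos n
      have h3 : ((n + 1 : ℕ) : ℝ) ≤ 2 * ((n + 1 : ℕ) : ℝ) ^ 2 := by nlinarith
      have h4 := mul_le_mul_of_nonneg_left h3 hκ.le
      linarith
    calc K * ((ρ ^ κ) ^ (n + 1) * (16 * ρ ^ (α n - 1)))
        = 16 * K * ((ρ ^ κ) ^ (n + 1) * ρ ^ (α n - 1)) := by ring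
      _ ≤ C * ρ ^ (α (n + 1) - 1) :=
        mul_le_mul (le_max_left _ _) hpow (by positivity) hC0.le
  refine ⟨hres, ?_, ?_⟩
  · refine le_trans ?_ le_measure_sdiff
    rw [hSm]
    refine le_trans ?_ (tsub_le_tsub_left (hres.trans (ENNReal.ofReal_le_ofReal
      (hρ₀ ρ hρ hαd).le)) _)
    rw [← ENNReal.ofReal_sub _ (by positivity), sub_half]
  · refine (measure_mono sdiff_subset).trans ?_
    rw [hSm]
    exact ENNReal.ofReal_le_ofReal (le_max_right _ _)
end
end

section
/- Fix d ≥ 2, exponents γ < 2 and σ < 1, and constants A > 0 and K ≥ 1. There exist constants c > 0, c₂ ≥ 1 and ρ₀ ≥ 1, depending only on d, γ, σ, A, K, such that the following holds for all ρ ≥ ρ₀. Let δ ∈ (0, 1], let b ∈ ℝ^d with c₂ ≤ |b| ≤ Kρ, and let G₁, G₂ : ℝ^d → ℝ be continuous functions satisfying, for all ξ ∈ ℝ^d, |G_j(ξ)| ≤ A ρ^γ for j = 1, 2 and |G₁(ξ) − G₂(ξ − b)| ≤ A |b| ρ^σ. Set g_j(ξ) = |ξ|² + G_j(ξ) and 𝒳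 = 𝒜(g₁; ρ, δ) ∩ (𝒜(g₂; ρ, δ) + b). Then every ξ ∈ 𝒳 satisfies ξ ≠ 0, ξ ≠ b, and the angle φ(ξ, ξ − b) between ξ and ξ − b satisfies φ(ξ, ξ − b) ≥ c |b| / ρ. -/
noncomputable section

open Set Submodule Module MeasureTheory Relation
open scoped RealInnerProductSpace

variable {d : ℕ}

/-- A power of exponent `s < t` is eventually dominated by any positive multiple of `x ^ t`. -/
lemma eventually_mul_rpow_le_mul_rpow {s t : ℝ} (hst : s < t) (A : ℝ) {ε : ℝ} (hε : 0 < ε) :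
    ∀ᶠ x : ℝ in Filter.atTop, A * x ^ s ≤ ε * x ^ t := by
  have hlim : Filter.Tendsto (fun x : ℝ => A * x ^ (-(t - s))) Filter.atTop (nhds (A * 0)) :=
    (tendsto_rpow_neg_atTop (sub_pos.2 hst)).const_mul A
  rw [mul_zero] at hlim
  filter_upwards [hlim.eventually_le_const hε, Filter.eventually_gt_atTop 0] with x hx hx0
  have hsplit : x ^ s = x ^ (-(t - s)) * x ^ t := by
    rw [← Real.rpow_add hx0]
    ring_nf
  rw [hsplit, ← mul_assoc]
  exact mul_le_mul_of_nonneg_right hx (Real.rpow_nonneg hx0.le t)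

/-- The distance between two points is controlled by the difference of their norms and the
angle between them. -/
lemma norm_sub_sq_le_sq_sub_norm_add_mul_angle_sq {V : Type*} [NormedAddCommGroup V]
    [InnerProductSpace ℝ V] (x y : V) :
    ‖x - y‖ ^ 2 ≤ (‖x‖ - ‖y‖) ^ 2 + ‖x‖ * ‖y‖ * InnerProductGeometry.angle x y ^ 2 := by
  have hcos := Real.one_sub_sq_div_two_le_cos (x := InnerProductGeometry.angle x y)
  have hprod : 0 ≤ ‖x‖ * ‖y‖ := by positivity
  rw [norm_sub_sq_real, ← InnerProductGeometry.cos_angle_mul_norm_mul_norm x y]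
  nlinarith [mul_le_mul_of_nonneg_right hcos hprod]

/-- Lemma 9.1: under the stated conditions on G₁, G₂, every point ξ of
𝒳 = 𝒜(g₁;ρ,δ) ∩ (𝒜(g₂;ρ,δ) + b) is nonzero, different from b, and the angle between
ξ and ξ − b is at least c|b|/ρ. -/
theorem angle_lower_bound_on_intersection
    (d : ℕ) (hd : 2 ≤ d) (γ σ A K : ℝ)
    (hγ : γ < 2) (hσ : σ < 1) (hA : 0 < A) (hK : 1 ≤ K) :
    ∃ c c₂ ρ₀ : ℝ, 0 < c ∧ 1 ≤ c₂ ∧ 1 ≤ ρ₀ ∧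
      ∀ ρ : ℝ, ρ₀ ≤ ρ →
      ∀ δ : ℝ, 0 < δ → δ ≤ 1 →
      ∀ b : EuclideanSpace ℝ (Fin d), c₂ ≤ ‖b‖ → ‖b‖ ≤ K * ρ →
      ∀ G₁ G₂ : EuclideanSpace ℝ (Fin d) → ℝ, Continuous G₁ → Continuous G₂ →
        (∀ ξ, |G₁ ξ| ≤ A * ρ ^ γ) → (∀ ξ, |G₂ ξ| ≤ A * ρ ^ γ) →
        (∀ ξ, |G₁ ξ - G₂ (ξ - b)| ≤ A * ‖b‖ * ρ ^ σ) →
      ∀ ξ : EuclideanSpace ℝ (Fin d),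
        ρ ^ 2 - δ ≤ ‖ξ‖ ^ 2 + G₁ ξ → ‖ξ‖ ^ 2 + G₁ ξ ≤ ρ ^ 2 + δ →
        ρ ^ 2 - δ ≤ ‖ξ - b‖ ^ 2 + G₂ (ξ - b) → ‖ξ - b‖ ^ 2 + G₂ (ξ - b) ≤ ρ ^ 2 + δ →
        ξ ≠ 0 ∧ ξ ≠ b ∧ c * ‖b‖ / ρ ≤ InnerProductGeometry.angle ξ (ξ - b) := by
  obtain ⟨ρ₁, hρ₁⟩ := Filter.eventually_atTop.1
    ((eventually_mul_rpow_le_mul_rpow hγ A (ε := 1 / 2) (by norm_num)).and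
      (eventually_mul_rpow_le_mul_rpow hσ A (ε := 1 / 4) (by norm_num)))
  refine ⟨1 / 2, 1, max ρ₁ 8, by norm_num, le_rfl, le_trans (by norm_num) (le_max_right _ _), ?_⟩
  intro ρ hρ δ _ hδ b hb _ G₁ G₂ _ _ hG₁ hG₂ hG ξ h₁ h₂ h₃ h₄
  have hρ8 : 8 ≤ ρ := (le_max_right _ _).trans hρ
  obtain ⟨hAγ, hAσ⟩ := hρ₁ ρ ((le_max_left _ _).trans hρ)
  rw [Real.rpow_two] at hAγ
  rw [Real.rpow_one] at hAσ
  have hG₁ξ := abs_le.1 (hG₁ ξ)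
  have hG₂ξ := abs_le.1 (hG₂ (ξ - b))
  have hGξ := abs_le.1 (hG ξ)
  have hangle := norm_sub_sq_le_sq_sub_norm_add_mul_angle_sq ξ (ξ - b)
  rw [sub_sub_cancel] at hangle
  have hφ := InnerProductGeometry.angle_nonneg ξ (ξ - b)
  have hρ_sq : 64 ≤ ρ ^ 2 := by nlinarith
  have hξ := norm_nonneg ξ
  have hξb := norm_nonneg (ξ - b)
  have hξlow : ρ / 2 ≤ ‖ξ‖ := by
    refine (sq_le_sq₀ (by linarith) hξ).1 ?_
    linarith
  have hξblow : ρ / 2 ≤ ‖ξ - b‖ := by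
    refine (sq_le_sq₀ (by linarith) hξb).1 ?_
    linarith
  refine ⟨norm_pos_iff.1 (by linarith), sub_ne_zero.1 (norm_pos_iff.1 (by linarith)), ?_⟩
  generalize InnerProductGeometry.angle ξ (ξ - b) = φ at *
  generalize ‖ξ - b‖ = q at *
  generalize ‖ξ‖ = p at *
  generalize ‖b‖ = β at *
  have hGβ : A * β * ρ ^ σ ≤ β * ρ / 4 := by
    linarith [mul_le_mul_of_nonneg_left hAσ (zero_le_one.trans hb)]
  have hβρ : 2 ≤ β * ρ / 4 := by
    linarith [le_mul_of_one_le_left (zero_le_one.trans (by linarith : 1 ≤ ρ)) hb]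
  have hdiff : |p - q| ≤ β / 2 := by
    have hsq_diff : |p - q| * (p + q) ≤ β / 2 * ρ := by
      rw [← abs_of_nonneg (add_nonneg hξ hξb), ← abs_mul, abs_le]
      constructor <;> linarith
    have hsum : |p - q| * ρ ≤ |p - q| * (p + q) :=
      mul_le_mul_of_nonneg_left (by linarith) (abs_nonneg _)
    exact le_of_mul_le_mul_right (hsum.trans hsq_diff) (by linarith)
  have hdiff_sq : (p - q) ^ 2 ≤ (β / 2) ^ 2 := sq_le_sq' (abs_le.1 hdiff).1 (abs_le.1 hdiff).2
  have hprod : p * q ≤ 7 / 4 * ρ ^ 2 := by linarith [two_mul_le_add_sq p q]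
  have hsq : (1 / 2 * β) ^ 2 ≤ (φ * ρ) ^ 2 := by
    linarith [mul_le_mul_of_nonneg_right hprod (sq_nonneg φ), sq_nonneg β]
  rw [div_le_iff₀ (by linarith)]
  exact (sq_le_sq₀ (by linarith) (mul_nonneg hφ (by linarith))).1 hsq
end
end

section
/- Fix d ≥ 2, m > 0, exponents γ < 2m, σ < 2m − 1, ω < 2m − 2, and constants A > 0, K ≥ 1, ε > 0. There exist constants ε₀ > 0, C > 0, c₂ ≥ 1 and ρ₀ ≥ 1, depending only on d, m, γ, σ, ω, A, K, ε, such that the following holds for all ρ ≥ ρ₀. Let δ > 0 satisfy δ ρ^{2−2m+2ε} ≤ ε₀, let b ∈ ℝ^d with c₂ ≤ |b| ≤ Kρ, and let G₁, G₂ : ℝ^d → ℝ be twice continuously differentiable functions satisfying, for all ξ ∈ ℝ^d and j = 1, 2: |G_j(ξ)| ≤ A ρ^γ, |∇G_j(ξ)| ≤ A ρ^σ, |∇²G_j(ξ)| ≤ A ρ^ω, |G₁(ξ) − G₂(ξ − b)| ≤ A |b| ρ^σ, and |∇G₁(ξ) − ∇G₂(ξ − b)| ≤ A |b| ρ^ω.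 Set g_j(ξ) = |ξ|^{2m} + G_j(ξ) and 𝒳 = 𝒜(g₁; ρ, δ) ∩ (𝒜(g₂; ρ, δ) + b). Then the Lebesgue measure of 𝒳 satisfies vol(𝒳) ≤ C (δ² ρ^{4−4m+d+6ε} + δ ρ^{1−2m−ε(d−1)}). -/
noncomputable section

open Set Submodule Module MeasureTheory Relation
open scoped RealInnerProductSpace

variable {d : ℕ}

/-- A power function is Lipschitz on a compact interval of positive reals. -/
lemma exists_abs_rpow_sub_le (p : ℝ) {a b : ℝ} (ha : 0 < a) :
    ∃ L : ℝ, 0 ≤ L ∧ ∀ u ∈ Icc a b, ∀ v ∈ Icc a b, |u ^ p - v ^ p| ≤ L * |u - v| := by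
  have hc : ContDiffOn ℝ 1 (fun u : ℝ => u ^ p) (Icc a b) := fun u hu =>
    (Real.contDiffAt_rpow_const_of_ne (ha.trans_le hu.1).ne').contDiffWithinAt
  obtain ⟨L, hL⟩ := hc.exists_lipschitzOnWith one_ne_zero (convex_Icc a b) isCompact_Icc
  refine ⟨L, L.2, fun u hu v hv => ?_⟩
  simpa [Real.dist_eq] using hL.dist_le_mul u hu v hv

/-- Quantitative control, with a single constant `L`, of the powers of a real number in
`[1/4, 4]` that occur in the gradient of `‖x‖ ^ s`. -/
structure RpowBounds (s L : ℝ) : Prop where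
  one_le : 1 ≤ L
  abs_sub_le : ∀ u ∈ Icc (1 / 4 : ℝ) 4, ∀ v ∈ Icc (1 / 4 : ℝ) 4, |u - v| ≤ L * |u ^ s - v ^ s|
  abs_rpow_sub_two_sub_le : ∀ u ∈ Icc (1 / 4 : ℝ) 4, ∀ v ∈ Icc (1 / 4 : ℝ) 4,
    |u ^ (s - 2) - v ^ (s - 2)| ≤ L * |u - v|
  abs_rpow_two_sub_sub_le : ∀ u ∈ Icc (1 / 4 : ℝ) 4, ∀ v ∈ Icc (1 / 4 : ℝ) 4,
    |u ^ (2 - s) - v ^ (2 - s)| ≤ L * |u - v|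
  rpow_sub_two_le : ∀ u ∈ Icc (1 / 4 : ℝ) 4, u ^ (s - 2) ≤ L
  rpow_two_sub_le : ∀ u ∈ Icc (1 / 4 : ℝ) 4, u ^ (2 - s) ≤ L

lemma exists_rpowBounds {s : ℝ} (hs : 0 < s) : ∃ L, RpowBounds s L := by
  obtain ⟨L₁, h₁, H₁⟩ := exists_abs_rpow_sub_le (b := (4 : ℝ) ^ s) (1 / s)
    (Real.rpow_pos_of_pos (show (0 : ℝ) < 1 / 4 by norm_num) s)
  obtain ⟨L₂, h₂, H₂⟩ := exists_abs_rpow_sub_le (a := 1 / 4) (b := 4) (s - 2) (by norm_num)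
  obtain ⟨L₃, h₃, H₃⟩ := exists_abs_rpow_sub_le (a := 1 / 4) (b := 4) (2 - s) (by norm_num)
  have one_mem : (1 : ℝ) ∈ Icc (1 / 4 : ℝ) 4 := by norm_num
  have key : ∀ (p M : ℝ), 0 ≤ M → (∀ u ∈ Icc (1 / 4 : ℝ) 4, ∀ v ∈ Icc (1 / 4 : ℝ) 4,
      |u ^ p - v ^ p| ≤ M * |u - v|) → ∀ u ∈ Icc (1 / 4 : ℝ) 4, u ^ p ≤ 1 + 3 * M := by
    intro p M hM H u hu
    have h := H u hu 1 one_mem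
    rw [Real.one_rpow] at h
    have h' : |u - 1| ≤ 3 := abs_le.2 ⟨by linarith [hu.1], by linarith [hu.2]⟩
    have := mul_le_mul_of_nonneg_left h' hM
    linarith [le_abs_self (u ^ p - 1)]
  refine ⟨1 + L₁ + 3 * L₂ + 3 * L₃, by linarith, fun u hu v hv => ?_, fun u hu v hv => ?_,
    fun u hu v hv => ?_, fun u hu => ?_, fun u hu => ?_⟩
  · have hpow : ∀ w ∈ Icc (1 / 4 : ℝ) 4,
        w ^ s ∈ Icc ((1 / 4 : ℝ) ^ s) ((4 : ℝ) ^ s) ∧ (w ^ s) ^ (1 / s) = w := by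
      intro w hw
      have hw0 : (0 : ℝ) ≤ w := by linarith [hw.1]
      refine ⟨⟨Real.rpow_le_rpow (by norm_num) hw.1 hs.le,
        Real.rpow_le_rpow hw0 hw.2 hs.le⟩, ?_⟩
      rw [← Real.rpow_mul hw0, mul_one_div_cancel hs.ne', Real.rpow_one]
    have h := H₁ _ (hpow u hu).1 _ (hpow v hv).1
    rw [(hpow u hu).2, (hpow v hv).2] at h
    exact h.trans (mul_le_mul_of_nonneg_right (by linarith) (abs_nonneg _))
  · exact (H₂ u hu v hv).trans (mul_le_mul_of_nonneg_right (by linarith) (abs_nonneg _))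
  · exact (H₃ u hu v hv).trans (mul_le_mul_of_nonneg_right (by linarith) (abs_nonneg _))
  · linarith [key _ _ h₂ H₂ u hu]
  · linarith [key _ _ h₃ H₃ u hu]

section InnerProductSpace

variable {E : Type*} [NormedAddCommGroup E] [InnerProductSpace ℝ E]

/-- For vectors close to the unit sphere, normalising small perturbations `y + e`, `z + e'`
changes the difference `y - z` only slightly, provided `‖y‖` and `‖z‖` are close. -/
lemma norm_normalize_add_sub_normalize_add_sub_le {y z e e' : E} {k τ : ℝ} (hk0 : 0 ≤ k)
    (hk : k ≤ 1 / 40) (hτ : 0 ≤ τ) (hy : |‖y‖ - 1| ≤ k) (hz : |‖z‖ - 1| ≤ k)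
    (he : ‖e‖ ≤ k) (he' : ‖e'‖ ≤ k) (hee : ‖e - e'‖ ≤ k * ‖y - z‖)
    (hyz : |‖y‖ - ‖z‖| ≤ k * ‖y - z‖ + τ) :
    ‖(‖y + e‖⁻¹ • (y + e) - ‖z + e'‖⁻¹ • (z + e')) - (y - z)‖ ≤ 10 * (k * ‖y - z‖ + τ) := by
  set D := ‖y - z‖ with hD
  have hD0 : 0 ≤ D := norm_nonneg _
  have hkD : 0 ≤ k * D := mul_nonneg hk0 hD0
  rw [abs_le] at hy hz
  set f := ‖y + e‖ with hf
  set f' := ‖z + e'‖ with hf'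
  have hf1 : |f - 1| ≤ 2 * k := by
    have := abs_norm_sub_norm_le (y + e) y
    rw [add_sub_cancel_left, abs_le] at this
    exact abs_le.2 ⟨by linarith, by linarith⟩
  have hf1' : |f' - 1| ≤ 2 * k := by
    have := abs_norm_sub_norm_le (z + e') z
    rw [add_sub_cancel_left, abs_le] at this
    exact abs_le.2 ⟨by linarith, by linarith⟩
  have hfl := abs_le.1 hf1
  have hfl' := abs_le.1 hf1'
  have hfpos : 0 < f := by linarith
  have hfpos' : 0 < f' := by linarith
  -- difference of squared norms
  have hsq : f ^ 2 - f' ^ 2 = (‖y‖ - ‖z‖) * (‖y‖ + ‖z‖) + ⟪y - z, e + e'⟫ +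
      ⟪e - e', (y + e) + (z + e')⟫ := by
    rw [hf, hf', ← real_inner_self_eq_norm_sq, ← real_inner_self_eq_norm_sq,
      show (‖y‖ - ‖z‖) * (‖y‖ + ‖z‖) = ⟪y, y⟫ - ⟪z, z⟫ by
        rw [real_inner_self_eq_norm_sq, real_inner_self_eq_norm_sq]; ring]
    simp only [inner_add_left, inner_add_right, inner_sub_left]
    rw [real_inner_comm e y, real_inner_comm e' z, real_inner_comm z e, real_inner_comm e' y,
      real_inner_comm e' e]
    ring
  have h1 : |(‖y‖ - ‖z‖) * (‖y‖ + ‖z‖)| ≤ (k * D + τ) * 2.05 := by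
    rw [abs_mul]
    refine mul_le_mul hyz ?_ (abs_nonneg _) (by linarith)
    rw [abs_of_nonneg (by positivity)]
    linarith
  have h2 : |⟪y - z, e + e'⟫| ≤ D * (2 * k) :=
    (abs_real_inner_le_norm _ _).trans
      (mul_le_mul_of_nonneg_left ((norm_add_le _ _).trans (by linarith)) hD0)
  have h3 : |⟪e - e', (y + e) + (z + e')⟫| ≤ (k * D) * 2.1 :=
    (abs_real_inner_le_norm _ _).trans
      (mul_le_mul hee ((norm_add_le _ _).trans (by linarith)) (norm_nonneg _) hkD)
  have hdiff : |f - f'| ≤ 3.3 * (k * D + τ) := by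
    have h4 : |f - f'| * (f + f') ≤ 6.15 * (k * D) + 2.05 * τ := by
      have : |f - f'| * (f + f') = |f ^ 2 - f' ^ 2| := by
        rw [← abs_of_pos (add_pos hfpos hfpos'), ← abs_mul]
        ring_nf
      rw [this, hsq]
      refine (abs_add_three _ _ _).trans ?_
      linarith
    have h5 : |f - f'| * 1.9 ≤ |f - f'| * (f + f') :=
      mul_le_mul_of_nonneg_left (by linarith) (abs_nonneg _)
    linarith
  have hinv : f⁻¹ ≤ 1.06 := by
    rw [inv_le_comm₀ hfpos (by norm_num)]
    have : (1.06 : ℝ)⁻¹ ≤ 0.95 := by norm_num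
    linarith
  have hinv0 : 0 < f⁻¹ := inv_pos.2 hfpos
  have hdecomp : (f⁻¹ • (y + e) - f'⁻¹ • (z + e')) - (y - z) =
      (f⁻¹ * (1 - f)) • (y - z) + f⁻¹ • (e - e') +
        (f⁻¹ * (f' - f)) • (f'⁻¹ • (z + e')) := by
    have e1 : f⁻¹ * (1 - f) = f⁻¹ - 1 := by field_simp
    have e2 : f⁻¹ * (f' - f) * f'⁻¹ = f⁻¹ - f'⁻¹ := by field_simp
    rw [smul_smul, e1, e2]
    module
  rw [hdecomp]
  refine (norm_add₃_le ..).trans ?_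
  have n1 : ‖(f⁻¹ * (1 - f)) • (y - z)‖ ≤ 1.06 * (2 * k) * D := by
    rw [norm_smul, Real.norm_eq_abs, abs_mul, abs_of_pos hinv0, abs_sub_comm 1 f]
    gcongr
  have n2 : ‖f⁻¹ • (e - e')‖ ≤ 1.06 * (k * D) := by
    rw [norm_smul, Real.norm_eq_abs, abs_of_pos hinv0]
    gcongr
  have n3 : ‖(f⁻¹ * (f' - f)) • (f'⁻¹ • (z + e'))‖ ≤ 1.06 * (3.3 * (k * D + τ)) := by
    rw [norm_smul, norm_smul, norm_inv, norm_norm, ← hf', inv_mul_cancel₀ hfpos'.ne', mul_one,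
      Real.norm_eq_abs, abs_mul, abs_of_pos hinv0, abs_sub_comm f' f]
    gcongr
  nlinarith

/-- The gradient of `x ↦ ‖x‖ ^ s + G x`, where `V` is the gradient of `G`. -/
def radialGrad (s : ℝ) (V : E → E) (x : E) : E := (s * ‖x‖ ^ (s - 2)) • x + V x

/-- The unit normal of the level sets of `x ↦ ‖x‖ ^ s + G x`, where `V` is the gradient of `G`. -/
def unitNormal (s : ℝ) (V : E → E) (x : E) : E := ‖radialGrad s V x‖⁻¹ • radialGrad s V x

/-- The points at which `‖x‖ ^ s + G x` is within `δ` of `1`. -/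
def shell (s : ℝ) (G : E → ℝ) (δ : ℝ) : Set E := {x | |‖x‖ ^ s + G x - 1| ≤ δ}

/-- `κ` is small enough for `κ`-perturbations of `‖x‖ ^ s` to be controlled near the sphere. -/
structure IsSmall (s L κ : ℝ) : Prop where
  pos : 0 < κ
  le_one_sub : 2 * κ ≤ 1 - (1 / 4 : ℝ) ^ s
  le_sub_one : 2 * κ ≤ (4 : ℝ) ^ s - 1
  le : κ * (2 * L + 2 * L / s) ≤ 1 / 40

/-- `G` is `C¹`-small, with gradient `V` which has a small Lipschitz constant. -/
structure IsPerturbation [CompleteSpace E] (κ : ℝ) (G : E → ℝ) (V : E → E) : Prop where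
  hasGradientAt : ∀ x, HasGradientAt G (V x) x
  abs_le : ∀ x, |G x| ≤ κ
  norm_le : ∀ x, ‖V x‖ ≤ κ
  norm_sub_le : ∀ x y, ‖V x - V y‖ ≤ κ * ‖x - y‖

lemma abs_norm_sub_one_le {F : Type*} [NormedAddCommGroup F] {s L κ δ : ℝ} (hs : 0 < s)
    (hL : RpowBounds s L) (hκ : IsSmall s L κ) (hδ : δ ≤ κ) {G : F → ℝ} {x : F}
    (hG : |G x| ≤ κ) (hx : x ∈ shell s G δ) :
    ‖x‖ ∈ Icc (1 / 4 : ℝ) 4 ∧ |‖x‖ - 1| ≤ 2 * L * κ := by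
  have hpow : |‖x‖ ^ s - 1| ≤ 2 * κ := by
    have hx' : |‖x‖ ^ s + G x - 1| ≤ δ := hx
    rw [abs_le] at hG hx' ⊢
    constructor <;> linarith [hG.1, hG.2, hx'.1, hx'.2]
  have hpow' := abs_le.1 hpow
  have hmem : ‖x‖ ∈ Icc (1 / 4 : ℝ) 4 := by
    constructor
    · refine (Real.rpow_le_rpow_iff (by norm_num) (norm_nonneg _) hs).1 ?_
      linarith [hκ.le_one_sub]
    · refine (Real.rpow_le_rpow_iff (norm_nonneg _) (by norm_num) hs).1 ?_
      linarith [hκ.le_sub_one]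
  refine ⟨hmem, ?_⟩
  have h := hL.abs_sub_le ‖x‖ hmem 1 (by norm_num)
  rw [Real.one_rpow] at h
  calc |‖x‖ - 1| ≤ L * |‖x‖ ^ s - 1| := h
    _ ≤ L * (2 * κ) := mul_le_mul_of_nonneg_left hpow (by linarith [hL.one_le])
    _ = 2 * L * κ := by ring

lemma normalize_smul_of_pos {c : ℝ} (hc : 0 < c) (w : E) : ‖c • w‖⁻¹ • c • w = ‖w‖⁻¹ • w := by
  rw [norm_smul, Real.norm_of_nonneg hc.le, smul_smul, mul_inv, mul_right_comm,
    inv_mul_cancel₀ hc.ne', one_mul]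

lemma radialGrad_eq_smul {s : ℝ} (hs : 0 < s) (V : E → E) {x : E} (hx : 0 < ‖x‖) :
    radialGrad s V x = (s * ‖x‖ ^ (s - 2)) • (x + (s⁻¹ * ‖x‖ ^ (2 - s)) • V x) := by
  have h : s * ‖x‖ ^ (s - 2) * (s⁻¹ * ‖x‖ ^ (2 - s)) = 1 := by
    rw [mul_mul_mul_comm, mul_inv_cancel₀ hs.ne', one_mul, ← Real.rpow_add hx]
    norm_num
  rw [radialGrad, smul_add, smul_smul, h, one_smul]

/-- The unit normals of two perturbed unit spheres differ by approximately `y - z`. -/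
lemma norm_unitNormal_sub_unitNormal_sub_le {s L κ δ : ℝ} (hs : 0 < s) (hL : RpowBounds s L)
    (hκ : IsSmall s L κ) (hδ0 : 0 ≤ δ) (hδ : δ ≤ κ) {G G' : E → ℝ} {V V' : E → E} {y z : E}
    (hG : |G y| ≤ κ) (hG' : |G' z| ≤ κ) (hV : ‖V y‖ ≤ κ) (hV' : ‖V' z‖ ≤ κ)
    (hGG : |G y - G' z| ≤ κ * ‖y - z‖) (hVV : ‖V y - V' z‖ ≤ κ * ‖y - z‖)
    (hy : y ∈ shell s G δ) (hz : z ∈ shell s G' δ) :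
    ‖(unitNormal s V y - unitNormal s V' z) - (y - z)‖ ≤ 1 / 4 * ‖y - z‖ + 20 * L * δ := by
  obtain ⟨hym, hy1⟩ := abs_norm_sub_one_le hs hL hκ hδ hG hy
  obtain ⟨hzm, hz1⟩ := abs_norm_sub_one_le hs hL hκ hδ hG' hz
  have hypos : 0 < ‖y‖ := by linarith [hym.1]
  have hzpos : 0 < ‖z‖ := by linarith [hzm.1]
  have hL0 : 0 ≤ L := by linarith [hL.one_le]
  have hκ0 := hκ.pos.le
  have hs0 : 0 ≤ s⁻¹ := (inv_pos.2 hs).le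
  have hD := norm_nonneg (y - z)
  set k := κ * (2 * L + 2 * L / s) with hk
  have hkeq : k = 2 * L * κ + 2 * (s⁻¹ * L * κ) := by rw [hk]; field_simp
  have hsLκ : 0 ≤ s⁻¹ * L * κ := by positivity
  have hLκ : 0 ≤ L * κ := by positivity
  have hcorr : ∀ (W : E → E) (x : E), ‖x‖ ∈ Icc (1 / 4 : ℝ) 4 → ‖W x‖ ≤ κ →
      ‖(s⁻¹ * ‖x‖ ^ (2 - s)) • W x‖ ≤ k := by
    intro W x hx hW
    rw [norm_smul, Real.norm_of_nonneg (by positivity)]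
    have : s⁻¹ * ‖x‖ ^ (2 - s) * ‖W x‖ ≤ s⁻¹ * L * κ := by
      have := hL.rpow_two_sub_le _ hx
      gcongr
    linarith
  have hee : ‖(s⁻¹ * ‖y‖ ^ (2 - s)) • V y - (s⁻¹ * ‖z‖ ^ (2 - s)) • V' z‖ ≤ k * ‖y - z‖ := by
    have hdec : (s⁻¹ * ‖y‖ ^ (2 - s)) • V y - (s⁻¹ * ‖z‖ ^ (2 - s)) • V' z =
        (s⁻¹ * ‖y‖ ^ (2 - s)) • (V y - V' z) +
          (s⁻¹ * (‖y‖ ^ (2 - s) - ‖z‖ ^ (2 - s))) • V' z := by module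
    rw [hdec]
    refine (norm_add_le _ _).trans ?_
    rw [norm_smul, norm_smul, Real.norm_of_nonneg (by positivity), Real.norm_eq_abs, abs_mul,
      abs_of_nonneg hs0]
    have h1 := hL.rpow_two_sub_le _ hym
    have h2 : |‖y‖ ^ (2 - s) - ‖z‖ ^ (2 - s)| ≤ L * ‖y - z‖ :=
      (hL.abs_rpow_two_sub_sub_le _ hym _ hzm).trans
        (mul_le_mul_of_nonneg_left (abs_norm_sub_norm_le y z) hL0)
    calc _ ≤ s⁻¹ * L * (κ * ‖y - z‖) + s⁻¹ * (L * ‖y - z‖) * κ := by gcongr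
      _ = 2 * (s⁻¹ * L * κ) * ‖y - z‖ := by ring
      _ ≤ k * ‖y - z‖ := mul_le_mul_of_nonneg_right (by linarith) hD
  have hyz : |‖y‖ - ‖z‖| ≤ k * ‖y - z‖ + 2 * L * δ := by
    have hpow : |‖y‖ ^ s - ‖z‖ ^ s| ≤ κ * ‖y - z‖ + 2 * δ := by
      have hy' : |‖y‖ ^ s + G y - 1| ≤ δ := hy
      have hz' : |‖z‖ ^ s + G' z - 1| ≤ δ := hz
      rw [abs_le] at hGG hy' hz' ⊢
      constructor <;> linarith [hGG.1, hGG.2, hy'.1, hy'.2, hz'.1, hz'.2]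
    calc |‖y‖ - ‖z‖| ≤ L * |‖y‖ ^ s - ‖z‖ ^ s| := hL.abs_sub_le _ hym _ hzm
      _ ≤ L * (κ * ‖y - z‖ + 2 * δ) := mul_le_mul_of_nonneg_left hpow hL0
      _ = L * κ * ‖y - z‖ + 2 * L * δ := by ring
      _ ≤ k * ‖y - z‖ + 2 * L * δ := by
        have := mul_le_mul_of_nonneg_right (show L * κ ≤ k by linarith) hD
        linarith
  have main := norm_normalize_add_sub_normalize_add_sub_le (by linarith) hκ.le
    (by positivity) (hy1.trans (by linarith)) (hz1.trans (by linarith)) (hcorr V y hym hV)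
    (hcorr V' z hzm hV') hee hyz
  have hpos : ∀ x : E, 0 < ‖x‖ → 0 < s * ‖x‖ ^ (s - 2) := fun x hx =>
    mul_pos hs (Real.rpow_pos_of_pos hx _)
  rw [unitNormal, unitNormal, radialGrad_eq_smul hs V hypos, radialGrad_eq_smul hs V' hzpos,
    normalize_smul_of_pos (hpos y hypos), normalize_smul_of_pos (hpos z hzpos)]
  refine main.trans ?_
  have := mul_le_mul_of_nonneg_right hκ.le hD
  linarith

/-- Near the unit sphere the gradient of `‖x‖ ^ s + G x` is bounded away from zero. -/
lemma le_norm_radialGrad {s L κ δ : ℝ} (hs : 0 < s) (hL : RpowBounds s L)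
    (hκ : IsSmall s L κ) (hδ : δ ≤ κ) {G : E → ℝ} {V : E → E} {y : E}
    (hG : |G y| ≤ κ) (hV : ‖V y‖ ≤ κ) (hy : y ∈ shell s G δ) :
    s / (2 * L) ≤ ‖radialGrad s V y‖ := by
  obtain ⟨hym, hy1⟩ := abs_norm_sub_one_le hs hL hκ hδ hG hy
  have hypos : 0 < ‖y‖ := by linarith [hym.1]
  have hL0 : 0 < L := by linarith [hL.one_le]
  have hκ0 := hκ.pos.le
  have hκle := hκ.le
  have hdiv : κ * (2 * L + 2 * L / s) = 2 * L * κ + 2 * (s⁻¹ * L * κ) := by field_simp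
  have hsLκ : 0 ≤ s⁻¹ * L * κ := by positivity
  have hLκ : 0 ≤ L * κ := by positivity
  rw [radialGrad_eq_smul hs V hypos, norm_smul, Real.norm_of_nonneg (by positivity)]
  have h1 : L⁻¹ ≤ ‖y‖ ^ (s - 2) := by
    rw [show s - 2 = -(2 - s) by ring, Real.rpow_neg hypos.le]
    exact inv_anti₀ (Real.rpow_pos_of_pos hypos _) (hL.rpow_two_sub_le _ hym)
  have h2 : ‖(s⁻¹ * ‖y‖ ^ (2 - s)) • V y‖ ≤ s⁻¹ * L * κ := by
    rw [norm_smul, Real.norm_of_nonneg (by positivity)]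
    have := hL.rpow_two_sub_le _ hym
    gcongr
  have h3 : 1 / 2 ≤ ‖y + (s⁻¹ * ‖y‖ ^ (2 - s)) • V y‖ := by
    have := norm_sub_le_norm_add y ((s⁻¹ * ‖y‖ ^ (2 - s)) • V y)
    linarith [(abs_le.1 hy1).1]
  calc s / (2 * L) = s * L⁻¹ * (1 / 2) := by field_simp
    _ ≤ _ := by gcongr

lemma norm_unitNormal {s : ℝ} {V : E → E} {x : E} (h : 0 < ‖radialGrad s V x‖) :
    ‖unitNormal s V x‖ = 1 := by
  rw [unitNormal, norm_smul, norm_inv, norm_norm, inv_mul_cancel₀ h.ne']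

lemma IsPerturbation.abs_sub_le [CompleteSpace E] {κ : ℝ} {G : E → ℝ} {V : E → E}
    (h : IsPerturbation κ G V) (x y : E) : |G x - G y| ≤ κ * ‖x - y‖ :=
  convex_univ.norm_image_sub_le_of_norm_hasFDerivWithin_le
    (fun z _ => (h.hasGradientAt z).hasFDerivAt.hasFDerivWithinAt)
    (fun z _ => by simpa using h.norm_le z) (mem_univ y) (mem_univ x)

lemma hasFDerivAt_norm_rpow_of_ne_zero (s : ℝ) {x : E} (hx : x ≠ 0) :
    HasFDerivAt (fun x : E => ‖x‖ ^ s) ((s * ‖x‖ ^ (s - 2)) • innerSL ℝ x) x := by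
  have hx0 : 0 < ‖x‖ := norm_pos_iff.2 hx
  have h : HasFDerivAt (fun x : E => (‖x‖ ^ 2) ^ (s / 2)) _ x :=
    (hasStrictFDerivAt_norm_sq x).hasFDerivAt.rpow_const (Or.inl (by positivity))
  have hfun : (fun x : E => ‖x‖ ^ s) = fun x : E => (‖x‖ ^ 2) ^ (s / 2) := by
    ext y
    rw [← Real.rpow_natCast, ← Real.rpow_mul (norm_nonneg _)]
    congr 1
    push_cast
    ring
  rw [hfun]
  convert h using 1
  ext v
  have : (‖x‖ ^ 2) ^ (s / 2 - 1) = ‖x‖ ^ (s - 2) := by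
    rw [← Real.rpow_natCast, ← Real.rpow_mul (norm_nonneg _)]
    congr 1
    push_cast
    ring
  simp [this]
  ring

/-- Near the unit sphere the gradient of `‖x‖ ^ s + G x` is Lipschitz. -/
lemma norm_radialGrad_sub_le {s L κ : ℝ} (hs : 0 < s) (hL : RpowBounds s L) {V : E → E} {x y : E}
    (hx : ‖x‖ ∈ Icc (1 / 4 : ℝ) 4) (hy : ‖y‖ ∈ Icc (1 / 4 : ℝ) 4)
    (hV : ‖V x - V y‖ ≤ κ * ‖x - y‖) :
    ‖radialGrad s V x - radialGrad s V y‖ ≤ (5 * s * L + κ) * ‖x - y‖ := by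
  have hL0 : 0 ≤ L := by linarith [hL.one_le]
  have hdec : radialGrad s V x - radialGrad s V y = (s * ‖x‖ ^ (s - 2)) • (x - y) +
      (s * (‖x‖ ^ (s - 2) - ‖y‖ ^ (s - 2))) • y + (V x - V y) := by
    rw [radialGrad, radialGrad]; module
  rw [hdec]
  refine (norm_add₃_le ..).trans ?_
  rw [norm_smul, norm_smul, Real.norm_of_nonneg (by positivity), Real.norm_eq_abs, abs_mul,
    abs_of_pos hs]
  have h1 := hL.rpow_sub_two_le _ hx
  have h2 : |‖x‖ ^ (s - 2) - ‖y‖ ^ (s - 2)| ≤ L * ‖x - y‖ :=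
    (hL.abs_rpow_sub_two_sub_le _ hx _ hy).trans
      (mul_le_mul_of_nonneg_left (abs_norm_sub_norm_le x y) hL0)
  calc _ ≤ s * L * ‖x - y‖ + s * (L * ‖x - y‖) * 4 + κ * ‖x - y‖ := by
        have := hy.2
        gcongr
    _ = _ := by ring

/-- Two nearby points of the same shell differ, up to a second order error, by a vector tangent
to the shell. -/
lemma abs_inner_unitNormal_le [CompleteSpace E] {s L κ δ R : ℝ} (hs : 0 < s)
    (hL : RpowBounds s L) (hκ : IsSmall s L κ) (hδ : δ ≤ κ) (hR : R ≤ 1 / 4)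
    {G : E → ℝ} {V : E → E} (hG : IsPerturbation κ G V) {y₀ y z : E}
    (hy₀ : y₀ ∈ shell s G δ) (hy : y ∈ shell s G δ) (hz : z ∈ shell s G δ)
    (hyR : ‖y - y₀‖ ≤ R) (hzR : ‖z - y₀‖ ≤ R) :
    |⟪unitNormal s V y₀, y - z⟫| ≤
      2 * L / s * (2 * δ + (5 * s * L + κ) * R * ‖y - z‖) := by
  have hL0 : 0 < L := by linarith [hL.one_le]
  have hκ0 := hκ.pos
  have hdiv : κ * (2 * L + 2 * L / s) = 2 * L * κ + 2 * (s⁻¹ * L * κ) := by field_simp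
  have hsLκ : 0 ≤ s⁻¹ * L * κ := by positivity
  have h0 := abs_le.1 (abs_norm_sub_one_le hs hL hκ hδ (hG.abs_le _) hy₀).2
  have hball : ∀ w ∈ Metric.closedBall y₀ R, ‖w‖ ∈ Icc (1 / 4 : ℝ) 4 := by
    intro w hw
    rw [mem_closedBall_iff_norm] at hw
    have := abs_le.1 ((abs_norm_sub_norm_le w y₀).trans hw)
    have := hκ.le
    constructor <;> linarith
  have hR0 : 0 ≤ R := (norm_nonneg _).trans hyR
  have hy₀R : y₀ ∈ Metric.closedBall y₀ R := Metric.mem_closedBall_self hR0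
  have hmv := (convex_closedBall y₀ R).norm_image_sub_le_of_norm_hasFDerivWithin_le'
    (f := fun x => ‖x‖ ^ s + G x) (f' := fun x => innerSL ℝ (radialGrad s V x))
    (φ := innerSL ℝ (radialGrad s V y₀)) (C := (5 * s * L + κ) * R) (x := z) (y := y)
    (fun x hx => by
      have hxne : x ≠ 0 := norm_pos_iff.1 (by linarith [(hball x hx).1])
      have := (hasFDerivAt_norm_rpow_of_ne_zero s hxne).add (hG.hasGradientAt x).hasFDerivAt
      refine HasFDerivAt.hasFDerivWithinAt ?_
      have heq : innerSL ℝ (radialGrad s V x) =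
          (s * ‖x‖ ^ (s - 2)) • innerSL ℝ x + InnerProductSpace.toDual ℝ E (V x) := by
        ext v
        simp [radialGrad]
      rw [heq]
      exact this)
    (fun x hx => by
      rw [← map_sub, innerSL_apply_norm]
      refine (norm_radialGrad_sub_le hs hL (hball x hx) (hball y₀ hy₀R)
        (hG.norm_sub_le _ _)).trans ?_
      rw [mem_closedBall_iff_norm] at hx
      exact mul_le_mul_of_nonneg_left hx (by positivity))
    (mem_closedBall_iff_norm.2 hzR) (mem_closedBall_iff_norm.2 hyR)
  rw [innerSL_apply_apply, Real.norm_eq_abs] at hmv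
  have hinner : |⟪radialGrad s V y₀, y - z⟫| ≤ 2 * δ + (5 * s * L + κ) * R * ‖y - z‖ := by
    have hy' : |‖y‖ ^ s + G y - 1| ≤ δ := hy
    have hz' : |‖z‖ ^ s + G z - 1| ≤ δ := hz
    rw [abs_le] at hy' hz' hmv ⊢
    constructor <;> linarith [hy'.1, hy'.2, hz'.1, hz'.2, hmv.1, hmv.2]
  have hlow := le_norm_radialGrad hs hL hκ hδ (hG.abs_le _) (hG.norm_le _) hy₀
  rw [unitNormal, real_inner_smul_left, abs_mul, abs_inv, abs_norm]
  have hinv : ‖radialGrad s V y₀‖⁻¹ ≤ 2 * L / s := by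
    rw [← inv_div]
    exact inv_anti₀ (by positivity) hlow
  exact mul_le_mul hinv hinner (abs_nonneg _) (by positivity)

end InnerProductSpace

/-- Volume bound by slicing: a set contained in a cube of half-side `r`, all of whose slices along
the coordinates in `J` have side lengths at most `D`. -/
lemma volume_le_of_slices {S : Set (EuclideanSpace ℝ (Fin d))} (hS : MeasurableSet S)
    (c : EuclideanSpace ℝ (Fin d)) {r D : ℝ} (hr : ∀ x ∈ S, ∀ i, |x i - c i| ≤ r)
    (J : Finset (Fin d))
    (hD : ∀ x ∈ S, ∀ y ∈ S, (∀ i ∉ J, x i = y i) → ∀ i ∈ J, |x i - y i| ≤ D) :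
    volume S ≤ ENNReal.ofReal D ^ J.card * ENNReal.ofReal (2 * r) ^ (d - J.card) := by
  set e := MeasurableEquiv.piEquivPiSubtypeProd (fun _ : Fin d => ℝ) (· ∉ J) with he
  have hmp := (volume_preserving_piEquivPiSubtypeProd (fun _ : Fin d => ℝ) (· ∉ J)).comp
    (PiLp.volume_preserving_ofLp (Fin d))
  set f : EuclideanSpace ℝ (Fin d) ≃ᵐ _ :=
    (MeasurableEquiv.toLp 2 (Fin d → ℝ)).symm.trans e with hf
  have hmpf : MeasurePreserving f volume volume := hmp
  rw [← hmpf.symm.measure_preimage_equiv]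
  set T := f.symm ⁻¹' S with hT
  have hTm : MeasurableSet T := f.symm.measurable hS
  have hcoord : ∀ p, ∀ i (hi : i ∉ J), f.symm p i = p.1 ⟨i, hi⟩ := by
    intro p i hi
    have := congrArg (fun q => q.1 ⟨i, hi⟩) (f.apply_symm_apply p)
    exact this
  have hcoord' : ∀ p, ∀ i (hi : ¬ i ∉ J), f.symm p i = p.2 ⟨i, hi⟩ := by
    intro p i hi
    have := congrArg (fun q => q.2 ⟨i, hi⟩) (f.apply_symm_apply p)
    exact this
  set B : Set ({i // i ∉ J} → ℝ) := Set.pi univ fun i => Icc (c i - r) (c i + r) with hB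
  have hBm : MeasurableSet B := MeasurableSet.univ_pi fun _ => measurableSet_Icc
  rw [Measure.volume_eq_prod, Measure.prod_apply hTm]
  have hcard : Fintype.card {i // i ∉ J} = d - J.card := by
    rw [Fintype.card_subtype_compl]
    simp
  have hcard' : Fintype.card {i // ¬ i ∉ J} = J.card := by simp
  have hvolB : volume B = ENNReal.ofReal (2 * r) ^ (d - J.card) := by
    rw [hB, volume_pi_pi]
    simp only [Real.volume_Icc]
    rw [Finset.prod_congr rfl (fun i _ => by
      rw [show c i + r - (c i - r) = 2 * r by ring]), Finset.prod_const, Finset.card_univ, hcard]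
  have hslice : ∀ a, volume (Prod.mk a ⁻¹' T) ≤
      B.indicator (fun _ => ENNReal.ofReal D ^ J.card) a := by
    intro a
    by_cases ha : a ∈ B
    · rw [indicator_of_mem ha]
      refine (Real.volume_pi_le_prod_diam _).trans ?_
      rw [← hcard', ← Finset.card_univ, ← Finset.prod_const]
      refine Finset.prod_le_prod' fun i _ => ?_
      refine Metric.ediam_le ?_
      rintro _ ⟨u, hu, rfl⟩ _ ⟨v, hv, rfl⟩
      rw [edist_dist, Real.dist_eq]
      refine ENNReal.ofReal_le_ofReal ?_
      have := hD _ hu _ hv (fun j hj => by rw [hcoord _ j hj, hcoord _ j hj]) i (not_not.1 i.2)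
      rwa [hcoord' _ i i.2, hcoord' _ i i.2] at this
    · rw [indicator_of_notMem ha]
      have : Prod.mk a ⁻¹' T = ∅ := by
        refine eq_empty_of_forall_notMem fun u hu => ha ?_
        intro i _
        have := abs_le.1 (hr _ hu i)
        rw [hcoord _ i i.2] at this
        exact ⟨by linarith [this.1], by linarith [this.2]⟩
      simp [this]
  calc ∫⁻ a, volume (Prod.mk a ⁻¹' T)
      ≤ ∫⁻ a, B.indicator (fun _ => ENNReal.ofReal D ^ J.card) a := lintegral_mono hslice
    _ = ENNReal.ofReal D ^ J.card * ENNReal.ofReal (2 * r) ^ (d - J.card) := by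
      rw [lintegral_indicator hBm, setLIntegral_const, hvolB]

/-- Every real number of absolute value at most `R` lies within `R / N` of one of the `N` midpoints
of a subdivision of `[-R, R]`. -/
lemma exists_abs_sub_midpoint_le {R : ℝ} (hR : 0 < R) {N : ℕ} (hN : 0 < N) {t : ℝ}
    (ht : |t| ≤ R) : ∃ k : Fin N, |t - (-R + (2 * (k : ℕ) + 1) * (R / N))| ≤ R / N := by
  have hN' : (0 : ℝ) < N := by exact_mod_cast hN
  rw [abs_le] at ht
  have hw : 0 < R / N := by positivity
  have hRN : R = N * (R / N) := by field_simp
  set w := R / N with hwdef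
  rcases eq_or_lt_of_le ht.2 with h | h
  · refine ⟨⟨N - 1, by omega⟩, ?_⟩
    have : ((N - 1 : ℕ) : ℝ) = N - 1 := by
      rw [Nat.cast_sub hN, Nat.cast_one]
    simp only [this]
    rw [abs_le]
    constructor <;> nlinarith
  · set k := ⌊(t + R) / (2 * w)⌋₊ with hk
    have hnn : 0 ≤ (t + R) / (2 * w) := div_nonneg (by linarith) (by linarith)
    have h1 := Nat.floor_le hnn
    have h2 := Nat.lt_floor_add_one ((t + R) / (2 * w))
    rw [← hk] at h1 h2
    rw [le_div_iff₀ (by linarith)] at h1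
    rw [div_lt_iff₀ (by linarith)] at h2
    have hkN : k < N := by
      have : (k : ℝ) * (2 * w) < N * (2 * w) := by nlinarith
      exact_mod_cast lt_of_mul_lt_mul_right this (by linarith)
    refine ⟨⟨k, hkN⟩, ?_⟩
    simp only
    rw [abs_le]
    constructor <;> nlinarith

/-- Covering the cube `[-R, R] ^ d` by `N ^ d` cubes of half-side `R / N`. -/
lemma volume_le_of_forall_cube {S : Set (EuclideanSpace ℝ (Fin d))} {R : ℝ} (hR : 0 < R)
    (hS : ∀ x ∈ S, ∀ i, |x i| ≤ R) {N : ℕ} (hN : 0 < N) {M : ENNReal}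
    (hM : ∀ c : EuclideanSpace ℝ (Fin d), volume (S ∩ {x | ∀ i, |x i - c i| ≤ R / N}) ≤ M) :
    volume S ≤ (N : ENNReal) ^ d * M := by
  let c : (Fin d → Fin N) → EuclideanSpace ℝ (Fin d) := fun k =>
    WithLp.toLp 2 fun i => -R + (2 * ((k i : ℕ) : ℝ) + 1) * (R / N)
  have hcover : S ⊆ ⋃ k, S ∩ {x | ∀ i, |x i - c k i| ≤ R / N} := by
    intro x hx
    choose k hk using fun i => exists_abs_sub_midpoint_le hR hN (hS x hx i)
    exact mem_iUnion.2 ⟨k, hx, hk⟩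
  calc volume S ≤ ∑ k, volume (S ∩ {x | ∀ i, |x i - c k i| ≤ R / N}) :=
        (measure_mono hcover).trans (measure_iUnion_fintype_le _ _)
    _ ≤ ∑ _k : Fin d → Fin N, M := Finset.sum_le_sum fun k _ => hM (c k)
    _ = (N : ENNReal) ^ d * M := by simp

/-- Two unit vectors that are neither almost parallel nor almost antiparallel have a large
`2 × 2` minor. -/
lemma exists_le_abs_minor {p q : EuclideanSpace ℝ (Fin d)} {μ : ℝ} (hd : 0 < d) (hμ : 0 ≤ μ)
    (hp : ‖p‖ = 1) (hq : ‖q‖ = 1) (hadd : μ ≤ ‖p + q‖) (hsub : μ ≤ ‖p - q‖) :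
    ∃ i j, μ / d ≤ |p i * q j - p j * q i| := by
  have hd' : (0 : ℝ) < d := by exact_mod_cast hd
  by_contra! hlt
  have hsum : ∀ u v : EuclideanSpace ℝ (Fin d), ⟪u, v⟫ = ∑ i, u i * v i := by
    intro u v
    simp [PiLp.inner_apply, mul_comm]
  have hpp : ∑ i, p i * p i = 1 := by rw [← hsum, real_inner_self_eq_norm_sq, hp, one_pow]
  have hqq : ∑ i, q i * q i = 1 := by rw [← hsum, real_inner_self_eq_norm_sq, hq, one_pow]
  set t := ⟪p, q⟫ with ht
  have hlag : ∑ i, ∑ j, (p i * q j - p j * q i) ^ 2 = 2 * (1 - t ^ 2) := by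
    have h1 : ∀ i j, (p i * q j - p j * q i) ^ 2 =
        (p i * p i) * (q j * q j) + (q i * q i) * (p j * p j) -
          2 * ((p i * q i) * (p j * q j)) := fun i j => by ring
    simp only [h1, Finset.sum_sub_distrib, Finset.sum_add_distrib, ← Finset.mul_sum,
      ← Finset.sum_mul, hpp, hqq, ← hsum]
    rw [← ht]
    ring
  have hadd2 : μ ^ 2 ≤ 2 + 2 * t := by
    have := pow_le_pow_left₀ hμ hadd 2
    rw [norm_add_sq_real, hp, hq, ← ht] at this
    linarith
  have hsub2 : μ ^ 2 ≤ 2 - 2 * t := by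
    have := pow_le_pow_left₀ hμ hsub 2
    rw [norm_sub_sq_real, hp, hq, ← ht] at this
    linarith
  have hlower : μ ^ 2 ≤ 2 * (1 - t ^ 2) := by
    rcases le_total 0 t with h | h <;> nlinarith [sq_nonneg μ]
  have hupper : ∑ i, ∑ j, (p i * q j - p j * q i) ^ 2 < ∑ _i : Fin d, ∑ _j : Fin d, (μ / d) ^ 2 := by
    have : Nonempty (Fin d) := ⟨⟨0, hd⟩⟩
    refine Finset.sum_lt_sum_of_nonempty Finset.univ_nonempty fun i _ =>
      Finset.sum_lt_sum_of_nonempty Finset.univ_nonempty fun j _ => ?_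
    rw [← sq_abs]
    exact pow_lt_pow_left₀ (hlt i j) (abs_nonneg _) two_ne_zero
  have hconst : ∑ _i : Fin d, ∑ _j : Fin d, (μ / d) ^ 2 = μ ^ 2 := by
    simp only [Finset.sum_const, Finset.card_univ, Fintype.card_fin, nsmul_eq_mul]
    field_simp
  linarith

lemma exists_inv_le_abs_coord {p : EuclideanSpace ℝ (Fin d)} (hd : 0 < d) (hp : ‖p‖ = 1) :
    ∃ i, 1 / (d : ℝ) ≤ |p i| := by
  have hd' : (1 : ℝ) ≤ d := by exact_mod_cast hd
  by_contra! hlt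
  have : Nonempty (Fin d) := ⟨⟨0, hd⟩⟩
  have hsq : ∑ i, ‖p i‖ ^ 2 = 1 := by rw [← EuclideanSpace.norm_sq_eq, hp, one_pow]
  have h : ∑ i, ‖p i‖ ^ 2 < ∑ _i : Fin d, (1 / (d : ℝ)) ^ 2 :=
    Finset.sum_lt_sum_of_nonempty Finset.univ_nonempty fun i _ =>
      pow_lt_pow_left₀ (hlt i) (abs_nonneg _) two_ne_zero
  have hle : ∑ _i : Fin d, (1 / (d : ℝ)) ^ 2 ≤ 1 := by
    simp only [Finset.sum_const, Finset.card_univ, Fintype.card_fin, nsmul_eq_mul]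
    rw [show (d : ℝ) * (1 / d) ^ 2 = 1 / d by field_simp]
    exact (div_le_one (by linarith)).2 hd'
  linarith

lemma norm_le_sum_abs (x : EuclideanSpace ℝ (Fin d)) : ‖x‖ ≤ ∑ i, |x i| := by
  rw [EuclideanSpace.norm_eq, Real.sqrt_le_left (Finset.sum_nonneg fun i _ => abs_nonneg _)]
  simp only [Real.norm_eq_abs]
  exact Finset.sum_sq_le_sq_sum_of_nonneg fun i _ => abs_nonneg _

lemma abs_coord_le_norm (x : EuclideanSpace ℝ (Fin d)) (i : Fin d) : |x i| ≤ ‖x‖ :=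
  PiLp.norm_apply_le x i

/-- Cramer's rule estimate for a vector supported on two coordinates. -/
lemma abs_coord_le_of_minor {p q v : EuclideanSpace ℝ (Fin d)} {i j : Fin d} {μ B : ℝ}
    (hμ : 0 < μ) (hp : ‖p‖ = 1) (hq : ‖q‖ = 1) (hminor : μ ≤ |p i * q j - p j * q i|)
    (hv : ∀ k, k ≠ i → k ≠ j → v k = 0) (hpv : |⟪p, v⟫| ≤ B) (hqv : |⟪q, v⟫| ≤ B) :
    |v i| ≤ 2 * B / μ ∧ |v j| ≤ 2 * B / μ := by
  have hij : i ≠ j := by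
    rintro rfl
    rw [sub_self, abs_zero] at hminor
    linarith
  have hsum : ∀ u : EuclideanSpace ℝ (Fin d), ⟪u, v⟫ = u i * v i + u j * v j := by
    intro u
    have : ⟪u, v⟫ = ∑ k, u k * v k := by simp [PiLp.inner_apply, mul_comm]
    rw [this]
    refine Finset.sum_eq_add i j hij (fun k _ hk => ?_) (by simp) (by simp)
    rw [hv k hk.1 hk.2, mul_zero]
  have hB : 0 ≤ B := (abs_nonneg _).trans hpv
  have key : ∀ a b t : ℝ, |a| ≤ 1 → |b| ≤ 1 →
      (p i * q j - p j * q i) * t = a * ⟪p, v⟫ - b * ⟪q, v⟫ → |t| ≤ 2 * B / μ := by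
    intro a b t ha hb h
    rw [le_div_iff₀ hμ]
    calc |t| * μ ≤ |t| * |p i * q j - p j * q i| :=
          mul_le_mul_of_nonneg_left hminor (abs_nonneg _)
      _ = |a * ⟪p, v⟫ - b * ⟪q, v⟫| := by rw [← h, abs_mul, mul_comm]
      _ ≤ |a| * |⟪p, v⟫| + |b| * |⟪q, v⟫| := by
        rw [← abs_mul, ← abs_mul]; exact abs_sub _ _
      _ ≤ 1 * B + 1 * B := by gcongr
      _ = 2 * B := by ring
  have hpk : ∀ k, |p k| ≤ 1 := fun k => hp ▸ abs_coord_le_norm p k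
  have hqk : ∀ k, |q k| ≤ 1 := fun k => hq ▸ abs_coord_le_norm q k
  refine ⟨key (q j) (p j) _ (hqk j) (hpk j) ?_,
    key (-q i) (-p i) _ (by simpa using hqk i) (by simpa using hpk i) ?_⟩ <;>
  · rw [hsum, hsum]
    ring

lemma norm_sub_le_of_forall_abs_coord_sub_le {x y : EuclideanSpace ℝ (Fin d)} {r : ℝ}
    (h : ∀ i, |x i - y i| ≤ r) : ‖x - y‖ ≤ d * r := by
  refine (norm_le_sum_abs _).trans ?_
  calc ∑ i, |(x - y) i| ≤ ∑ _i : Fin d, r := Finset.sum_le_sum fun i _ => h i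
    _ = d * r := by simp

/-- Volume of a set near a point `x₀` at which two unit vectors `p`, `q`, almost orthogonal to all
small differences of points of the set, have a large `2 × 2` minor. -/
lemma volume_le_of_minor {S : Set (EuclideanSpace ℝ (Fin d))} (hS : MeasurableSet S)
    (c : EuclideanSpace ℝ (Fin d)) {p q : EuclideanSpace ℝ (Fin d)} {i j : Fin d} {μ B δ r η : ℝ}
    (hr : ∀ x ∈ S, ∀ i, |x i - c i| ≤ r)
    (hμ : 0 < μ) (hp : ‖p‖ = 1) (hq : ‖q‖ = 1) (hminor : μ ≤ |p i * q j - p j * q i|)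
    (hpS : ∀ x ∈ S, ∀ y ∈ S, |⟪p, x - y⟫| ≤ B * (δ + η * ‖x - y‖))
    (hqS : ∀ x ∈ S, ∀ y ∈ S, |⟪q, x - y⟫| ≤ B * (δ + η * ‖x - y‖))
    (hη : 8 * B * η ≤ μ) :
    volume S ≤ ENNReal.ofReal (8 * B * δ / μ) ^ 2 * ENNReal.ofReal (2 * r) ^ (d - 2) := by
  have hij : i ≠ j := by
    rintro rfl
    rw [sub_self, abs_zero] at hminor
    linarith
  rw [← Finset.card_pair hij]
  refine volume_le_of_slices hS c hr {i, j} fun x hx y hy hxy => ?_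
  have hv : ∀ k, k ≠ i → k ≠ j → (x - y) k = 0 := by
    intro k hki hkj
    have := hxy k (by simp [hki, hkj])
    simp [this]
  obtain ⟨h1, h2⟩ := abs_coord_le_of_minor hμ hp hq hminor hv (hpS x hx y hy) (hqS x hx y hy)
  have hnorm : ‖x - y‖ ≤ |(x - y) i| + |(x - y) j| := by
    refine (norm_le_sum_abs _).trans_eq ?_
    refine Finset.sum_eq_add i j hij (fun k _ hk => ?_) (by simp) (by simp)
    rw [hv k hk.1 hk.2, abs_zero]
  have hle : ‖x - y‖ ≤ 8 * B * δ / μ := by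
    rw [le_div_iff₀ hμ]
    rw [le_div_iff₀ hμ] at h1 h2
    have := mul_le_mul_of_nonneg_right hnorm hμ.le
    have := mul_le_mul_of_nonneg_right hη (norm_nonneg (x - y))
    linarith
  exact fun k _ => (abs_coord_le_norm (x - y) k).trans hle

/-- Volume of a set with a unit vector almost orthogonal to all small differences of its points. -/
lemma volume_le_of_unit_normal (hd : 0 < d) {S : Set (EuclideanSpace ℝ (Fin d))}
    (hS : MeasurableSet S) (c : EuclideanSpace ℝ (Fin d)) {p : EuclideanSpace ℝ (Fin d)}
    {B δ r η : ℝ} (hr : ∀ x ∈ S, ∀ i, |x i - c i| ≤ r) (hp : ‖p‖ = 1)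
    (hpS : ∀ x ∈ S, ∀ y ∈ S, |⟪p, x - y⟫| ≤ B * (δ + η * ‖x - y‖))
    (hη : 2 * d * B * η ≤ 1) :
    volume S ≤ ENNReal.ofReal (2 * d * B * δ) * ENNReal.ofReal (2 * r) ^ (d - 1) := by
  obtain ⟨i, hi⟩ := exists_inv_le_abs_coord hd hp
  have hd' : (0 : ℝ) < d := by exact_mod_cast hd
  have := volume_le_of_slices hS c hr {i} (D := 2 * d * B * δ) fun x hx y hy hxy => ?_
  · simpa using this
  have hv : ∀ k, k ≠ i → (x - y) k = 0 := by
    intro k hki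
    have := hxy k (by simp [hki])
    simp [this]
  have hinner : ⟪p, x - y⟫ = p i * (x - y) i := by
    have : ⟪p, x - y⟫ = ∑ k, p k * (x - y) k := by
      simp [PiLp.inner_apply, mul_comm]
    rw [this]
    refine Finset.sum_eq_single i (fun k _ hk => ?_) (by simp)
    rw [hv k hk, mul_zero]
  have hnorm : ‖x - y‖ ≤ |(x - y) i| := by
    refine (norm_le_sum_abs _).trans_eq ?_
    refine Finset.sum_eq_single i (fun k _ hk => ?_) (by simp)
    rw [hv k hk, abs_zero]
  have h := hpS x hx y hy
  rw [hinner, abs_mul] at h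
  have h1 : ‖x - y‖ ≤ 2 * d * B * δ := by
    have h2 : 1 / (d : ℝ) * ‖x - y‖ ≤ B * (δ + η * ‖x - y‖) :=
      (mul_le_mul hi hnorm (norm_nonneg _) (abs_nonneg _)).trans h
    rw [one_div, inv_mul_le_iff₀ hd'] at h2
    have := mul_le_mul_of_nonneg_right hη (norm_nonneg (x - y))
    linarith
  exact fun k _ => (abs_coord_le_norm (x - y) k).trans h1

lemma isClosed_shell {E : Type*} [NormedAddCommGroup E] {s : ℝ} (hs : 0 < s) {G : E → ℝ}
    (hG : Continuous G) (δ : ℝ) : IsClosed (shell s G δ) :=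
  isClosed_le ((((continuous_norm.rpow_const fun _ => Or.inr hs.le).add hG).sub
    continuous_const).abs) continuous_const

lemma isClosed_cube (c : EuclideanSpace ℝ (Fin d)) (r : ℝ) :
    IsClosed {x : EuclideanSpace ℝ (Fin d) | ∀ i, |x i - c i| ≤ r} := by
  simp only [Set.ofPred_forall]
  exact isClosed_iInter fun i => isClosed_le (by fun_prop) continuous_const

/-- A common choice of constants making all perturbation estimates applicable. -/
lemma exists_isSmall {s L M : ℝ} (hs : 0 < s) (hL : RpowBounds s L) (hM : 0 < M) :
    ∃ κ, IsSmall s L κ ∧ κ ≤ 1 ∧ κ ≤ M := by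
  have hL0 : 0 < L := by linarith [hL.one_le]
  have h1 : (1 / 4 : ℝ) ^ s < 1 := Real.rpow_lt_one (by norm_num) (by norm_num) hs
  have h2 : 1 < (4 : ℝ) ^ s := Real.one_lt_rpow (by norm_num) hs
  have h3 : 0 < 2 * L + 2 * L / s := by positivity
  have hcont : ∀ f : ℝ → ℝ, Continuous f → ∀ a, f 0 < a → ∀ᶠ κ in nhdsWithin 0 (Ioi 0), f κ ≤ a :=
    fun f hf a ha => ((hf.tendsto 0).mono_left nhdsWithin_le_nhds).eventually_le_const ha
  obtain ⟨κ, e1, e2, e3, e4, e5, e6⟩ := (((hcont (fun κ => 2 * κ) (by fun_prop)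
      (1 - (1 / 4 : ℝ) ^ s) (by simpa using h1)).and <|
    (hcont (fun κ => 2 * κ) (by fun_prop) ((4 : ℝ) ^ s - 1) (by simpa using h2)).and <|
    (hcont (fun κ => κ * (2 * L + 2 * L / s)) (by fun_prop) (1 / 40) (by simp)).and <|
    (hcont id continuous_id 1 (by simp)).and <|
    (hcont id continuous_id M hM).and self_mem_nhdsWithin)).exists
  exact ⟨κ, ⟨e6, e1, e2, e3⟩, e4, e5⟩

/-- The volume of the intersection of two perturbed unit spherical shells of width `δ` whose
centres are at distance at least `ν`. -/
theorem exists_volume_shell_inter_le (hd : 2 ≤ d) {s : ℝ} (hs : 0 < s) :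
    ∃ κ C : ℝ, 0 < κ ∧ 0 < C ∧ ∀ ν δ : ℝ, 0 < ν → ν ≤ κ → 0 < δ → δ ≤ κ * ν →
      ∀ (b : EuclideanSpace ℝ (Fin d)) (G₁ G₂ : EuclideanSpace ℝ (Fin d) → ℝ)
        (V₁ V₂ : EuclideanSpace ℝ (Fin d) → EuclideanSpace ℝ (Fin d)), ν ≤ ‖b‖ →
        IsPerturbation κ G₁ V₁ → IsPerturbation κ G₂ V₂ →
        (∀ x, |G₁ x - G₂ (x - b)| ≤ κ * ‖b‖) → (∀ x, ‖V₁ x - V₂ (x - b)‖ ≤ κ * ‖b‖) →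
        volume (shell s G₁ δ ∩ {x | x - b ∈ shell s G₂ δ}) ≤
          ENNReal.ofReal (C * (δ ^ 2 / ν ^ 4 + δ * ν ^ (d - 1))) := by
  obtain ⟨L, hL⟩ := exists_rpowBounds hs
  have hL0 : 0 < L := by linarith [hL.one_le]
  have hd' : (2 : ℝ) ≤ d := by exact_mod_cast hd
  set B : ℝ := 2 * L / s * (5 * s * L + 3) + 1 with hBdef
  have hB1 : 1 ≤ B := by
    have : 0 ≤ 2 * L / s * (5 * s * L + 3) := by positivity
    linarith
  have hB0 : 0 < B := by linarith
  have hM0 : 0 < 1 / (4 * (d : ℝ) ^ 2 * B) := by positivity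
  obtain ⟨κ, hκ, hκ1, hκM⟩ := exists_isSmall hs hL hM0
  have hκ0 := hκ.pos
  set Q : ℝ := 32 * d ^ 2 * B with hQ
  have hQ0 : 0 < Q := by positivity
  set C : ℝ := (5 * Q) ^ d * (16 * d * B) ^ 2 * (2 / Q) ^ (d - 2) + 2 * d * B * 4 ^ (d - 1) with hC
  refine ⟨κ, C, hκ0, by positivity, ?_⟩
  intro ν δ hν hνκ hδ hδν b G₁ G₂ V₁ V₂ hb hG₁ hG₂ hG hV
  have hν1 : ν ≤ 1 := hνκ.trans hκ1
  have hδκ : δ ≤ κ := hδν.trans (by nlinarith)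
  have hνM : 4 * d ^ 2 * B * ν ≤ 1 := by
    have := hνκ.trans hκM
    rwa [le_div_iff₀ (by positivity), mul_comm] at this
  have hLδ : 20 * L * δ ≤ ν / 4 := by
    have h1 := hκ.le
    have h2 : 0 ≤ κ * (2 * L / s) := by positivity
    have h3 : L * κ ≤ 1 / 80 := by nlinarith
    have h4 := mul_le_mul_of_nonneg_right h3 hν.le
    have h5 := mul_le_mul_of_nonneg_left hδν hL0.le
    linarith
  set X := shell s G₁ δ ∩ {x | x - b ∈ shell s G₂ δ} with hX
  set n₁ : EuclideanSpace ℝ (Fin d) → EuclideanSpace ℝ (Fin d) := unitNormal s V₁ with hn₁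
  set n₂ : EuclideanSpace ℝ (Fin d) → EuclideanSpace ℝ (Fin d) :=
    fun x => unitNormal s V₂ (x - b) with hn₂
  have hXcl : IsClosed X := by
    have hc : ∀ {G : EuclideanSpace ℝ (Fin d) → ℝ}
        {V : EuclideanSpace ℝ (Fin d) → EuclideanSpace ℝ (Fin d)},
        IsPerturbation κ G V → Continuous G := fun h =>
      continuous_iff_continuousAt.2 fun x => (h.hasGradientAt x).continuousAt
    exact (isClosed_shell hs (hc hG₁) δ).inter
      ((isClosed_shell hs (hc hG₂) δ).preimage (continuous_id.sub continuous_const))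
  have hgrad : 0 < s / (2 * L) := by positivity
  have hunit₁ : ∀ x ∈ X, ‖n₁ x‖ = 1 := fun x hx => norm_unitNormal <| hgrad.trans_le <|
    le_norm_radialGrad hs hL hκ hδκ (hG₁.abs_le _) (hG₁.norm_le _) hx.1
  have hunit₂ : ∀ x ∈ X, ‖n₂ x‖ = 1 := fun x hx => norm_unitNormal <| hgrad.trans_le <|
    le_norm_radialGrad hs hL hκ hδκ (hG₂.abs_le _) (hG₂.norm_le _) hx.2
  have hcmp₁ : ∀ x ∈ X, ∀ y ∈ X, ‖(n₁ x - n₁ y) - (x - y)‖ ≤ 1 / 4 * ‖x - y‖ + ν / 4 :=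
    fun x hx y hy => (norm_unitNormal_sub_unitNormal_sub_le hs hL hκ hδ.le hδκ (hG₁.abs_le _)
      (hG₁.abs_le _) (hG₁.norm_le _) (hG₁.norm_le _) (hG₁.abs_sub_le x y)
      (hG₁.norm_sub_le x y) hx.1 hy.1).trans (by linarith)
  have hcmp₂ : ∀ x ∈ X, ∀ y ∈ X, ‖(n₂ x - n₂ y) - (x - y)‖ ≤ 1 / 4 * ‖x - y‖ + ν / 4 := by
    intro x hx y hy
    have := norm_unitNormal_sub_unitNormal_sub_le hs hL hκ hδ.le hδκ (hG₂.abs_le _)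
      (hG₂.abs_le _) (hG₂.norm_le _) (hG₂.norm_le _) (hG₂.abs_sub_le (x - b) (y - b))
      (hG₂.norm_sub_le (x - b) (y - b)) hx.2 hy.2
    rw [sub_sub_sub_cancel_right] at this
    exact this.trans (by linarith)
  have hsub : ∀ x ∈ X, ν / 2 ≤ ‖n₁ x - n₂ x‖ := by
    intro x hx
    have hxb : x - (x - b) = b := sub_sub_cancel x b
    have := norm_unitNormal_sub_unitNormal_sub_le (y := x) (z := x - b) hs hL hκ hδ.le hδκ
      (hG₁.abs_le _) (hG₂.abs_le _) (hG₁.norm_le _) (hG₂.norm_le _)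
      (by rw [hxb]; exact hG x) (by rw [hxb]; exact hV x) hx.1 hx.2
    rw [hxb] at this
    have h2 := norm_sub_norm_le b (n₁ x - n₂ x)
    rw [norm_sub_rev b (n₁ x - n₂ x)] at h2
    change ‖n₁ x - n₂ x - b‖ ≤ _ at this
    linarith
  have hBle : ∀ R t : ℝ, 0 ≤ R → 0 ≤ t →
      2 * L / s * (2 * δ + (5 * s * L + κ) * R * t) ≤ B * (δ + R * t) := by
    intro R t hR ht
    have h1 : 2 * L / s * 2 ≤ B := by
      have : 0 ≤ 2 * L / s * (5 * s * L + 1) := by positivity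
      linarith
    have h2 : 2 * L / s * (5 * s * L + κ) ≤ B := by
      have : 0 ≤ 2 * L / s * (3 - κ) := mul_nonneg (by positivity) (by linarith)
      linarith
    have h3 := mul_le_mul_of_nonneg_right h1 hδ.le
    have h4 := mul_le_mul_of_nonneg_right h2 (mul_nonneg hR ht)
    linarith
  have hflat₁ : ∀ x₀ ∈ X, ∀ R ≤ (1 / 4 : ℝ), ∀ x ∈ X, ∀ y ∈ X, ‖x - x₀‖ ≤ R → ‖y - x₀‖ ≤ R →
      |⟪n₁ x₀, x - y⟫| ≤ B * (δ + R * ‖x - y‖) := by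
    intro x₀ hx₀ R hR x hx y hy hxR hyR
    exact (abs_inner_unitNormal_le hs hL hκ hδκ hR hG₁ hx₀.1 hx.1 hy.1 hxR hyR).trans
      (hBle R _ ((norm_nonneg _).trans hxR) (norm_nonneg _))
  have hflat₂ : ∀ x₀ ∈ X, ∀ R ≤ (1 / 4 : ℝ), ∀ x ∈ X, ∀ y ∈ X, ‖x - x₀‖ ≤ R → ‖y - x₀‖ ≤ R →
      |⟪n₂ x₀, x - y⟫| ≤ B * (δ + R * ‖x - y‖) := by
    intro x₀ hx₀ R hR x hx y hy hxR hyR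
    have := abs_inner_unitNormal_le (y := x - b) (z := y - b) hs hL hκ hδκ hR hG₂ hx₀.2 hx.2 hy.2
      (by rwa [sub_sub_sub_cancel_right]) (by rwa [sub_sub_sub_cancel_right])
    rw [sub_sub_sub_cancel_right] at this
    exact this.trans (hBle R _ ((norm_nonneg _).trans hxR) (norm_nonneg _))
  set T := {x ∈ X | ‖n₁ x + n₂ x‖ ≤ ν} with hT
  -- the nearly tangential part
  have hTvol : volume T ≤ ENNReal.ofReal (2 * d * B * 4 ^ (d - 1) * (δ * ν ^ (d - 1))) := by
    rcases T.eq_empty_or_nonempty with hT0 | ⟨x₀, hx₀X, hx₀⟩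
    · simp [hT0]
    have hTdist : ∀ x ∈ T, ‖x - x₀‖ ≤ 2 * ν := by
      rintro x ⟨hxX, hx⟩
      have h1 := hcmp₁ x hxX x₀ hx₀X
      have h2 := hcmp₂ x hxX x₀ hx₀X
      have h3 : (2 : ℝ) • (x - x₀) = (n₁ x + n₂ x) - (n₁ x₀ + n₂ x₀)
          - ((n₁ x - n₁ x₀) - (x - x₀)) - ((n₂ x - n₂ x₀) - (x - x₀)) := by
        module
      have h4 : 2 * ‖x - x₀‖ = ‖(2 : ℝ) • (x - x₀)‖ := by
        rw [norm_smul, Real.norm_ofNat]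
      rw [h3] at h4
      have h5 := norm_sub_le ((n₁ x + n₂ x) - (n₁ x₀ + n₂ x₀)
          - ((n₁ x - n₁ x₀) - (x - x₀))) ((n₂ x - n₂ x₀) - (x - x₀))
      have h6 := norm_sub_le ((n₁ x + n₂ x) - (n₁ x₀ + n₂ x₀)) ((n₁ x - n₁ x₀) - (x - x₀))
      have h7 := norm_sub_le (n₁ x + n₂ x) (n₁ x₀ + n₂ x₀)
      linarith
    have hTsub : T ⊆ X ∩ {x | ∀ i, |x i - x₀ i| ≤ 2 * ν} := fun x hx =>
      ⟨hx.1, fun i => (abs_coord_le_norm (x - x₀) i).trans (hTdist x hx)⟩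
    have hR : (d : ℝ) * (2 * ν) ≤ 1 / 4 := by
      have : (d : ℝ) * (2 * ν) * 4 ≤ 4 * d ^ 2 * B * ν := by
        have : 2 * (d * ν) ≤ d ^ 2 * B * ν := by
          have h1 : 2 * 1 ≤ d * B := mul_le_mul hd' hB1 zero_le_one (by positivity)
          have := mul_le_mul_of_nonneg_right h1 (show 0 ≤ d * ν by positivity)
          linarith
        linarith
      linarith
    have hdist : ∀ x ∈ X ∩ {x | ∀ i, |x i - x₀ i| ≤ 2 * ν}, ‖x - x₀‖ ≤ d * (2 * ν) :=
      fun x hx => norm_sub_le_of_forall_abs_coord_sub_le hx.2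
    refine (measure_mono hTsub).trans <| (volume_le_of_unit_normal (by omega)
      (hXcl.inter (isClosed_cube x₀ _)).measurableSet x₀ (fun x hx => hx.2) (hunit₁ x₀ hx₀X)
      (fun x hx y hy => hflat₁ x₀ hx₀X _ hR x hx.1 y hy.1 (hdist x hx) (hdist y hy))
      (by linarith)).trans_eq ?_
    rw [← ENNReal.ofReal_pow (by positivity), ← ENNReal.ofReal_mul (by positivity)]
    congr 1
    rw [show 2 * (2 * ν) = 4 * ν by ring, mul_pow]
    ring
  -- the transversal part
  have hcube : ∀ c : EuclideanSpace ℝ (Fin d), ∀ r ≤ ν / Q, 0 < r →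
      volume ((X \ T) ∩ {x | ∀ i, |x i - c i| ≤ r}) ≤
        ENNReal.ofReal ((16 * d * B * δ / ν) ^ 2 * (2 * (ν / Q)) ^ (d - 2)) := by
    intro c r hr hr0
    rcases ((X \ T) ∩ {x | ∀ i, |x i - c i| ≤ r}).eq_empty_or_nonempty with
      h0 | ⟨x₀, ⟨hx₀X, hx₀T⟩, hx₀⟩
    · simp [h0]
    have hadd : ν / 2 ≤ ‖n₁ x₀ + n₂ x₀‖ := by
      by_contra! h
      exact hx₀T ⟨hx₀X, by linarith⟩
    obtain ⟨i, j, hij⟩ := exists_le_abs_minor (by omega) (by positivity) (hunit₁ x₀ hx₀X)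
      (hunit₂ x₀ hx₀X) hadd (hsub x₀ hx₀X)
    have hη : 8 * B * (d * (2 * r)) ≤ ν / 2 / d := by
      rw [le_div_iff₀ (by positivity)] at hr ⊢
      rw [hQ] at hr
      linarith
    have hR : (d : ℝ) * (2 * r) ≤ 1 / 4 := by
      have h1 : ν / 2 / d ≤ 1 := by
        rw [div_le_one (by positivity)]
        linarith
      have h2 : (d : ℝ) * (2 * r) * 1 ≤ d * (2 * r) * B :=
        mul_le_mul_of_nonneg_left hB1 (by positivity)
      linarith
    have hdist : ∀ x ∈ X ∩ {x | ∀ i, |x i - c i| ≤ r}, ‖x - x₀‖ ≤ d * (2 * r) :=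
      fun x hx => norm_sub_le_of_forall_abs_coord_sub_le fun i => by
        have h1 := abs_le.1 (hx.2 i)
        have h2 := abs_le.1 (hx₀ i)
        exact abs_le.2 ⟨by linarith [h1.1, h2.2], by linarith [h1.2, h2.1]⟩
    refine (measure_mono (inter_subset_inter_left _ sdiff_subset)).trans <|
      (volume_le_of_minor (hXcl.inter (isClosed_cube c _)).measurableSet c (fun x hx => hx.2)
      (by positivity) (hunit₁ x₀ hx₀X) (hunit₂ x₀ hx₀X) hij
      (fun x hx y hy => hflat₁ x₀ hx₀X _ hR x hx.1 y hy.1 (hdist x hx) (hdist y hy))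
      (fun x hx y hy => hflat₂ x₀ hx₀X _ hR x hx.1 y hy.1 (hdist x hx) (hdist y hy))
      hη).trans ?_
    rw [← ENNReal.ofReal_pow (by positivity), ← ENNReal.ofReal_pow (by positivity),
      ← ENNReal.ofReal_mul (by positivity)]
    refine ENNReal.ofReal_le_ofReal ?_
    have : 8 * B * δ / (ν / 2 / d) = 16 * d * B * δ / ν := by
      field_simp
      ring
    rw [this]
    gcongr
  have htrans : volume (X \ T) ≤ ENNReal.ofReal
      ((5 * Q) ^ d * (16 * d * B) ^ 2 * (2 / Q) ^ (d - 2) * (δ ^ 2 / ν ^ 4)) := by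
    have hQν : 1 ≤ Q / ν := by
      rw [one_le_div hν, hQ]
      have : 1 * 1 ≤ (d : ℝ) ^ 2 * B := mul_le_mul (by nlinarith) hB1 zero_le_one (by positivity)
      linarith
    have hN0 : 0 < ⌈2 * (Q / ν)⌉₊ := Nat.ceil_pos.2 (by positivity)
    have hN1 : 2 * (Q / ν) ≤ (⌈2 * (Q / ν)⌉₊ : ℝ) := Nat.le_ceil _
    have hN2 : (⌈2 * (Q / ν)⌉₊ : ℝ) ≤ 5 * (Q / ν) := by
      have := Nat.ceil_lt_add_one (show 0 ≤ 2 * (Q / ν) by positivity)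
      linarith
    set N := ⌈2 * (Q / ν)⌉₊
    have hN0' : (0 : ℝ) < N := by exact_mod_cast hN0
    have hNr : 2 / (N : ℝ) ≤ ν / Q := by
      rw [div_le_iff₀ hN0']
      have := mul_le_mul_of_nonneg_left hN1 (show 0 ≤ ν / Q by positivity)
      have h2 : ν / Q * (2 * (Q / ν)) = 2 := by field_simp
      linarith
    have hbound : ∀ x ∈ X \ T, ∀ i, |x i| ≤ 2 := by
      intro x hx i
      have h1 := abs_le.1 (abs_norm_sub_one_le hs hL hκ hδκ (hG₁.abs_le x) hx.1.1).2
      have h2 : 0 ≤ κ * (2 * L / s) := by positivity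
      linarith [abs_coord_le_norm x i, hκ.le, h1.2]
    refine (volume_le_of_forall_cube two_pos hbound hN0 fun c =>
      hcube c _ hNr (by positivity)).trans ?_
    rw [← ENNReal.ofReal_natCast, ← ENNReal.ofReal_pow (by positivity),
      ← ENNReal.ofReal_mul (by positivity)]
    refine ENNReal.ofReal_le_ofReal ?_
    calc (N : ℝ) ^ d * ((16 * d * B * δ / ν) ^ 2 * (2 * (ν / Q)) ^ (d - 2))
        ≤ (5 * (Q / ν)) ^ d * ((16 * d * B * δ / ν) ^ 2 * (2 * (ν / Q)) ^ (d - 2)) := by gcongr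
      _ = (5 * Q) ^ d * (16 * d * B) ^ 2 * (2 / Q) ^ (d - 2) * (δ ^ 2 / ν ^ 4) := by
        have h1 : (5 * (Q / ν)) ^ d = (5 * Q) ^ d / (ν ^ (d - 2) * ν ^ 2) := by
          rw [← pow_add, Nat.sub_add_cancel hd, ← div_pow, ← mul_div_assoc]
        have h2 : (2 * (ν / Q)) ^ (d - 2) = (2 / Q) ^ (d - 2) * ν ^ (d - 2) := by
          rw [← mul_pow]
          congr 1
          ring
        rw [h1, h2]
        field_simp
  calc volume X ≤ volume (X \ T ∪ T) := measure_mono (by simp)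
    _ ≤ volume (X \ T) + volume T := measure_union_le _ _
    _ ≤ _ := add_le_add htrans hTvol
    _ = ENNReal.ofReal (_ + _) := (ENNReal.ofReal_add (by positivity) (by positivity)).symm
    _ ≤ ENNReal.ofReal (C * (δ ^ 2 / ν ^ 4 + δ * ν ^ (d - 1))) := by
      refine ENNReal.ofReal_le_ofReal ?_
      have h1 : 0 ≤ (5 * Q) ^ d * (16 * d * B) ^ 2 * (2 / Q) ^ (d - 2) * (δ * ν ^ (d - 1)) := by
        positivity
      have h2 : 0 ≤ 2 * d * B * 4 ^ (d - 1) * (δ ^ 2 / ν ^ 4) := by positivity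
      rw [hC]
      linarith

lemma norm_gradient_sub_gradient_le {E : Type*} [NormedAddCommGroup E] [InnerProductSpace ℝ E]
    [CompleteSpace E] {G : E → ℝ} (hG : ContDiff ℝ 2 G) {M : ℝ}
    (hM : ∀ x, ‖fderiv ℝ (fderiv ℝ G) x‖ ≤ M) (x y : E) :
    ‖gradient G x - gradient G y‖ ≤ M * ‖x - y‖ := by
  have hdiff : Differentiable ℝ (fderiv ℝ G) :=
    (hG.fderiv_right (m := 1) (by norm_num)).differentiable one_ne_zero
  rw [gradient, gradient, ← map_sub, LinearIsometryEquiv.norm_map]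
  exact convex_univ.norm_image_sub_le_of_norm_fderiv_le (fun z _ => hdiff z) (fun z _ => hM z)
    (mem_univ y) (mem_univ x)

/-- Rescaling a `C²` function to unit scale. -/
lemma isPerturbation_rescale {E : Type*} [NormedAddCommGroup E] [InnerProductSpace ℝ E]
    [CompleteSpace E] {G : E → ℝ} (hG : ContDiff ℝ 2 G) {s ρ κ a₀ a₁ a₂ : ℝ} (hρ : 0 < ρ)
    (h₀ : ∀ x, |G x| ≤ a₀) (h₁ : ∀ x, ‖gradient G x‖ ≤ a₁)
    (h₂ : ∀ x, ‖fderiv ℝ (fderiv ℝ G) x‖ ≤ a₂)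
    (hκ₀ : ρ ^ (-s) * a₀ ≤ κ) (hκ₁ : ρ ^ (1 - s) * a₁ ≤ κ) (hκ₂ : ρ ^ (2 - s) * a₂ ≤ κ) :
    IsPerturbation κ (fun x => ρ ^ (-s) * G (ρ • x))
      (fun x => ρ ^ (1 - s) • gradient G (ρ • x)) where
  hasGradientAt x := by
    have hd : DifferentiableAt ℝ G (ρ • x) := hG.differentiable two_ne_zero _
    have h : HasFDerivAt (fun y => ρ ^ (-s) * G (ρ • y)) _ x :=
      (hd.hasGradientAt.hasFDerivAt.comp x ((hasFDerivAt_id x).const_smul ρ)).const_mul (ρ ^ (-s))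
    rw [hasGradientAt_iff_hasFDerivAt]
    refine h.congr_fderiv ?_
    ext v
    have : ρ ^ (1 - s) = ρ ^ (-s) * ρ := by
      rw [← Real.rpow_add_one hρ.ne', neg_add_eq_sub]
    simp [this, mul_assoc]
  abs_le x := by
    rw [abs_mul, abs_of_pos (Real.rpow_pos_of_pos hρ _)]
    exact (mul_le_mul_of_nonneg_left (h₀ _) (Real.rpow_pos_of_pos hρ _).le).trans hκ₀
  norm_le x := by
    rw [norm_smul, Real.norm_of_nonneg (Real.rpow_pos_of_pos hρ _).le]
    exact (mul_le_mul_of_nonneg_left (h₁ _) (Real.rpow_pos_of_pos hρ _).le).trans hκ₁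
  norm_sub_le x y := by
    rw [← smul_sub, norm_smul, Real.norm_of_nonneg (Real.rpow_pos_of_pos hρ _).le]
    have h := norm_gradient_sub_gradient_le hG h₂ (ρ • x) (ρ • y)
    rw [← smul_sub, norm_smul, Real.norm_of_nonneg hρ.le] at h
    calc ρ ^ (1 - s) * ‖gradient G (ρ • x) - gradient G (ρ • y)‖
        ≤ ρ ^ (1 - s) * (a₂ * (ρ * ‖x - y‖)) :=
          mul_le_mul_of_nonneg_left h (Real.rpow_pos_of_pos hρ _).le
      _ = ρ ^ (2 - s) * a₂ * ‖x - y‖ := by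
        rw [show 2 - s = 1 - s + 1 by ring, Real.rpow_add_one hρ.ne']
        ring
      _ ≤ κ * ‖x - y‖ := mul_le_mul_of_nonneg_right hκ₂ (norm_nonneg _)

lemma inv_smul_mem_shell_rescale {E : Type*} [NormedAddCommGroup E] [NormedSpace ℝ E] {G : E → ℝ}
    {s ρ δ : ℝ} (hρ : 0 < ρ) {ξ : E} (h₁ : ρ ^ s - δ ≤ ‖ξ‖ ^ s + G ξ)
    (h₂ : ‖ξ‖ ^ s + G ξ ≤ ρ ^ s + δ) :
    ρ⁻¹ • ξ ∈ shell s (fun x => ρ ^ (-s) * G (ρ • x)) (ρ ^ (-s) * δ) := by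
  have hpos : 0 < ρ ^ (-s) := Real.rpow_pos_of_pos hρ _
  have hone : ρ ^ (-s) * ρ ^ s = 1 := by rw [← Real.rpow_add hρ, neg_add_cancel, Real.rpow_zero]
  have hnorm : ‖ρ⁻¹ • ξ‖ ^ s = ρ ^ (-s) * ‖ξ‖ ^ s := by
    rw [norm_smul, Real.norm_of_nonneg (inv_nonneg.2 hρ.le),
      Real.mul_rpow (inv_nonneg.2 hρ.le) (norm_nonneg _), Real.inv_rpow hρ.le, Real.rpow_neg hρ.le]
  change |‖ρ⁻¹ • ξ‖ ^ s + ρ ^ (-s) * G (ρ • ρ⁻¹ • ξ) - 1| ≤ ρ ^ (-s) * δ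
  rw [hnorm, smul_inv_smul₀ hρ.ne', abs_le]
  have h₃ := mul_le_mul_of_nonneg_left h₁ hpos.le
  have h₄ := mul_le_mul_of_nonneg_left h₂ hpos.le
  constructor <;> linarith

lemma eventually_mul_rpow_le {κ a : ℝ} (hκ : 0 < κ) (ha : a < 0) (A : ℝ) :
    ∀ᶠ ρ in Filter.atTop, A * ρ ^ a ≤ κ := by
  have h := (tendsto_rpow_neg_atTop (neg_pos.2 ha)).const_mul A
  rw [neg_neg, mul_zero] at h
  exact h.eventually_le_const hκ

/-- Theorem 9.2: under the stated C² conditions on G₁, G₂, the volume of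
𝒳 = 𝒜(g₁;ρ,δ) ∩ (𝒜(g₂;ρ,δ) + b), with g_j(ξ) = |ξ|^{2m} + G_j(ξ), satisfies
vol(𝒳) ≤ C (δ² ρ^{4−4m+d+6ε} + δ ρ^{1−2m−ε(d−1)}). -/
theorem volume_intersection_upper_bound
    (d : ℕ) (hd : 2 ≤ d) (m γ σ ω A K ε : ℝ)
    (hm : 0 < m) (hγ : γ < 2 * m) (hσ : σ < 2 * m - 1) (hω : ω < 2 * m - 2)
    (hA : 0 < A) (hK : 1 ≤ K) (hε : 0 < ε) :
    ∃ ε₀ C c₂ ρ₀ : ℝ, 0 < ε₀ ∧ 0 < C ∧ 1 ≤ c₂ ∧ 1 ≤ ρ₀ ∧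
      ∀ ρ : ℝ, ρ₀ ≤ ρ →
      ∀ δ : ℝ, 0 < δ → δ * ρ ^ (2 - 2 * m + 2 * ε) ≤ ε₀ →
      ∀ b : EuclideanSpace ℝ (Fin d), c₂ ≤ ‖b‖ → ‖b‖ ≤ K * ρ →
      ∀ G₁ G₂ : EuclideanSpace ℝ (Fin d) → ℝ,
        ContDiff ℝ 2 G₁ → ContDiff ℝ 2 G₂ →
        (∀ ξ, |G₁ ξ| ≤ A * ρ ^ γ) → (∀ ξ, |G₂ ξ| ≤ A * ρ ^ γ) →
        (∀ ξ, ‖gradient G₁ ξ‖ ≤ A * ρ ^ σ) → (∀ ξ, ‖gradient G₂ ξ‖ ≤ A * ρ ^ σ) →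
        (∀ ξ, ‖fderiv ℝ (fderiv ℝ G₁) ξ‖ ≤ A * ρ ^ ω) →
        (∀ ξ, ‖fderiv ℝ (fderiv ℝ G₂) ξ‖ ≤ A * ρ ^ ω) →
        (∀ ξ, |G₁ ξ - G₂ (ξ - b)| ≤ A * ‖b‖ * ρ ^ σ) →
        (∀ ξ, ‖gradient G₁ ξ - gradient G₂ (ξ - b)‖ ≤ A * ‖b‖ * ρ ^ ω) →
        MeasureTheory.volume
          {ξ : EuclideanSpace ℝ (Fin d) |
            (ρ ^ (2 * m) - δ ≤ ‖ξ‖ ^ (2 * m) + G₁ ξ ∧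
              ‖ξ‖ ^ (2 * m) + G₁ ξ ≤ ρ ^ (2 * m) + δ) ∧
            (ρ ^ (2 * m) - δ ≤ ‖ξ - b‖ ^ (2 * m) + G₂ (ξ - b) ∧
              ‖ξ - b‖ ^ (2 * m) + G₂ (ξ - b) ≤ ρ ^ (2 * m) + δ)} ≤
        ENNReal.ofReal
          (C * (δ ^ 2 * ρ ^ (4 - 4 * m + (d : ℝ) + 6 * ε) +
            δ * ρ ^ (1 - 2 * m - ε * ((d : ℝ) - 1)))) := by
  obtain ⟨κ, C, hκ, hC, hvol⟩ := exists_volume_shell_inter_le hd (s := 2 * m) (by positivity)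
  obtain ⟨ρ₁, hρ₁⟩ := Filter.eventually_atTop.1 <|
    (eventually_mul_rpow_le hκ (show γ - 2 * m < 0 by linarith) A).and <|
    (eventually_mul_rpow_le hκ (show σ + 1 - 2 * m < 0 by linarith) A).and <|
    (eventually_mul_rpow_le hκ (show ω + 2 - 2 * m < 0 by linarith) A).and <|
    eventually_mul_rpow_le hκ (show -1 - ε < 0 by linarith) 1
  refine ⟨κ, C, 1, max 1 ρ₁, hκ, hC, le_rfl, le_max_left _ _, ?_⟩
  intro ρ hρ δ hδ hδρ b hb _ G₁ G₂ hG₁ hG₂ hG₁0 hG₂0 hG₁1 hG₂1 hG₁2 hG₂2 hG hV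
  obtain ⟨eγ, eσ, eω, eν⟩ := hρ₁ ρ ((le_max_right _ _).trans hρ)
  have hρ1 : 1 ≤ ρ := (le_max_left _ _).trans hρ
  have hρ0 : 0 < ρ := by linarith
  have hadd : ∀ x y z : ℝ, x + y = z → ρ ^ x * ρ ^ y = ρ ^ z := fun x y z h => by
    rw [← Real.rpow_add hρ0, h]
  have hpos : ∀ x : ℝ, 0 < ρ ^ x := Real.rpow_pos_of_pos hρ0
  have hκ₀ : ρ ^ (-(2 * m)) * (A * ρ ^ γ) ≤ κ := by
    rwa [mul_left_comm, hadd _ _ (γ - 2 * m) (by ring)]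
  have hκ₁ : ρ ^ (1 - 2 * m) * (A * ρ ^ σ) ≤ κ := by
    rwa [mul_left_comm, hadd _ _ (σ + 1 - 2 * m) (by ring)]
  have hκ₂ : ρ ^ (2 - 2 * m) * (A * ρ ^ ω) ≤ κ := by
    rwa [mul_left_comm, hadd _ _ (ω + 2 - 2 * m) (by ring)]
  have hbnorm : ‖b‖ = ρ * ‖ρ⁻¹ • b‖ := by
    rw [norm_smul, Real.norm_of_nonneg (inv_nonneg.2 hρ0.le), mul_inv_cancel_left₀ hρ0.ne']
  have hscale : ∀ x : EuclideanSpace ℝ (Fin d), ρ • (x - ρ⁻¹ • b) = ρ • x - b := fun x => by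
    rw [smul_sub, smul_inv_smul₀ hρ0.ne']
  have hν : ρ ^ (-1 - ε) ≤ ‖ρ⁻¹ • b‖ := by
    rw [norm_smul, Real.norm_of_nonneg (inv_nonneg.2 hρ0.le), ← Real.rpow_neg_one]
    calc ρ ^ (-1 - ε) ≤ ρ ^ (-1 : ℝ) * 1 := by
          rw [mul_one]
          exact Real.rpow_le_rpow_of_exponent_le hρ1 (by linarith)
      _ ≤ ρ ^ (-1 : ℝ) * ‖b‖ := by gcongr
  have hδν : ρ ^ (-(2 * m)) * δ ≤ κ * ρ ^ (-1 - ε) := by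
    calc ρ ^ (-(2 * m)) * δ
        = δ * ρ ^ (2 - 2 * m + 2 * ε) * ρ ^ (-2 - 2 * ε) := by
          rw [mul_assoc, hadd _ _ (-(2 * m)) (by ring), mul_comm]
      _ ≤ κ * ρ ^ (-1 - ε) := mul_le_mul hδρ
        (Real.rpow_le_rpow_of_exponent_le hρ1 (by linarith)) (hpos _).le hκ.le
  have hmain := hvol (ρ ^ (-1 - ε)) (ρ ^ (-(2 * m)) * δ) (hpos _) (by simpa using eν)
    (mul_pos (hpos _) hδ) hδν (ρ⁻¹ • b) _ _ _ _ hν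
    (isPerturbation_rescale hG₁ hρ0 hG₁0 hG₁1 hG₁2 hκ₀ hκ₁ hκ₂)
    (isPerturbation_rescale hG₂ hρ0 hG₂0 hG₂1 hG₂2 hκ₀ hκ₁ hκ₂)
    (fun x => by
      rw [hscale, ← mul_sub, abs_mul, abs_of_pos (hpos _)]
      calc ρ ^ (-(2 * m)) * |G₁ (ρ • x) - G₂ (ρ • x - b)|
          ≤ ρ ^ (-(2 * m)) * (A * ‖b‖ * ρ ^ σ) :=
            mul_le_mul_of_nonneg_left (hG _) (hpos _).le
        _ = ρ ^ (1 - 2 * m) * (A * ρ ^ σ) * ‖ρ⁻¹ • b‖ := by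
          rw [hbnorm, show 1 - 2 * m = -(2 * m) + 1 by ring, Real.rpow_add_one hρ0.ne']
          ring
        _ ≤ κ * ‖ρ⁻¹ • b‖ := mul_le_mul_of_nonneg_right hκ₁ (norm_nonneg _))
    (fun x => by
      rw [hscale, ← smul_sub, norm_smul, Real.norm_of_nonneg (hpos _).le]
      calc ρ ^ (1 - 2 * m) * ‖gradient G₁ (ρ • x) - gradient G₂ (ρ • x - b)‖
          ≤ ρ ^ (1 - 2 * m) * (A * ‖b‖ * ρ ^ ω) :=
            mul_le_mul_of_nonneg_left (hV _) (hpos _).le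
        _ = ρ ^ (2 - 2 * m) * (A * ρ ^ ω) * ‖ρ⁻¹ • b‖ := by
          rw [hbnorm, show 2 - 2 * m = 1 - 2 * m + 1 by ring, Real.rpow_add_one hρ0.ne']
          ring
        _ ≤ κ * ‖ρ⁻¹ • b‖ := mul_le_mul_of_nonneg_right hκ₂ (norm_nonneg _))
  set X : Set (EuclideanSpace ℝ (Fin d)) := shell (2 * m)
    (fun x => ρ ^ (-(2 * m)) * G₁ (ρ • x)) (ρ ^ (-(2 * m)) * δ) ∩ {x | x - ρ⁻¹ • b ∈ shell (2 * m)
      (fun x => ρ ^ (-(2 * m)) * G₂ (ρ • x)) (ρ ^ (-(2 * m)) * δ)}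
  calc _ ≤ volume ((fun ξ : EuclideanSpace ℝ (Fin d) => ρ⁻¹ • ξ) ⁻¹' X) := by
        refine measure_mono ?_
        rintro ξ ⟨⟨h1, h2⟩, h3, h4⟩
        refine ⟨inv_smul_mem_shell_rescale hρ0 h1 h2, ?_⟩
        rw [Set.mem_ofPred_eq, ← smul_sub]
        exact inv_smul_mem_shell_rescale hρ0 h3 h4
    _ = ENNReal.ofReal (ρ ^ d) * volume X := by
        rw [Measure.addHaar_preimage_smul _ (inv_ne_zero hρ0.ne'), finrank_euclideanSpace_fin,
          inv_pow, inv_inv, abs_of_pos (by positivity)]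
    _ ≤ ENNReal.ofReal (ρ ^ d) * _ := mul_le_mul_right hmain _
    _ = _ := (ENNReal.ofReal_mul (by positivity)).symm
    _ ≤ _ := by
      refine ENNReal.ofReal_le_ofReal ?_
      have h1 : ρ ^ d * ((ρ ^ (-(2 * m)) * δ) ^ 2 / (ρ ^ (-1 - ε)) ^ 4) =
          δ ^ 2 * ρ ^ (4 - 4 * m + d + 4 * ε) := by
        rw [mul_pow, ← Real.rpow_natCast ρ d, ← Real.rpow_mul_natCast hρ0.le,
          ← Real.rpow_mul_natCast hρ0.le, mul_comm _ (δ ^ 2), mul_div_assoc,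
          ← Real.rpow_sub hρ0, mul_left_comm, ← Real.rpow_add hρ0]
        congr 2
        push_cast
        ring
      have h2 : ρ ^ d * (ρ ^ (-(2 * m)) * δ * (ρ ^ (-1 - ε)) ^ (d - 1)) =
          δ * ρ ^ (1 - 2 * m - ε * ((d : ℝ) - 1)) := by
        rw [← Real.rpow_natCast ρ d, ← Real.rpow_mul_natCast hρ0.le, mul_comm _ δ, mul_assoc δ,
          mul_left_comm, ← Real.rpow_add hρ0, ← Real.rpow_add hρ0,
          Nat.cast_sub (by omega : 1 ≤ d)]
        congr 2
        push_cast
        ring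
      rw [mul_left_comm, mul_add, h1, h2]
      gcongr
      norm_num
end
end
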